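/- arXiv:1604.07739 — 9 statements merged into one kernel-verified Lean document; each statement's English description precedes it below -/
import Mathlib

section
/- Let R be a Banach–Tate ring whose underlying ring is Noetherian, with norm |·| and a multiplicative pseudo-uniformizer ϖ, and suppose there exists a (necessarily unique) continuous ring homomorphism ι : Z_p → R. Then there exist a real number s > 0, constants C₁, C₂ > 0, and a norm |·|′ on R such that: (i) C₁·|x|^s ≤ |x|′ ≤ C₂·|x|^s for all x ∈ R (so |·|′ is bounded-equivalent to |·|^s and induces the same topology on R); (ii) |ι(z)|′ ≤ |z|_p for all z ∈ Z_p, where |·|_p is the p-adic absolute value normalized by |p|_p = p⁻¹; and (iii) ϖ is a multiplicative pseudo-uniformizer for |·|′. -/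
/-!
Put `c = p` in `R`. By continuity of `ι` some power `c ^ N` with `N ≥ 1` has norm `< 1`, so for large
`s` the norm `μ = ν ^ s` satisfies `μ (c ^ N) ≤ (1/p) ^ N`; hence `μ (c ^ i) ≤ K * (1/p) ^ i` for all
`i`, with `K` independent of `i`. The only obstruction to `μ (c) ≤ 1/p` is the constant `K`, and it is
removed by passing to the quotient of the Gauss norm of radius `ρ = 1/p` on `R[X]` under the evaluation
`X ↦ c`, that is
`ν' x = inf { maxᵢ μ (aᵢ) ρ ^ i : x = ∑ aᵢ c ^ i }`.
This is submultiplicative and nonarchimedean because the Gauss norm is; it is at most `μ` (constant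
polynomials) and at least `K⁻¹ μ` (estimate `∑ aᵢ c ^ i` termwise). Multiplicativity of `ϖ` passes
from `μ` to `ν'`, as multiplication by the constant `ϖ` scales the Gauss norm. Finally `ν ≤ 1` on the
image of `ι`, since `ℕ` is dense in `ℤ_p`, so `ν' (u c ^ n) ≤ ρ ^ n` for units `u` of `ℤ_p`.
-/

/-- A (nonarchimedean, submultiplicative) norm on a commutative ring. -/
def IsRingNorm {R : Type*} [CommRing R] (ν : R → ℝ) : Prop :=
  (∀ x, 0 ≤ ν x) ∧ ν 0 = 0 ∧ ν 1 = 1 ∧ (∀ x, ν x = 0 → x = 0) ∧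
  (∀ x y, ν (x + y) ≤ max (ν x) (ν y)) ∧ (∀ x y, ν (x * y) ≤ ν x * ν y)

/-- Completeness of `R` with respect to the norm `ν`. -/
def NormComplete {R : Type*} [CommRing R] (ν : R → ℝ) : Prop :=
  ∀ u : ℕ → R, (∀ ε : ℝ, 0 < ε → ∃ N : ℕ, ∀ m n : ℕ, N ≤ m → N ≤ n → ν (u m - u n) < ε) →
    ∃ x : R, ∀ ε : ℝ, 0 < ε → ∃ N : ℕ, ∀ n : ℕ, N ≤ n → ν (u n - x) < ε

/-- `ϖ` is a multiplicative pseudo-uniformizer for the norm `ν`. -/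
def IsMultPseudoUniformizer {R : Type*} [CommRing R] (ν : R → ℝ) (ϖ : R) : Prop :=
  IsUnit ϖ ∧ ν ϖ < 1 ∧ ∀ x, ν (ϖ * x) = ν ϖ * ν x

open Polynomial

/-- `x` is the value at `c` of a polynomial whose Gauss norm of radius `ρ`, relative to `μ`, is at
most `r`. -/
def GaussLE {R : Type*} [CommRing R] (μ : R → ℝ) (c : R) (ρ : ℝ) (x : R) (r : ℝ) : Prop :=
  0 ≤ r ∧ ∃ P : R[X], P.eval c = x ∧ ∀ i, μ (P.coeff i) * ρ ^ i ≤ r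

/-- The quotient of the Gauss norm of radius `ρ` on `R[X]` under evaluation at `c`. -/
noncomputable def gaussQuot {R : Type*} [CommRing R] (μ : R → ℝ) (c : R) (ρ : ℝ) (x : R) : ℝ :=
  sInf {r | GaussLE μ c ρ x r}

lemma IsRingNorm.pow_le {R : Type*} [CommRing R] {μ : R → ℝ} (h : IsRingNorm μ) (x : R) (n : ℕ) :
    μ (x ^ n) ≤ μ x ^ n := by
  obtain ⟨h0, -, h1, -, -, hm⟩ := h
  induction n with
  | zero => simp [h1]
  | succ k ih =>
    rw [pow_succ, pow_succ]
    exact (hm _ _).trans (mul_le_mul_of_nonneg_right ih (h0 x))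

lemma IsRingNorm.sum_le {R : Type*} [CommRing R] {μ : R → ℝ} (h : IsRingNorm μ) {α : Type*}
    (t : Finset α) (f : α → R) {B : ℝ} (hB : 0 ≤ B) (hf : ∀ i ∈ t, μ (f i) ≤ B) :
    μ (∑ i ∈ t, f i) ≤ B := by
  obtain ⟨-, h0, -, -, ha, -⟩ := h
  refine Finset.sum_induction f (fun x => μ x ≤ B) (fun a b h1 h2 => ?_) (by simpa [h0]) hf
  exact (ha a b).trans (max_le h1 h2)

lemma IsRingNorm.natCast_le {R : Type*} [CommRing R] {μ : R → ℝ} (h : IsRingNorm μ) (n : ℕ) :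
    μ (n : R) ≤ 1 := by
  have := h.sum_le (Finset.range n) (fun _ => (1 : R)) zero_le_one (fun _ _ => h.2.2.1.le)
  simpa using this

lemma IsRingNorm.rpow {R : Type*} [CommRing R] {ν : R → ℝ} (h : IsRingNorm ν) {s : ℝ} (hs : 0 < s) :
    IsRingNorm (fun x => ν x ^ s) := by
  obtain ⟨h0, hz, h1, hd, ha, hm⟩ := h
  refine ⟨fun x => Real.rpow_nonneg (h0 x) s, by simp [hz, hs.ne'], by simp [h1],
    fun x hx => hd x ((Real.rpow_eq_zero (h0 x) hs.ne').1 hx), fun x y => ?_, fun x y => ?_⟩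
  · rcases le_max_iff.1 (ha x y) with h | h
    · exact le_max_of_le_left (Real.rpow_le_rpow (h0 _) h hs.le)
    · exact le_max_of_le_right (Real.rpow_le_rpow (h0 _) h hs.le)
  · rw [← Real.mul_rpow (h0 x) (h0 y)]
    exact Real.rpow_le_rpow (h0 _) (hm x y) hs.le

section Gauss

variable {R : Type*} [CommRing R] {μ : R → ℝ} {c : R} {ρ : ℝ} {x y : R} {r r' : ℝ}

lemma GaussLE.monomial (hμ : IsRingNorm μ) (hρ : 0 ≤ ρ) (a : R) (n : ℕ) :
    GaussLE μ c ρ (a * c ^ n) (μ a * ρ ^ n) := by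
  have hr : 0 ≤ μ a * ρ ^ n := mul_nonneg (hμ.1 a) (pow_nonneg hρ n)
  refine ⟨hr, C a * X ^ n, by simp, fun i => ?_⟩
  rw [coeff_C_mul_X_pow]
  split_ifs with h
  · rw [h]
  · simpa [hμ.2.1] using hr

lemma GaussLE.add (hμ : IsRingNorm μ) (hρ : 0 ≤ ρ) (hx : GaussLE μ c ρ x r)
    (hy : GaussLE μ c ρ y r') : GaussLE μ c ρ (x + y) (max r r') := by
  obtain ⟨hr, P, rfl, hP⟩ := hx
  obtain ⟨-, Q, rfl, hQ⟩ := hy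
  refine ⟨le_max_of_le_left hr, P + Q, by simp, fun i => ?_⟩
  rw [coeff_add]
  refine (mul_le_mul_of_nonneg_right (hμ.2.2.2.2.1 _ _) (pow_nonneg hρ i)).trans ?_
  rw [max_mul_of_nonneg _ _ (pow_nonneg hρ i)]
  exact max_le_max (hP i) (hQ i)

lemma GaussLE.mul (hμ : IsRingNorm μ) (hρ : 0 < ρ) (hx : GaussLE μ c ρ x r)
    (hy : GaussLE μ c ρ y r') : GaussLE μ c ρ (x * y) (r * r') := by
  obtain ⟨hr, P, rfl, hP⟩ := hx
  obtain ⟨hr', Q, rfl, hQ⟩ := hy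
  refine ⟨mul_nonneg hr hr', P * Q, by simp, fun i => ?_⟩
  have hi := pow_pos hρ i
  rw [coeff_mul, ← le_div_iff₀ hi]
  refine hμ.sum_le _ _ (div_nonneg (mul_nonneg hr hr') hi.le) (fun jk hjk => ?_)
  rw [le_div_iff₀ hi, ← Finset.HasAntidiagonal.mem_antidiagonal.1 hjk, pow_add]
  calc μ (P.coeff jk.1 * Q.coeff jk.2) * (ρ ^ jk.1 * ρ ^ jk.2)
      ≤ (μ (P.coeff jk.1) * μ (Q.coeff jk.2)) * (ρ ^ jk.1 * ρ ^ jk.2) :=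
        mul_le_mul_of_nonneg_right (hμ.2.2.2.2.2 _ _) (by positivity)
    _ = (μ (P.coeff jk.1) * ρ ^ jk.1) * (μ (Q.coeff jk.2) * ρ ^ jk.2) := by ring
    _ ≤ r * r' := mul_le_mul (hP _) (hQ _)
        (mul_nonneg (hμ.1 _) (pow_nonneg hρ.le _)) hr

lemma GaussLE.self (hμ : IsRingNorm μ) (hρ : 0 ≤ ρ) (x : R) : GaussLE μ c ρ x (μ x) := by
  simpa using GaussLE.monomial (c := c) hμ hρ x 0

lemma GaussLE.le_mul (hμ : IsRingNorm μ) {K : ℝ} (hK : 0 ≤ K)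
    (hc : ∀ i, μ (c ^ i) ≤ K * ρ ^ i) (hx : GaussLE μ c ρ x r) : μ x ≤ K * r := by
  obtain ⟨hr, P, rfl, hP⟩ := hx
  rw [eval_eq_sum_range]
  refine hμ.sum_le _ _ (mul_nonneg hK hr) (fun i _ => ?_)
  calc μ (P.coeff i * c ^ i) ≤ μ (P.coeff i) * μ (c ^ i) := hμ.2.2.2.2.2 _ _
    _ ≤ μ (P.coeff i) * (K * ρ ^ i) := mul_le_mul_of_nonneg_left (hc i) (hμ.1 _)
    _ = K * (μ (P.coeff i) * ρ ^ i) := by ring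
    _ ≤ K * r := mul_le_mul_of_nonneg_left (hP i) hK

lemma gaussQuot_le (h : GaussLE μ c ρ x r) : gaussQuot μ c ρ x ≤ r :=
  csInf_le ⟨0, fun _ h => h.1⟩ h

lemma le_gaussQuot (hμ : IsRingNorm μ) (hρ : 0 ≤ ρ) {b : ℝ}
    (h : ∀ r, GaussLE μ c ρ x r → b ≤ r) : b ≤ gaussQuot μ c ρ x :=
  le_csInf ⟨_, GaussLE.self hμ hρ x⟩ h

lemma exists_gaussLE_lt (hμ : IsRingNorm μ) (hρ : 0 ≤ ρ) {b : ℝ} (h : gaussQuot μ c ρ x < b) :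
    ∃ r, GaussLE μ c ρ x r ∧ r < b :=
  exists_lt_of_csInf_lt ⟨_, GaussLE.self hμ hρ x⟩ h

lemma gaussQuot_nonneg (hμ : IsRingNorm μ) (hρ : 0 ≤ ρ) (x : R) : 0 ≤ gaussQuot μ c ρ x :=
  le_gaussQuot hμ hρ fun _ h => h.1

lemma le_mul_gaussQuot (hμ : IsRingNorm μ) (hρ : 0 ≤ ρ) {K : ℝ} (hK : 0 < K)
    (hc : ∀ i, μ (c ^ i) ≤ K * ρ ^ i) (x : R) : K⁻¹ * μ x ≤ gaussQuot μ c ρ x :=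
  le_gaussQuot hμ hρ fun _ h => (inv_mul_le_iff₀ hK).2 (h.le_mul hμ hK.le hc)

lemma gaussQuot_mul_le (hμ : IsRingNorm μ) (hρ : 0 < ρ) (x y : R) :
    gaussQuot μ c ρ (x * y) ≤ gaussQuot μ c ρ x * gaussQuot μ c ρ y := by
  refine le_mul_of_forall_lt₀ fun a ha b hb => ?_
  obtain ⟨r, hr, hra⟩ := exists_gaussLE_lt hμ hρ.le ha
  obtain ⟨r', hr', hrb⟩ := exists_gaussLE_lt hμ hρ.le hb
  exact (gaussQuot_le (hr.mul hμ hρ hr')).trans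
    (mul_le_mul hra.le hrb.le hr'.1 (hr.1.trans hra.le))

lemma gaussQuot_add_le (hμ : IsRingNorm μ) (hρ : 0 < ρ) (x y : R) :
    gaussQuot μ c ρ (x + y) ≤ max (gaussQuot μ c ρ x) (gaussQuot μ c ρ y) := by
  refine le_of_forall_gt_imp_ge_of_dense fun a ha => ?_
  obtain ⟨r, hr, hra⟩ := exists_gaussLE_lt hμ hρ.le ((le_max_left _ _).trans_lt ha)
  obtain ⟨r', hr', hrb⟩ := exists_gaussLE_lt hμ hρ.le ((le_max_right _ _).trans_lt ha)
  exact (gaussQuot_le (hr.add hμ hρ.le hr')).trans (max_le hra.le hrb.le)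

/-- The growth bound on the powers of `c` makes the quotient seminorm a norm, and forces the value
`1` at `1`: submultiplicativity leaves only `0` or a value `≥ 1`. -/
lemma isRingNorm_gaussQuot (hμ : IsRingNorm μ) (hρ : 0 < ρ) {K : ℝ} (hK : 0 < K)
    (hc : ∀ i, μ (c ^ i) ≤ K * ρ ^ i) : IsRingNorm (gaussQuot μ c ρ) := by
  have hself : ∀ x, gaussQuot μ c ρ x ≤ μ x := fun x => gaussQuot_le (GaussLE.self hμ hρ.le x)
  have hlow := le_mul_gaussQuot hμ hρ.le hK hc
  refine ⟨gaussQuot_nonneg hμ hρ.le, ?_, ?_, fun x hx => ?_, gaussQuot_add_le hμ hρ,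
    gaussQuot_mul_le hμ hρ⟩
  · exact le_antisymm ((hself 0).trans hμ.2.1.le) (gaussQuot_nonneg hμ hρ.le 0)
  · refine le_antisymm ((hself 1).trans hμ.2.2.1.le) ?_
    have hpos : 0 < gaussQuot μ c ρ 1 :=
      lt_of_lt_of_le (by rw [hμ.2.2.1]; positivity) (hlow 1)
    have := gaussQuot_mul_le (c := c) hμ hρ 1 1
    rw [mul_one] at this
    exact (le_mul_iff_one_le_left hpos).1 this
  · have h := hlow x
    rw [hx] at h
    refine hμ.2.2.2.1 x (le_antisymm ?_ (hμ.1 x))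
    have := inv_pos.2 hK
    by_contra hcon
    exact absurd h (not_le.2 (mul_pos this (not_le.1 hcon)))

lemma isMultPseudoUniformizer_gaussQuot (hμ : IsRingNorm μ) (hρ : 0 < ρ) {ϖ : R}
    (hϖ : IsMultPseudoUniformizer μ ϖ) (hq : IsRingNorm (gaussQuot μ c ρ)) :
    IsMultPseudoUniformizer (gaussQuot μ c ρ) ϖ := by
  obtain ⟨⟨u, rfl⟩, hlt, hmul⟩ := hϖ
  have hinv : μ u * μ (↑u⁻¹ : R) = 1 := by rw [← hmul]; simp [hμ.2.2.1]
  have hpos : 0 < μ (u : R) := by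
    refine lt_of_le_of_ne (hμ.1 _) fun h => ?_
    rw [← h] at hinv
    simp at hinv
  have hself : ∀ x, gaussQuot μ c ρ x ≤ μ x := fun x => gaussQuot_le (GaussLE.self hμ hρ.le x)
  have hle : ∀ a x : R, gaussQuot μ c ρ (a * x) ≤ μ a * gaussQuot μ c ρ x := fun a x =>
    (gaussQuot_mul_le hμ hρ a x).trans
      (mul_le_mul_of_nonneg_right (hself a) (gaussQuot_nonneg hμ hρ.le x))
  have hmul' : ∀ x : R, gaussQuot μ c ρ (u * x) = μ u * gaussQuot μ c ρ x := fun x => by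
    refine le_antisymm (hle _ _) ?_
    have h := mul_le_mul_of_nonneg_left (hle (↑u⁻¹) (u * x)) hpos.le
    rwa [Units.inv_mul_cancel_left, ← mul_assoc, hinv, one_mul] at h
  have hu : gaussQuot μ c ρ (u : R) = μ u := by simpa [hq.2.2.1] using hmul' 1
  exact ⟨u.isUnit, hu ▸ hlt, fun x => by rw [hmul', hu]⟩

end Gauss

/-- A single power `c ^ N` that is small enough controls all powers, up to the constant
`(ρ ^ N)⁻¹` coming from the remainder of the exponent modulo `N`. -/
lemma pow_le_of_pow_le {R : Type*} [CommRing R] {μ : R → ℝ} (hμ : IsRingNorm μ) {c : R}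
    (hc : μ c ≤ 1) {ρ : ℝ} (hρ : 0 < ρ) (hρ1 : ρ ≤ 1) {N : ℕ} (hN : 0 < N)
    (h : μ (c ^ N) ≤ ρ ^ N) (i : ℕ) : μ (c ^ i) ≤ (ρ ^ N)⁻¹ * ρ ^ i := by
  rw [le_inv_mul_iff₀ (pow_pos hρ N)]
  have h1 : μ (c ^ i) ≤ ρ ^ (N * (i / N)) := by
    calc μ (c ^ i) = μ ((c ^ N) ^ (i / N) * c ^ (i % N)) := by
          rw [← pow_mul, ← pow_add, Nat.div_add_mod]
      _ ≤ μ ((c ^ N) ^ (i / N)) * μ (c ^ (i % N)) := hμ.2.2.2.2.2 _ _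
      _ ≤ (ρ ^ N) ^ (i / N) * 1 :=
          mul_le_mul ((hμ.pow_le _ _).trans (pow_le_pow_left₀ (hμ.1 _) h _))
            ((hμ.pow_le _ _).trans (pow_le_one₀ (hμ.1 _) hc)) (hμ.1 _) (by positivity)
      _ = ρ ^ (N * (i / N)) := by rw [mul_one, pow_mul]
  calc ρ ^ N * μ (c ^ i) ≤ ρ ^ N * ρ ^ (N * (i / N)) :=
        mul_le_mul_of_nonneg_left h1 (by positivity)
    _ = ρ ^ (N + N * (i / N)) := (pow_add _ _ _).symm
    _ ≤ ρ ^ i := pow_le_pow_of_le_one hρ.le hρ1 (by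
        have := Nat.div_add_mod i N
        have := Nat.mod_lt i hN
        omega)

/-- existence of Banach–Tate `ℤ_p`-algebra norms. Let `R` be a Noetherian
Banach–Tate ring with norm `ν` and multiplicative pseudo-uniformizer `ϖ`, admitting a
continuous ring homomorphism `ι : ℤ_p → R`. Then there exist `s > 0`, constants
`C₁, C₂ > 0` and a norm `ν'` on `R` such that `C₁ * ν x ^ s ≤ ν' x ≤ C₂ * ν x ^ s`
(so `ν'` is bounded-equivalent to `ν ^ s` and induces the same topology),
`ν' (ι z) ≤ ‖z‖_p` for all `z : ℤ_p`, and `ϖ` is a multiplicative pseudo-uniformizer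
for `ν'`. -/
theorem exists_BanachTate_Zp_algebra_norm (p : ℕ) [Fact p.Prime]
    {R : Type*} [CommRing R] [IsNoetherianRing R]
    (ν : R → ℝ) (hν : IsRingNorm ν) (hcomp : NormComplete ν)
    (ϖ : R) (hϖ : IsMultPseudoUniformizer ν ϖ)
    (ι : ℤ_[p] →+* R)
    (hι : ∀ ε : ℝ, 0 < ε → ∃ δ : ℝ, 0 < δ ∧ ∀ z : ℤ_[p], ‖z‖ < δ → ν (ι z) < ε) :
    ∃ (s C₁ C₂ : ℝ) (ν' : R → ℝ), 0 < s ∧ 0 < C₁ ∧ 0 < C₂ ∧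
      IsRingNorm ν' ∧
      (∀ x : R, C₁ * (ν x) ^ s ≤ ν' x ∧ ν' x ≤ C₂ * (ν x) ^ s) ∧
      (∀ z : ℤ_[p], ν' (ι z) ≤ ‖z‖) ∧
      IsMultPseudoUniformizer ν' ϖ := by
  have hp : 1 < (p : ℝ) := by exact_mod_cast (Fact.out : p.Prime).one_lt
  set ρ : ℝ := (p : ℝ)⁻¹ with hρdef
  have hρ : 0 < ρ := by positivity
  have hρ1 : ρ < 1 := inv_lt_one_of_one_lt₀ hp
  have hnorm : ∀ n : ℕ, ‖(p : ℤ_[p]) ^ n‖ = ρ ^ n := fun n => by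
    rw [norm_pow, PadicInt.norm_p]
  obtain ⟨δ, hδ, hδι⟩ := hι 1 one_pos
  -- Natural numbers have norm at most `1` and are dense in `ℤ_p`.
  have hι1 : ∀ z : ℤ_[p], ν (ι z) ≤ 1 := fun z => by
    obtain ⟨n, hn⟩ := PadicInt.denseRange_natCast.exists_dist_lt z hδ
    rw [dist_eq_norm] at hn
    have h := hν.2.2.2.2.1 (ι (z - n)) (n : R)
    rw [map_sub, map_natCast, sub_add_cancel] at h
    have h2 := hδι _ hn
    rw [map_sub, map_natCast] at h2
    exact h.trans (max_le h2.le (hν.natCast_le n))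
  obtain ⟨N, hN, hNν⟩ : ∃ N : ℕ, 0 < N ∧ ν ((p : R) ^ N) < 1 := by
    obtain ⟨n, hn⟩ := exists_pow_lt_of_lt_one hδ hρ1
    refine ⟨n + 1, n.succ_pos, ?_⟩
    have := hδι ((p : ℤ_[p]) ^ (n + 1)) (by
      rw [hnorm]
      exact (pow_le_pow_of_le_one hρ.le hρ1.le n.le_succ).trans_lt hn)
    simpa using this
  obtain ⟨s, hsN, hs⟩ : ∃ s : ℝ, ν ((p : R) ^ N) ^ s < ρ ^ N ∧ 0 < s :=
    (((tendsto_rpow_atTop_of_base_lt_one _ (by linarith [hν.1 ((p : R) ^ N)]) hNν).eventually_lt_const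
      (pow_pos hρ N)).and (Filter.eventually_gt_atTop 0)).exists
  have hμ := hν.rpow hs
  have hK : 0 < (ρ ^ N)⁻¹ := by positivity
  have hc := pow_le_of_pow_le hμ (hμ.natCast_le p) hρ hρ1.le hN hsN.le
  have hq := isRingNorm_gaussQuot hμ hρ hK hc
  have hϖμ : IsMultPseudoUniformizer (fun x => ν x ^ s) ϖ :=
    ⟨hϖ.1, Real.rpow_lt_one (hν.1 _) hϖ.2.1 hs, fun x => by
      simp only [hϖ.2.2 x, Real.mul_rpow (hν.1 ϖ) (hν.1 x)]⟩
  refine ⟨s, ((ρ ^ N)⁻¹)⁻¹, 1, gaussQuot (fun x => ν x ^ s) (p : R) ρ, hs, inv_pos.2 hK, one_pos, hq,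
    fun x => ⟨le_mul_gaussQuot hμ hρ.le hK hc x, ?_⟩, fun z => ?_,
    isMultPseudoUniformizer_gaussQuot hμ hρ hϖμ hq⟩
  · rw [one_mul]
    exact gaussQuot_le (GaussLE.self hμ hρ.le x)
  · by_cases hz : z = 0
    · simp [hz, hq.2.1]
    · have hspec := PadicInt.unitCoeff_spec hz
      set u : ℤ_[p] := (PadicInt.unitCoeff hz : ℤ_[p]) with hu
      have hun : ‖u‖ = 1 := PadicInt.norm_units _
      have hzn : ‖z‖ = ρ ^ z.valuation := by
        conv_lhs => rw [hspec]
        rw [norm_mul, hun, one_mul, hnorm]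
      have hιz : ι z = ι u * (p : R) ^ z.valuation := by
        conv_lhs => rw [hspec]
        simp
      rw [hιz, hzn]
      refine (gaussQuot_le (GaussLE.monomial hμ hρ.le (ι u) z.valuation)).trans ?_
      exact mul_le_of_le_one_left (by positivity)
        (Real.rpow_le_one (hν.1 _) (hι1 u) hs.le)
end

section
/- Let R be a Banach–Tate ring, let d ≥ 1, and let 1/p ≤ r < s < 1. Then D^s ⊆ D^r as subsets of the functions ℕ^d → R, the inclusion map ι : D^s → D^r is norm-decreasing, and ι is a compact operator in the following sense: for each n ≥ 1 let T_n : D^s → D^r be the truncation operator (T_n f)(α) = f(α) if |α| < n and (T_n f)(α) = 0 otherwise; then each T_n is a continuous R-linear map whose image is contained in a finitely generated R-submodule of D^r, the operator norm of ι − T_n is at most (r/s)^n, and hence T_n → ι in the operator norm on continuous R-linear maps from D^s to D^r. -/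
/-- Membership in `D^r`: the functions `f : ℕ^d → R` with `|f α| * r ^ |α| → 0` along the
cofinite filter, where `|α| = α₁ + ⋯ + α_d`. -/
def Dmem {R : Type*} [CommRing R] (ν : R → ℝ) (r : ℝ) (d : ℕ) (f : (Fin d → ℕ) → R) : Prop :=
  Filter.Tendsto (fun α : Fin d → ℕ => ν (f α) * r ^ (∑ i, α i)) Filter.cofinite (nhds 0)

/-- The norm `‖f‖_r = sup_α |f α| * r ^ |α|` on `D^r`. -/
noncomputable def Dnorm {R : Type*} [CommRing R] (ν : R → ℝ) (r : ℝ) (d : ℕ)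
    (f : (Fin d → ℕ) → R) : ℝ :=
  ⨆ α : Fin d → ℕ, ν (f α) * r ^ (∑ i, α i)

/-- The truncation operator `T_n`: keeps the coefficients with `|α| < n` and kills the rest. -/
def trunc {R : Type*} [CommRing R] (d n : ℕ) (f : (Fin d → ℕ) → R) : (Fin d → ℕ) → R :=
  fun α => if (∑ i, α i) < n then f α else 0

theorem term_le_Dnorm {R : Type*} [CommRing R] {ν : R → ℝ} {s : ℝ} {d : ℕ}
    {f : (Fin d → ℕ) → R} (hf : Dmem ν s d f) (α : Fin d → ℕ) :
    ν (f α) * s ^ (∑ i, α i) ≤ Dnorm ν s d f :=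
  le_ciSup (f := fun α : Fin d → ℕ => ν (f α) * s ^ (∑ i, α i))
    (Filter.Tendsto.bddAbove_range_of_cofinite hf) α

theorem finite_sum_lt (d n : ℕ) : {α : Fin d → ℕ | ∑ i, α i < n}.Finite := by
  refine (Set.finite_Iic (fun _ : Fin d => n)).subset fun α hα i => ?_
  have hα' : ∑ i, α i < n := hα
  exact (Finset.single_le_sum (fun _ _ => Nat.zero_le _) (Finset.mem_univ i)).trans hα'.le

/-- The image of `T_n` is contained in the span of the indicator functions of the finitely many
multi-indices of degree less than `n`. -/
theorem exists_fg_trunc_mem {R : Type*} [CommRing R] (d n : ℕ) :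
    ∃ S : Submodule R ((Fin d → ℕ) → R), S.FG ∧ ∀ f, trunc d n f ∈ S := by
  classical
  refine ⟨Submodule.span R ((fun α => Pi.single α (1 : R)) '' {α : Fin d → ℕ | ∑ i, α i < n}),
    Submodule.fg_span ((finite_sum_lt d n).image _), fun f => ?_⟩
  have key : trunc d n f =
      ∑ α ∈ (finite_sum_lt d n).toFinset, f α • (Pi.single α (1 : R) : (Fin d → ℕ) → R) := by
    funext β
    simp [trunc, Finset.sum_apply, Pi.single_apply]
  rw [key]
  refine Submodule.sum_mem _ fun α hα => Submodule.smul_mem _ _ (Submodule.subset_span ?_)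
  exact ⟨α, by simpa using hα, rfl⟩

/-- The weight of the remainder `f - T_n f` vanishes for `|α| < n` and gains the factor
`(r / s) ^ |α| ≤ (r / s) ^ n` otherwise. -/
theorem Dnorm_sub_trunc_le {R : Type*} [CommRing R] {ν : R → ℝ}
    (hνz : ν 0 = 0) {d : ℕ} {r s : ℝ} (hr : 0 < r) (hrs : r < s) (n : ℕ)
    {f : (Fin d → ℕ) → R} (hf : Dmem ν s d f) (hf1 : Dnorm ν s d f ≤ 1) :
    Dnorm ν r d (f - trunc d n f) ≤ (r / s) ^ n := by
  have hs : 0 < s := hr.trans hrs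
  refine ciSup_le fun α => ?_
  by_cases h : ∑ i, α i < n
  · simp only [Pi.sub_apply, trunc, if_pos h, sub_self, hνz, zero_mul]
    positivity
  · simp only [Pi.sub_apply, trunc, if_neg h, sub_zero]
    have hsplit : ν (f α) * r ^ (∑ i, α i) =
        (ν (f α) * s ^ (∑ i, α i)) * (r / s) ^ (∑ i, α i) := by
      rw [mul_assoc, ← mul_pow, mul_div_cancel₀ _ hs.ne']
    rw [hsplit]
    calc _ ≤ 1 * (r / s) ^ (∑ i, α i) := by
          gcongr
          exact (term_le_Dnorm hf α).trans hf1
      _ ≤ (r / s) ^ n := by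
          rw [one_mul]
          exact pow_le_pow_of_le_one (by positivity) ((div_le_one hs).2 hrs.le) (not_lt.1 h)

/-- **Statement 5**. For a Banach–Tate ring `R`, `d ≥ 1` and `1/p ≤ r < s < 1`:
`D^s ⊆ D^r`, the inclusion `ι : D^s → D^r` is norm-decreasing, and `ι` is compact:
the truncations `T_n` are continuous `R`-linear maps with image contained in a finitely
generated `R`-submodule, `‖ι − T_n‖_op ≤ (r/s)^n` on the unit ball, and hence `T_n → ι`
in the operator norm. -/
theorem inclusion_compact {R : Type*} [CommRing R] (p : ℕ) (hp : p.Prime)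
    (ν : R → ℝ) (hν : IsRingNorm ν) (hcomp : NormComplete ν)
    (hBT : ∃ ϖ : R, IsUnit ϖ ∧ ν ϖ < 1 ∧ ∀ x, ν (ϖ * x) = ν ϖ * ν x)
    (d : ℕ) (hd : 1 ≤ d) (r s : ℝ) (hr : 1 / (p : ℝ) ≤ r) (hrs : r < s) (hs1 : s < 1) :
    (∀ f, Dmem ν s d f → Dmem ν r d f) ∧
    (∀ f, Dmem ν s d f → Dnorm ν r d f ≤ Dnorm ν s d f) ∧
    (∀ n : ℕ, (∀ f g : (Fin d → ℕ) → R, trunc d n (f + g) = trunc d n f + trunc d n g) ∧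
      (∀ (c : R) (f : (Fin d → ℕ) → R), trunc d n (c • f) = c • trunc d n f)) ∧
    (∀ n : ℕ, ∀ f, Dmem ν s d f →
      Dmem ν r d (trunc d n f) ∧ Dnorm ν r d (trunc d n f) ≤ Dnorm ν s d f) ∧
    (∀ n : ℕ, ∃ S : Submodule R ((Fin d → ℕ) → R), S.FG ∧ ∀ f, trunc d n f ∈ S) ∧
    (∀ n : ℕ, ∀ f, Dmem ν s d f → Dnorm ν s d f ≤ 1 →
      Dnorm ν r d (f - trunc d n f) ≤ (r / s) ^ n) ∧
    (∀ ε : ℝ, 0 < ε → ∃ N : ℕ, ∀ n : ℕ, N ≤ n → ∀ f, Dmem ν s d f → Dnorm ν s d f ≤ 1 →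
      Dnorm ν r d (f - trunc d n f) ≤ ε) := by
  obtain ⟨hν0, hνz, -⟩ := hν
  have hr0 : 0 < r := lt_of_lt_of_le (by have := hp.pos; positivity) hr
  have hs0 : 0 < s := hr0.trans hrs
  have hle : ∀ (f : (Fin d → ℕ) → R) α,
      ν (f α) * r ^ (∑ i, α i) ≤ ν (f α) * s ^ (∑ i, α i) := fun f α =>
    mul_le_mul_of_nonneg_left (pow_le_pow_left₀ hr0.le hrs.le _) (hν0 _)
  have hnn : ∀ (f : (Fin d → ℕ) → R) α, 0 ≤ ν (f α) * r ^ (∑ i, α i) := fun f α =>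
    mul_nonneg (hν0 _) (pow_nonneg hr0.le _)
  have htr : ∀ n (f : (Fin d → ℕ) → R) α,
      ν (trunc d n f α) * r ^ (∑ i, α i) ≤ ν (f α) * s ^ (∑ i, α i) := by
    intro n f α
    by_cases h : ∑ i, α i < n
    · simpa only [trunc, if_pos h] using hle f α
    · simp only [trunc, if_neg h, hνz, zero_mul]
      exact (hnn f α).trans (hle f α)
  refine ⟨fun f hf => squeeze_zero (hnn f) (hle f) hf,
    fun f hf => ciSup_le fun α => (hle f α).trans (term_le_Dnorm hf α),
    fun n => ⟨fun f g => ?_, fun c f => ?_⟩,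
    fun n f hf => ⟨squeeze_zero (hnn _) (htr n f) hf,
      ciSup_le fun α => (htr n f α).trans (term_le_Dnorm hf α)⟩,
    exists_fg_trunc_mem d,
    fun n f hf hf1 => Dnorm_sub_trunc_le hνz hr0 hrs n hf hf1, fun ε hε => ?_⟩
  · funext α
    by_cases h : ∑ i, α i < n <;> simp [trunc, h]
  · funext α
    by_cases h : ∑ i, α i < n <;> simp [trunc, h]
  · have hq0 : 0 ≤ r / s := by positivity
    have hq1 : r / s < 1 := (div_lt_one hs0).2 hrs
    obtain ⟨N, hN⟩ := exists_pow_lt_of_lt_one hε hq1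
    exact ⟨N, fun n hn f hf hf1 => (Dnorm_sub_trunc_le hνz hr0 hrs n hf hf1).trans
      ((pow_le_pow_of_le_one hq0 hq1.le hn).trans hN.le)⟩
end

section
/- Let R be a Banach–Tate ring, let d ≥ 1, and let 1/p ≤ s < r < 1. Inside the Banach R-module D^s, the closure with respect to the norm ‖·‖_s of the unit ball {f ∈ D^r : ‖f‖_r ≤ 1} of D^r is exactly the set {f : ℕ^d → R : |f(α)|·r^{|α|} ≤ 1 for all α ∈ ℕ^d}; note that every such f indeed lies in D^s, since |f(α)|·s^{|α|} ≤ (s/r)^{|α|} → 0. In particular, this closure is independent of the auxiliary radius s. -/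
theorem tendsto_degree_cofinite (d : ℕ) :
    Filter.Tendsto (fun α : Fin d → ℕ => ∑ i, α i) Filter.cofinite Filter.atTop := by
  rw [Filter.tendsto_atTop]
  intro N
  rw [Filter.eventually_cofinite]
  refine (Set.finite_Iic (fun _ : Fin d => N)).subset ?_
  intro α hα i
  have h := Finset.single_le_sum (f := α) (fun j _ => Nat.zero_le _) (Finset.mem_univ i)
  exact h.trans (not_le.1 hα).le

theorem Dmem_of_le_one {R : Type*} [CommRing R] {ν : R → ℝ} (hν : IsRingNorm ν) {d : ℕ} {r s : ℝ}
    (hs : 0 < s) (hsr : s < r) {f : (Fin d → ℕ) → R}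
    (hf : ∀ α, ν (f α) * r ^ (∑ i, α i) ≤ 1) : Dmem ν s d f := by
  have hr : 0 < r := hs.trans hsr
  have h0 : Filter.Tendsto (fun α : Fin d → ℕ => (s / r) ^ (∑ i, α i)) Filter.cofinite (nhds 0) :=
    (tendsto_pow_atTop_nhds_zero_of_lt_one (by positivity) ((div_lt_one hr).2 hsr)).comp
      (tendsto_degree_cofinite d)
  refine squeeze_zero (fun α => mul_nonneg (hν.1 _) (by positivity)) (fun α => ?_) h0
  rw [div_pow, le_div_iff₀ (by positivity)]
  calc ν (f α) * s ^ (∑ i, α i) * r ^ (∑ i, α i)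
      = (ν (f α) * r ^ (∑ i, α i)) * s ^ (∑ i, α i) := by ring
    _ ≤ 1 * s ^ (∑ i, α i) := by gcongr; exact hf α
    _ = _ := one_mul _

theorem le_Dnorm {R : Type*} [CommRing R] {ν : R → ℝ} {d : ℕ} {r : ℝ}
    {f : (Fin d → ℕ) → R} (hf : Dmem ν r d f) (α : Fin d → ℕ) :
    ν (f α) * r ^ (∑ i, α i) ≤ Dnorm ν r d f :=
  le_ciSup (f := fun α : Fin d → ℕ => ν (f α) * r ^ (∑ i, α i))
    hf.bddAbove_range_of_cofinite α

theorem Dmem_sub {R : Type*} [CommRing R] {ν : R → ℝ} (hν : IsRingNorm ν) {d : ℕ} {s : ℝ}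
    (hs : 0 < s) {f g : (Fin d → ℕ) → R} (hf : Dmem ν s d f) (hg : Dmem ν s d g) :
    Dmem ν s d (f - g) := by
  have h := Filter.Tendsto.add hf (Filter.Tendsto.const_mul (ν (-1)) hg)
  rw [mul_zero, add_zero] at h
  refine squeeze_zero (fun α => mul_nonneg (hν.1 _) (by positivity)) (fun α => ?_) h
  obtain ⟨h0, -, -, -, hadd, hmul⟩ := hν
  have h1 : ν ((f - g) α) ≤ ν (f α) + ν (-1) * ν (g α) := by
    have e : (f - g) α = f α + (-1) * g α := by simp [sub_eq_add_neg]
    rw [e]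
    have := hmul (-1) (g α)
    have h2 := mul_nonneg (h0 (-1)) (h0 (g α))
    exact (hadd _ _).trans (max_le (by linarith [h0 (f α)]) (by linarith [h0 (f α)]))
  calc ν ((f - g) α) * s ^ (∑ i, α i)
      ≤ (ν (f α) + ν (-1) * ν (g α)) * s ^ (∑ i, α i) := by gcongr
    _ = _ := by ring

/-- **Statement 6**. For a Banach–Tate ring `R`, `d ≥ 1` and `1/p ≤ s < r < 1`: inside the
Banach `R`-module `D^s`, the closure (for `‖·‖_s`) of the unit ball of `D^r` is exactly
`{f | ∀ α, |f α| * r ^ |α| ≤ 1}` (every such `f` indeed lies in `D^s`). In particular the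
closure is independent of the auxiliary radius `s`. -/
theorem closure_unitBall_Dr {R : Type*} [CommRing R] (p : ℕ) (hp : p.Prime)
    (ν : R → ℝ) (hν : IsRingNorm ν) (hcomp : NormComplete ν)
    (hBT : ∃ ϖ : R, IsUnit ϖ ∧ ν ϖ < 1 ∧ ∀ x, ν (ϖ * x) = ν ϖ * ν x)
    (d : ℕ) (hd : 1 ≤ d) (r s : ℝ) (hs : 1 / (p : ℝ) ≤ s) (hsr : s < r) (hr1 : r < 1) :
    (∀ f : (Fin d → ℕ) → R, (∀ α, ν (f α) * r ^ (∑ i, α i) ≤ 1) → Dmem ν s d f) ∧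
    (∀ f : (Fin d → ℕ) → R, Dmem ν s d f →
      ((∀ ε : ℝ, 0 < ε → ∃ g : (Fin d → ℕ) → R,
          Dmem ν r d g ∧ Dnorm ν r d g ≤ 1 ∧ Dnorm ν s d (f - g) < ε) ↔
        (∀ α, ν (f α) * r ^ (∑ i, α i) ≤ 1))) := by
  obtain ⟨h0, hz, -, -, hadd, -⟩ := id hν
  have hs0 : 0 < s := lt_of_lt_of_le (by have := hp.pos; positivity) hs
  have hr0 : 0 < r := hs0.trans hsr
  refine ⟨fun f hf => Dmem_of_le_one hν hs0 hsr hf, fun f hf => ⟨fun H α => ?_, fun H ε hε => ?_⟩⟩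
  · -- this choice of `ε` turns a bound `ε / s ^ |α|` into `1 / r ^ |α|`
    obtain ⟨g, hg, hg1, hfg⟩ := H ((s / r) ^ (∑ i, α i)) (by positivity)
    have hgα : ∀ β, ν (g β) * r ^ (∑ i, β i) ≤ 1 := fun β => (le_Dnorm hg β).trans hg1
    have hsub := (le_Dnorm (Dmem_sub hν hs0 hf (Dmem_of_le_one hν hs0 hsr hgα)) α).trans hfg.le
    rw [div_pow, le_div_iff₀ (by positivity), mul_right_comm] at hsub
    have hsub' : ν ((f - g) α) * r ^ (∑ i, α i) ≤ 1 :=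
      le_of_mul_le_mul_right (by simpa using hsub) (pow_pos hs0 (∑ i, α i))
    have hle := hadd ((f - g) α) (g α)
    rw [Pi.sub_apply, sub_add_cancel] at hle
    calc ν (f α) * r ^ (∑ i, α i)
        ≤ max (ν (f α - g α)) (ν (g α)) * r ^ (∑ i, α i) := by gcongr
      _ = max (ν (f α - g α) * r ^ (∑ i, α i)) (ν (g α) * r ^ (∑ i, α i)) :=
          max_mul_of_nonneg _ _ (by positivity)
      _ ≤ 1 := max_le hsub' (hgα α)
  · classical
    -- the finite set of indices at which `f` is not yet `ε / 2`-small
    have hfin : {α | ¬ ν (f α) * s ^ (∑ i, α i) < ε / 2}.Finite :=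
      Filter.eventually_cofinite.1 (Filter.Tendsto.eventually_lt_const (half_pos hε) hf)
    refine ⟨fun α => if ν (f α) * s ^ (∑ i, α i) < ε / 2 then 0 else f α, ?_, ?_, ?_⟩
    · refine tendsto_const_nhds.congr' ?_
      filter_upwards [hfin.compl_mem_cofinite] with α hα
      replace hα : ν (f α) * s ^ (∑ i, α i) < ε / 2 := not_not.1 hα
      simp [hα, hz]
    · refine ciSup_le fun α => ?_
      dsimp only
      split_ifs
      · simp [hz]
      · exact H α
    · refine lt_of_le_of_lt (ciSup_le fun α => ?_) (half_lt_self hε)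
      simp only [Pi.sub_apply]
      split_ifs with h
      · simpa using h.le
      · simpa [hz] using (half_pos hε).le
end

section
/- Let A be a commutative Noetherian ring and let ϖ ∈ A be an element such that A is ϖ-adically complete and separated (i.e. the natural map A → lim_n A/ϖⁿA is an isomorphism). Then the localization A[1/ϖ] is a Jacobson ring, i.e. every prime ideal of A[1/ϖ] is an intersection of maximal ideals. -/
/-!
Completeness enters only through the fact that `ϖ` lies in the Jacobson radical of `A`.

Let `P` be a prime of `A[1/ϖ]` and `y ∉ P`. By Noetherianity there is a prime `M ⊇ P` maximal among
those not containing `y`; it suffices that `M` is a maximal ideal, for then `y` is not in the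
Jacobson radical of `P`. Write `y = f / ϖ ^ k` and let `q` be the contraction of `M` to `A`. Every
nonzero prime of the Noetherian domain `A ⧸ q` contains the nonzero element `x = ϖ f`. Krull's
principal ideal theorem and prime avoidance then show that every nonzero prime of `A ⧸ q` is minimal
over `x` (`mem_minimalPrimes_of_forall_mem`), hence is a maximal ideal, hence contains `ϖ`.
So no prime of `A[1/ϖ]` lies strictly above `M`.
-/

/-- In a Noetherian domain whose nonzero primes all contain a fixed nonzero `x`, every nonzero prime
is minimal over `x`. Otherwise prime avoidance gives an element `y` of `m` outside the finitely many
minimal primes of `x`, and a prime minimal over `y` would have height at least two. -/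
theorem mem_minimalPrimes_of_forall_mem {C : Type*} [CommRing C] [IsNoetherianRing C]
    [IsDomain C] {x : C} (hx0 : x ≠ 0) (hx : ∀ Q : Ideal C, Q.IsPrime → Q ≠ ⊥ → x ∈ Q)
    (m : Ideal C) (hm : m.IsPrime) (hm0 : m ≠ ⊥) : m ∈ (Ideal.span {x}).minimalPrimes := by
  by_contra hmin
  have hfin := Ideal.finite_minimalPrimes_of_isNoetherianRing C (Ideal.span {x})
  have hnot : ¬ ((m : Set C) ⊆ ⋃ s ∈ (Ideal.span {x}).minimalPrimes, (s : Set C)) := by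
    rw [Ideal.subset_union_prime_finite hfin ⊥ ⊥ (fun s hs _ _ => hs.1.1)]
    rintro ⟨s, hs, hms⟩
    have hsm : s ≤ m :=
      hs.2 ⟨hm, (Ideal.span_singleton_le_iff_mem _).2 (hx m hm hm0)⟩ hms
    exact hmin (le_antisymm hms hsm ▸ hs)
  obtain ⟨y, hym, hy⟩ := Set.not_subset.1 hnot
  simp only [Set.mem_iUnion, not_exists] at hy
  obtain ⟨r, hr, -⟩ :=
    Ideal.exists_minimalPrimes_le ((Ideal.span_singleton_le_iff_mem m).2 hym)
  have hrp : r.IsPrime := hr.1.1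
  have hyr : y ∈ r := (Ideal.span_singleton_le_iff_mem _).1 hr.1.2
  have hr0 : r ≠ ⊥ := by
    rintro rfl
    obtain ⟨s, hs, -⟩ := Ideal.exists_minimalPrimes_le
      ((Ideal.span_singleton_le_iff_mem m).2 (hx m hm hm0))
    exact hy s hs ((Ideal.mem_bot.1 hyr) ▸ s.zero_mem)
  obtain ⟨s, hs, hsr⟩ := Ideal.exists_minimalPrimes_le
    ((Ideal.span_singleton_le_iff_mem r).2 (hx r hrp hr0))
  have hsp : s.IsPrime := hs.1.1
  have hlt : s < r := lt_of_le_of_ne hsr (fun h => hy s hs (h ▸ hyr))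
  have hs1 := Ideal.height_le_iff.1
    (Ideal.height_le_one_of_isPrincipal_of_mem_minimalPrimes (Ideal.span {y}) r hr) s hsp hlt
  rw [Nat.cast_one, Order.lt_one_iff, Ideal.height_eq_zero_iff,
    IsDomain.minimalPrimes_eq_singleton_bot] at hs1
  have hxs : x ∈ s := (Ideal.span_singleton_le_iff_mem _).1 hs.1.2
  rw [Set.mem_singleton_iff.1 hs1] at hxs
  exact hx0 hxs

/-- If `a` lies in the Jacobson radical and every prime strictly above the prime `q` contains
`x ∉ q`, then every prime strictly above `q` is maximal, and so contains `a`. -/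
theorem mem_of_lt_of_mem_jacobson {A : Type*} [CommRing A] [IsNoetherianRing A] {a x : A}
    (ha : a ∈ (⊥ : Ideal A).jacobson) (q : Ideal A) [q.IsPrime] (hxq : x ∉ q)
    (hx : ∀ Q : Ideal A, Q.IsPrime → q < Q → x ∈ Q) (Q : Ideal A) (hQ : Q.IsPrime)
    (hqQ : q < Q) : a ∈ Q := by
  let π := Ideal.Quotient.mk q
  have hπ : Function.Surjective π := Ideal.Quotient.mk_surjective
  have key := mem_minimalPrimes_of_forall_mem (x := π x)
    (fun h => hxq (Ideal.Quotient.eq_zero_iff_mem.1 h))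
    (fun T hT hT0 => hx (T.comap π) (Ideal.IsPrime.comap π (hK := hT)) (lt_of_le_of_ne
      (fun z hz => by
        rw [Ideal.mem_comap, Ideal.Quotient.eq_zero_iff_mem.2 hz]; exact T.zero_mem)
      (fun h => hT0 (by
        rw [← Ideal.map_comap_of_surjective π hπ T, ← h]; exact Ideal.map_quotient_self q))))
  obtain ⟨N, hN, hQN⟩ := Q.exists_le_maximal hQ.ne_top
  have hker : ∀ J : Ideal A, q ≤ J → (J.map π).comap π = J := fun J hJ => by
    rw [Ideal.comap_map_of_surjective' π hπ, Ideal.mk_ker, sup_eq_left.2 hJ]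
  have hne : ∀ J : Ideal A, q < J → J.map π ≠ ⊥ := fun J hJ h => by
    rw [Ideal.map_eq_bot_iff_le_ker, Ideal.mk_ker] at h
    exact hJ.not_ge h
  have hQ' : (Q.map π).IsPrime := Ideal.isPrime_map_quotientMk_of_isPrime hqQ.le
  have hN' : (N.map π).IsPrime :=
    have := hN.isPrime
    Ideal.isPrime_map_quotientMk_of_isPrime (hqQ.le.trans hQN)
  -- Both images are minimal over `x`, so they coincide.
  have hle : N.map π ≤ Q.map π :=
    (key _ hN' (hne N (hqQ.trans_le hQN))).2 (key _ hQ' (hne Q hqQ)).1 (Ideal.map_mono hQN)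
  have hNQ : N ≤ Q := by
    rw [← hker N (hqQ.le.trans hQN), ← hker Q hqQ.le]
    exact Ideal.comap_mono hle
  exact hNQ (Ideal.mem_sInf.1 ha ⟨bot_le, hN⟩)

/-- **Statement 8**. Let `A` be a commutative Noetherian ring and `ϖ ∈ A` such that `A` is
`ϖ`-adically complete and separated. Then `A[1/ϖ]` is a Jacobson ring: every prime ideal
is an intersection of maximal ideals (i.e. equals its Jacobson radical). -/
theorem localization_away_isJacobson {A : Type*} [CommRing A] [IsNoetherianRing A]
    (ϖ : A) [IsAdicComplete (Ideal.span {ϖ}) A] :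
    ∀ P : Ideal (Localization.Away ϖ), P.IsPrime → P.jacobson = P := by
  intro P hP
  have hϖ : ϖ ∈ (⊥ : Ideal A).jacobson :=
    IsAdicComplete.le_jacobson_bot (Ideal.span {ϖ}) (Ideal.mem_span_singleton_self ϖ)
  have hnoeth : IsNoetherianRing (Localization.Away ϖ) :=
    IsLocalization.isNoetherianRing (Submonoid.powers ϖ) _ inferInstance
  refine le_antisymm (fun y hy => ?_) Ideal.le_jacobson
  by_contra hyP
  obtain ⟨(M : Ideal (Localization.Away ϖ)), ⟨hM, hPM, hyM⟩, hmax⟩ := set_has_maximal_iff_noetherian.2 hnoeth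
    {M : Ideal (Localization.Away ϖ) | M.IsPrime ∧ P ≤ M ∧ y ∉ M} ⟨P, hP, le_rfl, hyP⟩
  have habove : ∀ Q : Ideal (Localization.Away ϖ), Q.IsPrime → M < Q → y ∈ Q :=
    fun Q hQ hMQ => by_contra fun h => hmax Q ⟨hQ, hPM.trans hMQ.le, h⟩ hMQ
  let φ := algebraMap A (Localization.Away ϖ)
  have hunit : IsUnit (φ ϖ) := IsLocalization.Away.algebraMap_isUnit ϖ
  have hϖnot : ∀ Q : Ideal (Localization.Away ϖ), Q.IsPrime → φ ϖ ∉ Q :=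
    fun Q hQ h => hQ.ne_top (Ideal.eq_top_of_isUnit_mem _ h hunit)
  obtain ⟨⟨f, s⟩, hf⟩ := IsLocalization.surj (Submonoid.powers ϖ) y
  have hs : IsUnit (φ s) := IsLocalization.map_units _ s
  have hmem : ∀ Q : Ideal (Localization.Away ϖ), φ f ∈ Q ↔ y ∈ Q := fun Q => by
    rw [show φ f = y * φ s from hf.symm, Ideal.mul_unit_mem_iff_mem Q hs]
  have hqp : (M.comap φ).IsPrime := Ideal.IsPrime.comap φ
  obtain ⟨N, hN, hMN⟩ := M.exists_le_maximal hM.ne_top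
  have hlt : ∀ Q : Ideal (Localization.Away ϖ), M < Q → M.comap φ < Q.comap φ := fun Q h =>
    (IsLocalization.orderEmbedding (Submonoid.powers ϖ) (Localization.Away ϖ)).lt_iff_lt.2 h
  rcases hMN.eq_or_lt with rfl | hMN
  · exact hyM (Ideal.mem_sInf.1 hy ⟨hPM, hN⟩)
  · refine hϖnot N hN.isPrime (mem_of_lt_of_mem_jacobson (x := ϖ * f) hϖ (M.comap φ) ?_ ?_
      (N.comap φ) (Ideal.IsPrime.comap φ (hK := hN.isPrime)) (hlt N hMN))
    · intro h
      rcases hqp.mem_or_mem h with h | h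
      · exact hϖnot M hM h
      · exact hyM ((hmem M).1 h)
    · intro Q hQ hMQ
      by_cases hϖQ : ϖ ∈ Q
      · exact Q.mul_mem_right _ hϖQ
      · -- `Q` avoids the powers of `ϖ`, so it is the contraction of its extension.
        have hdisj : Disjoint (Submonoid.powers ϖ : Set A) (Q : Set A) := by
          rw [Set.disjoint_left]
          rintro _ ⟨n, rfl⟩ h
          exact hϖQ (hQ.mem_of_pow_mem n h)
        have hQe := IsLocalization.isPrime_of_isPrime_disjoint (Submonoid.powers ϖ)
          (Localization.Away ϖ) Q hQ hdisj
        have hQc : (Q.map φ).comap φ = Q := IsLocalization.comap_map_of_isPrime_disjoint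
          (Submonoid.powers ϖ) (Localization.Away ϖ) hQ hdisj
        have hMQe : M < Q.map φ := by
          have := IsLocalization.map_comap (Submonoid.powers ϖ) (Localization.Away ϖ) M
          refine lt_of_le_of_ne (this ▸ Ideal.map_mono hMQ.le) ?_
          rintro rfl
          exact hMQ.ne hQc
        have : f ∈ (Q.map φ).comap φ := (hmem _).2 (habove _ hQe hMQe)
        rw [hQc] at this
        exact Q.mul_mem_left _ this
end

section
/- In the Tate setup, the following hold: (i) every subring S of R with R₀ ⊆ S ⊆ ϖ^{-N}·R₀ for some N ≥ 0 is finitely generated as an R₀-module (hence Noetherian) and integral over R₀; (ii) the set R° of power-bounded elements of R is exactly the integral closure of R₀ in R. -/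
/-!
Write `R` for `A[1/ϖ]`. An `A`-submodule of `R` contained in `ϖ⁻ᴺ·A` lies in a cyclic module over the
Noetherian ring `A`, so it is finitely generated (`fg_of_bounded`); conversely a finitely generated
`A`-submodule of `R` lies in some `ϖ⁻ᴺ·A` by clearing denominators (`bounded_of_fg`).
A subring `S` as in (i) is therefore a finite `A`-algebra, hence Noetherian and integral. For (ii),
`x` is power-bounded iff `A[x]`, the `A`-span of the powers of `x`, lies in some `ϖ⁻ᴺ·A`,
iff `A[x]` is a finite `A`-module, iff `x` is integral over `A`.
-/

theorem fg_of_bounded {A : Type*} [CommRing A] [IsNoetherianRing A] (ϖ : A)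
    (T : Submodule A (Localization.Away ϖ)) (N : ℕ)
    (hT : ∀ x ∈ T, algebraMap A (Localization.Away ϖ) ϖ ^ N * x ∈
      (algebraMap A (Localization.Away ϖ)).range) : T.FG := by
  obtain ⟨v, hv⟩ : IsUnit (algebraMap A (Localization.Away ϖ) ϖ ^ N) :=
    (IsLocalization.Away.algebraMap_isUnit ϖ).pow N
  have hle : T ≤ Submodule.span A {((v⁻¹ : (Localization.Away ϖ)ˣ) : Localization.Away ϖ)} := by
    intro x hx
    obtain ⟨a, ha⟩ := hT x hx
    refine Submodule.mem_span_singleton.2 ⟨a, ?_⟩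
    rw [Algebra.smul_def, ha, ← hv, mul_comm, Units.inv_mul_cancel_left]
  have : IsNoetherian A
      (Submodule.span A {((v⁻¹ : (Localization.Away ϖ)ˣ) : Localization.Away ϖ)}) :=
    isNoetherian_span_of_finite A (Set.finite_singleton _)
  exact (Submodule.fg_top T).1 ((isNoetherian_of_le hle).noetherian ⊤)

theorem bounded_of_fg {A : Type*} [CommRing A] (ϖ : A)
    (T : Submodule A (Localization.Away ϖ)) (hT : T.FG) :
    ∃ N : ℕ, ∀ x ∈ T, algebraMap A (Localization.Away ϖ) ϖ ^ N * x ∈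
      (algebraMap A (Localization.Away ϖ)).range := by
  obtain ⟨s, rfl⟩ := hT
  obtain ⟨⟨b, N, rfl⟩, hb⟩ :=
    IsLocalization.exist_integer_multiples_of_finset (Submonoid.powers ϖ) s
  refine ⟨N, fun x hx => ?_⟩
  induction hx using Submodule.span_induction with
  | mem x hx =>
    obtain ⟨a, ha⟩ := hb x hx
    exact ⟨a, by rw [ha, Algebra.smul_def, map_pow]⟩
  | zero => simp
  | add x y _ _ hx hy => rw [mul_add]; exact add_mem hx hy
  | smul a x _ hx =>
    rw [Algebra.smul_def, mul_left_comm]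
    exact mul_mem ⟨a, rfl⟩ hx


/-- **Statement 9**. Tate setup: `A` is a commutative Noetherian ring, `ϖ ∈ A` a
non-zero-divisor such that `A` is `ϖ`-adically complete and separated, and
`R = A[1/ϖ]` (so `R` is a complete Tate ring with ring of definition `A` and
topologically nilpotent unit `ϖ`). Then:
(i) every subring `S` of `R` with `A ⊆ S ⊆ ϖ⁻ᴺ·A` for some `N` is finitely generated as
an `A`-module (hence Noetherian) and integral over `A`;
(ii) the set `R°` of power-bounded elements of `R` (those `x` with `xⁿ ∈ ϖ⁻ᴺ·A` for all
`n`, for some fixed `N`) is exactly the integral closure of `A` in `R`. -/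
theorem tate_ring_of_definition_finite_and_powerBounded
    {A : Type*} [CommRing A] [IsNoetherianRing A]
    (ϖ : A) (hϖ : ϖ ∈ nonZeroDivisors A) [IsAdicComplete (Ideal.span {ϖ}) A] :
    (∀ S : Subring (Localization.Away ϖ),
      (algebraMap A (Localization.Away ϖ)).range ≤ S →
      (∃ N : ℕ, ∀ x ∈ S,
        algebraMap A (Localization.Away ϖ) ϖ ^ N * x ∈ (algebraMap A (Localization.Away ϖ)).range) →
      (∃ T : Submodule A (Localization.Away ϖ), T.FG ∧
          (T : Set (Localization.Away ϖ)) = (S : Set (Localization.Away ϖ))) ∧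
        IsNoetherianRing S ∧ (∀ x ∈ S, IsIntegral A x)) ∧
    ({x : Localization.Away ϖ | ∃ N : ℕ, ∀ n : ℕ,
        algebraMap A (Localization.Away ϖ) ϖ ^ N * x ^ n ∈ (algebraMap A (Localization.Away ϖ)).range}
      = (integralClosure A (Localization.Away ϖ) : Set (Localization.Away ϖ))) := by
  refine ⟨fun S hS ⟨N, hN⟩ => ?_, ?_⟩
  · let S' : Subalgebra A (Localization.Away ϖ) :=
      { S with algebraMap_mem' := fun a => hS ⟨a, rfl⟩ }
    have hfg : (Subalgebra.toSubmodule S').FG := fg_of_bounded ϖ _ N hN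
    have : Module.Finite A S' := Module.Finite.iff_fg.2 hfg
    have hnoeth : IsNoetherianRing S' := IsNoetherianRing.of_finite A S'
    exact ⟨⟨_, hfg, rfl⟩, hnoeth, fun x hx => IsIntegral.of_mem_of_fg S' hfg x hx⟩
  · ext x
    constructor
    · rintro ⟨N, hN⟩
      refine IsIntegral.of_mem_of_fg (Algebra.adjoin A {x}) (fg_of_bounded ϖ _ N ?_) x
        (Algebra.self_mem_adjoin_singleton A x)
      intro y hy
      obtain ⟨p, rfl⟩ := Algebra.adjoin_singleton_eq_range_aeval A x ▸ hy
      rw [AlgHom.toRingHom_eq_coe, RingHom.coe_coe, Polynomial.aeval_eq_sum_range, Finset.mul_sum]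
      refine sum_mem fun i _ => ?_
      rw [Algebra.smul_def, mul_left_comm]
      exact mul_mem ⟨_, rfl⟩ (hN i)
    · intro hx
      obtain ⟨N, hN⟩ := bounded_of_fg ϖ _ (IsIntegral.fg_adjoin_singleton hx)
      exact ⟨N, fun n => hN _ (pow_mem (Algebra.self_mem_adjoin_singleton A x) n)⟩
end

section
/- In the Tate setup, let S be a commutative R-algebra that is finitely generated as an R-module. Then: (i) there exists an R₀-subalgebra S₀ ⊆ S containing the image of R₀ that is finitely generated as an R₀-module, such that every element of S lies in ϖ^{-n}·S₀ for some n ≥ 0 (i.e. S = S₀[1/ϖ]) and S₀ is ϖ-adically complete; (ii) for any such S₀, the set S° = {y ∈ S : there exists N ≥ 0 with yⁿ ∈ ϖ^{-N}·S₀ for all n ≥ 0} of power-bounded elements of S equals the integral closure in S of the image of R₀, which in turn equals the integral closure in S of the image of the power-bounded subring R° of R. -/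
/-!
Let `R = A[1/ϖ]`. Since `ϖ` is a unit in `S`, an `A`-submodule of `S` and its multiple by `ϖ ^ N`
are isomorphic, which reduces everything to finiteness over the Noetherian ring `A`.

* Existence of `S₀`: after multiplication by powers of `ϖ`, finitely many `R`-module generators of
  `S` become integral over `A`. They generate an `A`-subalgebra that is finite as an `A`-module,
  hence `ϖ`-adically complete because `A` is Noetherian and complete (`isAdicComplete_of_finite`).
* Power-bounded implies integral (`isIntegral_of_mul_pow_mem`): if `ϖ ^ N * y ^ n` stays in a finite
  `A`-module, then `A[y]` embeds in that module by multiplication by `ϖ ^ N`, so it is finite.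
* Integral implies power-bounded (`exists_pow_mul_pow_mem_of_isIntegral`): `A[y]` is a finite
  `A`-module, so one power of `ϖ` carries all of it into `S₀`.

The case `S = R` shows that every element of `R°` is integral over `A`, so transitivity of
integrality identifies the integral closures in `S` of `A` and of `R°`.
-/

/-- A finite module over a Noetherian `I`-adically complete ring is `I`-adically complete. -/
theorem isAdicComplete_of_finite {A M : Type*} [CommRing A] [IsNoetherianRing A] (I : Ideal A)
    [IsAdicComplete I A] [AddCommGroup M] [Module A M] [Module.Finite A M] :
    IsAdicComplete I M := by
  have hH : IsHausdorff I M := .of_le_jacobson I M (IsAdicComplete.le_jacobson_bot I)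
  have hP : IsPrecomplete I M := by
    rw [← AdicCompletion.of_surjective_iff]
    intro x
    -- `AdicCompletion I A ⊗[A] M` surjects onto the completion of `M`, and its left factor is `A`.
    obtain ⟨t, rfl⟩ := AdicCompletion.ofTensorProduct_surjective_of_finite I M x
    induction t with
    | zero => exact ⟨0, by simp⟩
    | add s t hs ht =>
      obtain ⟨a, ha⟩ := hs
      obtain ⟨b, hb⟩ := ht
      exact ⟨a + b, by rw [map_add, map_add, ha, hb]⟩
    | tmul r m =>
      obtain ⟨a, rfl⟩ := (AdicCompletion.of_bijective I A).2 r
      refine ⟨a • m, ?_⟩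
      rw [AdicCompletion.ofTensorProduct_tmul, map_smul]
      ext n
      simp
      rfl
  exact { }

/-- If all `c * y ^ n`, with `c` a unit, lie in one finite module over a Noetherian ring, then `y`
is integral. -/
theorem isIntegral_of_mul_pow_mem {A S : Type*} [CommRing A] [IsNoetherianRing A] [CommRing S]
    [Algebra A S] {c : S} (hc : IsUnit c) {T : Submodule A S} (hT : T.FG) {y : S}
    (h : ∀ n : ℕ, c * y ^ n ∈ T) : IsIntegral A y := by
  have hle : (Algebra.adjoin A {y}).toSubmodule.map (LinearMap.mulLeft A c) ≤ T := by
    rintro _ ⟨z, hz, rfl⟩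
    obtain ⟨p, rfl⟩ : ∃ p : Polynomial A, Polynomial.aeval y p = z := by
      simpa [Algebra.adjoin_singleton_eq_range_aeval] using hz
    simp only [LinearMap.mulLeft_apply, Polynomial.aeval_eq_sum_range,
      Finset.mul_sum, mul_smul_comm]
    exact T.sum_mem fun i _ => T.smul_mem _ (h i)
  have : IsNoetherian A T := isNoetherian_of_fg_of_noetherian T hT
  exact .of_mem_of_fg _ (Submodule.fg_of_fg_map_injective _ hc.mul_right_injective
    (Submodule.FG.of_le_of_isNoetherian hle)) y (Algebra.self_mem_adjoin_singleton A y)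

/-- If `S = S₀[1/ϖ]` with `S₀` containing the image of `A`, then one power of `ϖ` carries a given
finite `A`-submodule of `S` into `S₀`. -/
theorem exists_pow_mul_mem_of_fg {A S : Type*} [CommRing A] [CommRing S]
    [Algebra A S] {ϖ : S} {S₀ : Subring S} (hϖ : ϖ ∈ S₀) (hA : (algebraMap A S).range ≤ S₀)
    (h : ∀ y : S, ∃ k : ℕ, ϖ ^ k * y ∈ S₀) {T : Submodule A S} (hT : T.FG) :
    ∃ N : ℕ, ∀ x ∈ T, ϖ ^ N * x ∈ S₀ := by
  have smul_mem (a : A) {x : S} (hx : x ∈ S₀) : a • x ∈ S₀ := by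
    rw [Algebra.smul_def]
    exact S₀.mul_mem (hA ⟨a, rfl⟩) hx
  induction T, hT using Submodule.fg_induction with
  | singleton x =>
    obtain ⟨k, hk⟩ := h x
    refine ⟨k, fun z hz => ?_⟩
    obtain ⟨a, rfl⟩ := Submodule.mem_span_singleton.1 hz
    rw [mul_smul_comm]
    exact smul_mem a hk
  | sup M₁ M₂ _ _ h₁ h₂ =>
    obtain ⟨k, hk⟩ := h₁
    obtain ⟨l, hl⟩ := h₂
    refine ⟨k + l, fun z hz => ?_⟩
    obtain ⟨u, hu, v, hv, rfl⟩ := Submodule.mem_sup.1 hz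
    have e : ϖ ^ (k + l) * (u + v) = ϖ ^ l * (ϖ ^ k * u) + ϖ ^ k * (ϖ ^ l * v) := by ring
    rw [e]
    exact S₀.add_mem (S₀.mul_mem (S₀.pow_mem hϖ l) (hk u hu))
      (S₀.mul_mem (S₀.pow_mem hϖ k) (hl v hv))

/-- Integral elements are power-bounded. -/
theorem exists_pow_mul_pow_mem_of_isIntegral {A S : Type*} [CommRing A] [CommRing S]
    [Algebra A S] {ϖ : S} {S₀ : Subring S} (hϖ : ϖ ∈ S₀) (hA : (algebraMap A S).range ≤ S₀)
    (h : ∀ y : S, ∃ k : ℕ, ϖ ^ k * y ∈ S₀) {y : S} (hy : IsIntegral A y) :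
    ∃ N : ℕ, ∀ n : ℕ, ϖ ^ N * y ^ n ∈ S₀ := by
  obtain ⟨N, hN⟩ := exists_pow_mul_mem_of_fg hϖ hA h hy.fg_adjoin_singleton
  exact ⟨N, fun n => hN _ (pow_mem (Algebra.self_mem_adjoin_singleton A y) n)⟩

theorem exists_pow_mul_mem_range {A : Type*} [CommRing A] (ϖ : A) (r : Localization.Away ϖ) :
    ∃ k : ℕ, algebraMap A (Localization.Away ϖ) ϖ ^ k * r ∈
      (algebraMap A (Localization.Away ϖ)).range := by
  obtain ⟨⟨a, _, k, rfl⟩, h⟩ := IsLocalization.surj (Submonoid.powers ϖ) r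
  refine ⟨k, a, ?_⟩
  rw [← h, mul_comm, map_pow]

/-- A finite `A[1/ϖ]`-algebra is `S₀[1/ϖ]` for some finite `A`-subalgebra `S₀`. -/
theorem exists_finite_subalgebra {A : Type*} [CommRing A] (ϖ : A)
    (S : Type*) [CommRing S] [Algebra (Localization.Away ϖ) S] [Algebra A S]
    [IsScalarTower A (Localization.Away ϖ) S] [Module.Finite (Localization.Away ϖ) S] :
    ∃ B : Subalgebra A S, B.toSubmodule.FG ∧
      ∀ y : S, ∃ k : ℕ, algebraMap A S ϖ ^ k * y ∈ B := by
  obtain ⟨s, hs⟩ := Module.Finite.fg_top (R := Localization.Away ϖ) (M := S)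
  have key (x : S) : ∃ k : ℕ, IsIntegral A (algebraMap A S ϖ ^ k * x) := by
    obtain ⟨⟨_, k, rfl⟩, hm⟩ := IsIntegral.exists_multiple_integral_of_isLocalization
      (Submonoid.powers ϖ) x (Algebra.IsIntegral.isIntegral (R := Localization.Away ϖ) x)
    refine ⟨k, ?_⟩
    simpa [Submonoid.smul_def, Algebra.smul_def] using hm
  choose k hk using key
  let B := Algebra.adjoin A ((fun x => algebraMap A S ϖ ^ k x * x) '' (s : Set S))
  have hϖB : algebraMap A S ϖ ∈ B := B.algebraMap_mem ϖ
  refine ⟨B, fg_adjoin_of_finite (s.finite_toSet.image _) ?_, fun y => ?_⟩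
  · rintro _ ⟨x, -, rfl⟩
    exact hk x
  have hy : y ∈ Submodule.span (Localization.Away ϖ) (s : Set S) := hs ▸ Submodule.mem_top
  induction hy using Submodule.span_induction with
  | mem x hx => exact ⟨k x, Algebra.subset_adjoin ⟨x, hx, rfl⟩⟩
  | zero => exact ⟨0, by simp⟩
  | add u v _ _ hu hv =>
    obtain ⟨a, ha⟩ := hu
    obtain ⟨b, hb⟩ := hv
    refine ⟨a + b, ?_⟩
    have e : algebraMap A S ϖ ^ (a + b) * (u + v) = algebraMap A S ϖ ^ b *
        (algebraMap A S ϖ ^ a * u) + algebraMap A S ϖ ^ a * (algebraMap A S ϖ ^ b * v) := by ring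
    rw [e]
    exact B.add_mem (B.mul_mem (B.pow_mem hϖB b) ha) (B.mul_mem (B.pow_mem hϖB a) hb)
  | smul r x _ hx =>
    obtain ⟨a, ha⟩ := hx
    obtain ⟨b, c, hc⟩ := exists_pow_mul_mem_range ϖ r
    refine ⟨a + b, ?_⟩
    have e : algebraMap A S ϖ ^ (a + b) * r • x =
        algebraMap A S c * (algebraMap A S ϖ ^ a * x) := by
      rw [Algebra.smul_def, IsScalarTower.algebraMap_apply A (Localization.Away ϖ) S c, hc,
        IsScalarTower.algebraMap_apply A (Localization.Away ϖ) S ϖ, map_mul, map_pow]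
      ring
    rw [e]
    exact B.mul_mem (B.algebraMap_mem c) ha

/-- **Statement 10**. Tate setup: `A` Noetherian, `ϖ ∈ A` a non-zero-divisor with `A`
`ϖ`-adically complete and separated, `R = A[1/ϖ]`.  Let `S` be a commutative `R`-algebra,
finitely generated as an `R`-module.  Then:
(i) there is a subring `S₀ ⊆ S` containing the image of `A`, finitely generated as an
`A`-module, with `S = S₀[1/ϖ]` and `S₀` `ϖ`-adically complete;
(ii) for any such `S₀`, the set `S°` of power-bounded elements (those `y` with
`ϖ^N · yⁿ ∈ S₀` for all `n`, for some `N`) equals the integral closure in `S` of the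
image of `A`, which equals the integral closure in `S` of the image of the
power-bounded subring `R°` of `R`. -/
theorem finite_algebra_powerBounded
    {A : Type*} [CommRing A] [IsNoetherianRing A]
    (ϖ : A) (hϖ : ϖ ∈ nonZeroDivisors A) [IsAdicComplete (Ideal.span {ϖ}) A]
    {S : Type*} [CommRing S] [Algebra (Localization.Away ϖ) S] [Algebra A S]
    [IsScalarTower A (Localization.Away ϖ) S] [Module.Finite (Localization.Away ϖ) S] :
    (∃ (S₀ : Subring S) (ϖ' : S₀),
      (ϖ' : S) = algebraMap A S ϖ ∧
      (algebraMap A S).range ≤ S₀ ∧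
      (∃ T : Submodule A S, T.FG ∧ (T : Set S) = (S₀ : Set S)) ∧
      (∀ y : S, ∃ k : ℕ, algebraMap A S ϖ ^ k * y ∈ S₀) ∧
      IsAdicComplete (Ideal.span {ϖ'}) S₀) ∧
    (∀ (S₀ : Subring S) (ϖ' : S₀),
      (ϖ' : S) = algebraMap A S ϖ →
      (algebraMap A S).range ≤ S₀ →
      (∃ T : Submodule A S, T.FG ∧ (T : Set S) = (S₀ : Set S)) →
      (∀ y : S, ∃ k : ℕ, algebraMap A S ϖ ^ k * y ∈ S₀) →
      IsAdicComplete (Ideal.span {ϖ'}) S₀ →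
      ({y : S | ∃ N : ℕ, ∀ n : ℕ, algebraMap A S ϖ ^ N * y ^ n ∈ S₀}
          = (integralClosure A S : Set S) ∧
        ∀ R' : Subring (Localization.Away ϖ),
          ((R' : Set (Localization.Away ϖ)) = {x : Localization.Away ϖ | ∃ N : ℕ, ∀ n : ℕ,
            algebraMap A (Localization.Away ϖ) ϖ ^ N * x ^ n
              ∈ (algebraMap A (Localization.Away ϖ)).range}) →
          {y : S | ∃ N : ℕ, ∀ n : ℕ, algebraMap A S ϖ ^ N * y ^ n ∈ S₀}
            = {y : S | ∃ q : Polynomial S, q.Monic ∧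
                (∀ i : ℕ, q.coeff i ∈ R'.map (algebraMap (Localization.Away ϖ) S)) ∧
                Polynomial.eval y q = 0})) := by
  have hunitR : IsUnit (algebraMap A (Localization.Away ϖ) ϖ) :=
    IsLocalization.Away.algebraMap_isUnit ϖ
  have hunit : IsUnit (algebraMap A S ϖ) := by
    rw [IsScalarTower.algebraMap_apply A (Localization.Away ϖ) S]
    exact hunitR.map _
  constructor
  · obtain ⟨B, hfg, hB⟩ := exists_finite_subalgebra ϖ S
    refine ⟨B.toSubring, algebraMap A B ϖ, rfl, ?_, ⟨B.toSubmodule, hfg, rfl⟩, hB, ?_⟩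
    · rintro _ ⟨a, rfl⟩
      exact B.algebraMap_mem a
    · have : Module.Finite A B := .of_fg hfg
      have h1 : IsAdicComplete (Ideal.span {ϖ}) B := isAdicComplete_of_finite _
      rw [← IsAdicComplete.map_algebraMap_iff (S := B), Ideal.map_span, Set.image_singleton] at h1
      exact h1
  · intro S₀ ϖ' hϖ' hA hT hS₀ _
    obtain ⟨T, hTfg, hTS⟩ := hT
    have hint : {y : S | ∃ N : ℕ, ∀ n : ℕ, algebraMap A S ϖ ^ N * y ^ n ∈ S₀}
        = (integralClosure A S : Set S) := by
      ext y
      constructor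
      · rintro ⟨N, hN⟩
        refine isIntegral_of_mul_pow_mem (hunit.pow N) hTfg fun n => ?_
        rw [← SetLike.mem_coe, hTS]
        exact hN n
      · exact fun hy => exists_pow_mul_pow_mem_of_isIntegral (hA ⟨ϖ, rfl⟩) hA hS₀ hy
    refine ⟨hint, fun R' hR' => hint.trans ?_⟩
    -- The case `S = R`, `S₀ = A`: membership in `R°` is integrality over `A`.
    have memR' (x : Localization.Away ϖ) : x ∈ R' ↔ IsIntegral A x := by
      rw [← SetLike.mem_coe, hR']
      constructor
      · rintro ⟨N, hN⟩
        have hfg : (LinearMap.range (Algebra.linearMap A (Localization.Away ϖ))).FG := by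
          rw [LinearMap.range_eq_map]
          exact (Module.Finite.fg_top (R := A) (M := A)).map _
        exact isIntegral_of_mul_pow_mem (hunitR.pow N) hfg fun n => hN n
      · exact fun hx => exists_pow_mul_pow_mem_of_isIntegral
          (RingHom.mem_range_self _ ϖ) le_rfl (exists_pow_mul_mem_range ϖ) hx
    ext y
    constructor
    · rintro ⟨p, hp, hpy⟩
      refine ⟨p.map (algebraMap A S), hp.map _, fun i => ?_, by rwa [Polynomial.eval_map]⟩
      refine ⟨algebraMap A _ (p.coeff i), (memR' _).2 isIntegral_algebraMap, ?_⟩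
      rw [Polynomial.coeff_map, ← IsScalarTower.algebraMap_apply]
    · rintro ⟨q, hq, hqR', hqy⟩
      have hcoeff (i : ℕ) : q.coeff i ∈ Set.range (algebraMap (integralClosure A S) S) := by
        obtain ⟨x, hx, hxq⟩ := hqR' i
        exact ⟨⟨q.coeff i, hxq ▸ ((memR' x).1 hx).algebraMap⟩, rfl⟩
      obtain ⟨p, rfl, -, hp⟩ := Polynomial.lifts_and_natDegree_eq_and_monic
        ((Polynomial.lifts_iff_coeff_lifts q).2 hcoeff) hq
      exact isIntegral_trans (A := integralClosure A S) y
        ⟨p, hp, by rwa [Polynomial.eval_map] at hqy⟩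
end

section
/- Let R be a complete Tate ring with a ring of definition formally of finite type over Z_p. Then for every maximal ideal 𝔪 of R, the residue field R/𝔪 is a local field: there exists a subring O of R/𝔪 that is a complete discrete valuation ring with finite residue field and whose fraction field is R/𝔪. -/
/-!
Write `K = R/𝔪`, let `ψ : A_{m,n} → K` be the canonical map and `B ⊆ K` its image. The ring
`A_{m,n}` is Noetherian, being a quotient of a power series ring over the Noetherian ring
`ℤ_p[[T]][X]` (`isNoetherianRing_of_isAdicComplete`), so `B` is a Noetherian domain, complete for
the image `J` of `(p, T₁, …, T_m)`. Some power `g ≠ 0` of the image of `ϖ` lies in `J`, and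
`K = B[1/g]`.

Since `K = B[1/g]` is a field, every nonzero prime of `B` contains `g`. By Krull's
Hauptidealsatz and prime avoidance this forces `B/g` to have dimension zero
(`krullDimLE_zero_quotient`). Hence `B/g` is Artinian, and its residue fields are finite because
they are fields of finite type over `𝔽_p` (`finite_quotient_of_stdIdeal_le`). So `B/g` is finite,
`J` is nilpotent in it, and `B` is `g`-adically complete. This is carried out in
`exists_subring_of_isAdicComplete`.

The ring `O` is the integral closure of `B` in `K`. For every intermediate ring `M` that is finite
over `B`, a comparison of indices gives `[M : gM] = [B : gB]`; therefore `O/gO` is finite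
(`finite_integralClosure_quotient`) without any excellence hypothesis. As `O` is `g`-adically
separated, topological Nakayama makes it a finite `B`-module, and it is `g`-adically complete
(`isAdicComplete_integralClosure`). A domain complete for an ideal with finite quotient is local, by
lifting idempotents (`isLocalRing_of_finite_quotient`). Every nonzero ideal of `O` contains a power
of `g`, so all proper quotients are finite; thus `O` is a local Dedekind domain and not a field,
i.e. a discrete valuation ring.
-/

/-- The ideal `I = (p, T₁, …, T_m)` of the polynomial ring
`ℤ_p[[T₁,…,T_m]][X₁,…,X_n]`. -/
noncomputable abbrev stdIdeal (p m n : ℕ) [Fact p.Prime] :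
    Ideal (MvPolynomial (Fin n) (MvPowerSeries (Fin m) ℤ_[p])) :=
  Ideal.span
    (insert ((p : ℕ) : MvPolynomial (Fin n) (MvPowerSeries (Fin m) ℤ_[p]))
      (Set.range fun i : Fin m =>
        (MvPolynomial.C (MvPowerSeries.X i) : MvPolynomial (Fin n) (MvPowerSeries (Fin m) ℤ_[p]))))

/-- `A_{m,n}`: the `I`-adic completion of `ℤ_p[[T₁,…,T_m]][X₁,…,X_n]`, where
`I = (p, T₁, …, T_m)`. -/
noncomputable abbrev Amn (p m n : ℕ) [Fact p.Prime] :=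
  AdicCompletion (stdIdeal p m n) (MvPolynomial (Fin n) (MvPowerSeries (Fin m) ℤ_[p]))

/-- The image in `A_{m,n}/𝔞` of the ideal of definition `I = (p, T₁, …, T_m)`. -/
noncomputable abbrev defIdeal (p m n : ℕ) [Fact p.Prime] (𝔞 : Ideal (Amn p m n)) :
    Ideal (Amn p m n ⧸ 𝔞) :=
  Ideal.map ((Ideal.Quotient.mk 𝔞).comp
      (algebraMap (MvPolynomial (Fin n) (MvPowerSeries (Fin m) ℤ_[p])) (Amn p m n)))
    (stdIdeal p m n)

section

open Ideal

/-! ### Precompleteness -/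

theorem isPrecomplete_of_surjective {R M N : Type*} [CommRing R] (I : Ideal R)
    [AddCommGroup M] [Module R M] [AddCommGroup N] [Module R N] [IsPrecomplete I M]
    (f : M →ₗ[R] N) (hf : Function.Surjective f) : IsPrecomplete I N := by
  rw [← AdicCompletion.of_surjective_iff]
  intro y
  obtain ⟨x, rfl⟩ := AdicCompletion.map_surjective I hf y
  obtain ⟨x, rfl⟩ := AdicCompletion.of_surjective I M x
  exact ⟨f x, (AdicCompletion.map_of I f x).symm⟩

theorem isPrecomplete_pi {R : Type*} [CommRing R] (I : Ideal R) [IsPrecomplete I R] (n : ℕ) :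
    IsPrecomplete I (Fin n → R) := by
  rw [← AdicCompletion.of_surjective_iff]
  intro y
  choose x hx using fun i => AdicCompletion.of_surjective I R (AdicCompletion.piEquivFin I n y i)
  refine ⟨x, (AdicCompletion.piEquivFin I n).injective ?_⟩
  ext i : 1
  rw [← hx i]
  simp [AdicCompletion.piEquivFin_apply]
  rfl

/-- Precompleteness depends only on the adic topology: it passes between two ideals that each
contain a power of the other. -/
theorem isPrecomplete_of_pow_le {R : Type*} [CommRing R] {I J : Ideal R} [IsPrecomplete J R]
    {k s : ℕ} (h1 : I ^ k ≤ J) (h2 : J ^ s ≤ I) : IsPrecomplete I R := by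
  refine ⟨fun f hf => ?_⟩
  simp only [smul_eq_mul, Ideal.mul_top, SModEq.sub_mem] at hf ⊢
  obtain ⟨L, hL⟩ := IsPrecomplete.prec (I := J) inferInstance (f := fun i => f (k * i)) (by
    intro m n hmn
    simp only [smul_eq_mul, Ideal.mul_top, SModEq.sub_mem]
    have := hf (Nat.mul_le_mul_left k hmn)
    rw [pow_mul] at this
    exact Ideal.pow_right_mono h1 m this)
  refine ⟨L, fun n => ?_⟩
  have h := hL (s * n + n)
  simp only [smul_eq_mul, Ideal.mul_top, SModEq.sub_mem] at h
  by_cases hk : k = 0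
  · subst hk
    have hJ : J = ⊤ := by simpa using h1
    subst hJ
    simp only [Ideal.top_pow, top_le_iff] at h2
    rw [h2, Ideal.top_pow]
    exact Submodule.mem_top
  have a1 : f n - f (k * (s * n + n)) ∈ I ^ n :=
    hf ((Nat.le_add_left n (s * n)).trans (Nat.le_mul_of_pos_left _ (Nat.pos_of_ne_zero hk)))
  have a2 : f (k * (s * n + n)) - L ∈ I ^ n := by
    refine Ideal.pow_right_mono h2 n ?_
    rw [← pow_mul]
    exact Ideal.pow_le_pow_right (by omega) h
  simpa using add_mem a1 a2

/-! ### Idempotents and local rings -/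

theorem exists_pow_isIdempotentElem {M : Type*} [Monoid M] [Finite M] (x : M) :
    ∃ n, 0 < n ∧ IsIdempotentElem (x ^ n) := by
  obtain ⟨a, b, hab, h⟩ := Finite.exists_ne_map_eq_of_infinite (fun n : ℕ => x ^ n)
  wlog hlt : a < b generalizing a b
  · exact this b a hab.symm h.symm (by omega)
  obtain ⟨d, rfl⟩ := Nat.exists_eq_add_of_lt hlt
  change x ^ a = x ^ (a + d + 1) at h
  -- From the exponent `a` on, the powers of `x` are periodic with period `d + 1`, so a multiple
  -- of the period that is at least `a` is an exponent giving an idempotent.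
  have key : ∀ j, x ^ (a + j * (d + 1)) = x ^ a := by
    intro j
    induction j with
    | zero => simp
    | succ j ih =>
      rw [show a + (j + 1) * (d + 1) = (a + d + 1) + j * (d + 1) by ring, pow_add, ← h, ← pow_add,
        ih]
  refine ⟨(a + 1) * (d + 1), by positivity, ?_⟩
  have : (a + 1) * (d + 1) + (a + 1) * (d + 1)
      = (a + (a+1) * (d + 1)) + ((a + 1) * (d + 1) - a) := by
    have : a ≤ (a + 1) * (d + 1) := by nlinarith
    omega
  rw [IsIdempotentElem, ← pow_add, this, pow_add, key, ← pow_add]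
  congr 1
  have : a ≤ (a + 1) * (d + 1) := by nlinarith
  omega

/-- Idempotents lift along the quotient by an ideal of definition. This is Hensel's lemma for
`X ^ 2 - X`, whose derivative `2 * X - 1` squares to `1` at an idempotent. -/
theorem exists_isIdempotentElem_lift {R : Type*} [CommRing R] (I : Ideal R) [IsAdicComplete I R]
    (x : R) (hx : x * x - x ∈ I) : ∃ e, IsIdempotentElem e ∧ e - x ∈ I := by
  obtain ⟨e, he, hex⟩ := HenselianRing.is_henselian (I := I)
    (Polynomial.X ^ 2 - Polynomial.X : Polynomial R)
    (Polynomial.monic_X_pow_sub (n := 2) (Polynomial.degree_X_le.trans_lt (by norm_num))) x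
    (by simpa [sq] using hx) (by
      refine IsUnit.of_mul_eq_one (b := Ideal.Quotient.mk I (2 * x - 1)) ?_
      rw [← map_mul, ← map_one (Ideal.Quotient.mk I), Ideal.Quotient.eq]
      have h := I.mul_mem_left 4 hx
      have h2 : Polynomial.eval x (Polynomial.derivative (Polynomial.X ^ 2 - Polynomial.X)) =
        2 * x - 1 := by
        simp
        ring
      rw [h2]
      convert h using 1
      ring)
  refine ⟨e, ?_, hex⟩
  have : e ^ 2 - e = 0 := by simpa [Polynomial.IsRoot] using he
  rw [IsIdempotentElem]
  linear_combination this

/-- Given `x`, some power of `x` is idempotent modulo `I`; it lifts to an idempotent of the domain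
`R`, that is, to `0` or `1`. Accordingly `1 - x` or `x` is a unit, as `I` lies in the Jacobson
radical. -/
theorem isLocalRing_of_finite_quotient {R : Type*} [CommRing R] [IsDomain R] (I : Ideal R)
    [IsAdicComplete I R] [Finite (R ⧸ I)] : IsLocalRing R := by
  have hjac := IsAdicComplete.le_jacobson_bot I
  refine IsLocalRing.of_isUnit_or_isUnit_one_sub_self fun x => ?_
  obtain ⟨n, hn, hx⟩ := exists_pow_isIdempotentElem (Ideal.Quotient.mk I x)
  have hmem : x ^ n * x ^ n - x ^ n ∈ I := by
    rw [← Ideal.Quotient.eq]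
    simpa [IsIdempotentElem] using hx
  obtain ⟨e, he, hex⟩ := exists_isIdempotentElem_lift I (x ^ n) hmem
  have he' : e * (e - 1) = 0 := by linear_combination he.eq
  rcases mul_eq_zero.mp he' with h0 | h1
  · right
    rw [h0] at hex
    have hu : IsUnit (1 - x ^ n) := by
      have := hjac (neg_mem hex)
      simpa [add_comm, sub_eq_add_neg] using (Ideal.mem_jacobson_bot.mp this (-1))
    exact isUnit_of_dvd_unit (by simpa using sub_dvd_pow_sub_pow 1 x n) hu
  · left
    have h1 : e = 1 := by linear_combination h1
    rw [h1] at hex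
    have hu : IsUnit (x ^ n) := by
      have := (Ideal.mem_jacobson_bot.mp (hjac hex) (-1))
      convert this using 1
      ring
    exact (isUnit_pow_iff hn.ne').mp hu

/-! ### The integral closure of `B` in `K = B[1/g]` -/

section
variable {B K : Type*} [CommRing B] [Field K] [Algebra B K]

/-- For a `B`-submodule `M` of `K` with `B ⊆ M ⊆ g⁻ᴺ B`, the index `[M : gM]` equals `[B : gB]`.
Both `[M : gM] * [gM : gB]` and `[M : B] * [B : gB]` compute `[M : gB]`, and
`[gM : gB] = [M : B]` is finite. -/
theorem relIndex_map_mul (hinj : Function.Injective (algebraMap B K)) {g : B} (hg : g ≠ 0)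
    [Finite (B ⧸ span {g})] (M : Submodule B K) (hM : 1 ∈ M) {N : ℕ}
    (hN : ∀ x ∈ M, ∃ b, algebraMap B K g ^ N * x = algebraMap B K b) :
    (M.toAddSubgroup.map (AddMonoidHom.mulLeft (algebraMap B K g))).relIndex M.toAddSubgroup =
      Nat.card (B ⧸ span {g}) := by
  have hG : algebraMap B K g ≠ 0 := by simpa using hinj.ne hg
  set G := algebraMap B K g with hGdef
  set β : AddSubgroup K := (algebraMap B K).toAddMonoidHom.range with hβ
  have hβM : β ≤ M.toAddSubgroup := by
    rintro _ ⟨b, rfl⟩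
    simpa [Algebra.smul_def] using M.smul_mem b hM
  have hinjG : ∀ n : ℕ, Function.Injective (AddMonoidHom.mulLeft (G ^ n)) := fun n =>
    mul_right_injective₀ (pow_ne_zero n hG)
  have hidx : ∀ n : ℕ, (β.map (AddMonoidHom.mulLeft (G ^ n))).relIndex β =
      Nat.card (B ⧸ span {g} ^ n) := by
    intro n
    have e1 : β.map (AddMonoidHom.mulLeft (G ^ n)) =
        (Submodule.toAddSubgroup (span {g} ^ n : Ideal B)).map (algebraMap B K).toAddMonoidHom := by
      ext x
      rw [span_singleton_pow]
      constructor
      · rintro ⟨_, ⟨b, rfl⟩, rfl⟩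
        exact ⟨g ^ n * b, mem_span_singleton.mpr (Dvd.intro b rfl), by simp [hGdef]⟩
      · rintro ⟨y, hy, rfl⟩
        obtain ⟨b, rfl⟩ := mem_span_singleton.mp hy
        exact ⟨_, ⟨b, rfl⟩, by simp [hGdef]⟩
    rw [e1, hβ, AddMonoidHom.range_eq_map, AddSubgroup.relIndex_map_map_of_injective _ _ hinj,
      AddSubgroup.relIndex_top_right]
    rfl
  have hfin : ∀ n : ℕ, (β.map (AddMonoidHom.mulLeft (G ^ n))).relIndex β ≠ 0 := by
    intro n
    have := finite_quotient_pow (I := span {g}) (Submodule.fg_span_singleton g) n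
    rw [hidx]
    exact Nat.card_pos.ne'
  -- `[M : B]` is finite because multiplication by `g ^ N` carries `M` into `B`.
  have hMβ : β.relIndex M.toAddSubgroup ≠ 0 := by
    rw [← AddSubgroup.relIndex_map_map_of_injective _ _ (hinjG N)]
    intro h0
    refine hfin N (AddSubgroup.relIndex_eq_zero_of_le_right ?_ h0)
    rintro _ ⟨x, hx, rfl⟩
    obtain ⟨b, hb⟩ := hN x hx
    exact ⟨b, hb.symm⟩
  have hGM : M.toAddSubgroup.map (AddMonoidHom.mulLeft G) ≤ M.toAddSubgroup := by
    rintro _ ⟨x, hx, rfl⟩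
    simpa [Algebra.smul_def] using M.smul_mem g hx
  have hGβ : β.map (AddMonoidHom.mulLeft G) ≤ β := by
    rintro _ ⟨_, ⟨b, rfl⟩, rfl⟩
    exact ⟨g * b, by simp [hGdef]⟩
  have i1 := AddSubgroup.relIndex_mul_relIndex _ _ _ hGβ hβM
  have i2 := AddSubgroup.relIndex_mul_relIndex _ _ _
    (AddSubgroup.map_mono (f := AddMonoidHom.mulLeft G) hβM) hGM
  have hinj1 : Function.Injective (AddMonoidHom.mulLeft G) := by simpa using hinjG 1
  rw [AddSubgroup.relIndex_map_map_of_injective _ _ hinj1] at i2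
  have h1 := hidx 1
  simp only [pow_one] at h1
  rw [h1, ← i2, mul_comm] at i1
  exact (Nat.eq_of_mul_eq_mul_left (Nat.pos_of_ne_zero hMβ) i1).symm

theorem exists_pow_mul_mem_of_fg_s10 {g : B}
    (hK : ∀ x : K, ∃ N b, algebraMap B K g ^ N * x = algebraMap B K b)
    (M : Submodule B K) (hM : M.FG) :
    ∃ N : ℕ, ∀ x ∈ M, ∃ b, algebraMap B K g ^ N * x = algebraMap B K b := by
  induction M, hM using Submodule.fg_induction with
  | singleton x =>
    obtain ⟨N, b, h⟩ := hK x
    refine ⟨N, fun y hy => ?_⟩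
    obtain ⟨c, rfl⟩ := Submodule.mem_span_singleton.mp hy
    exact ⟨c * b, by rw [Algebra.smul_def, mul_left_comm, h, map_mul]⟩
  | sup M₁ M₂ _ _ h₁ h₂ =>
    obtain ⟨N₁, h₁⟩ := h₁
    obtain ⟨N₂, h₂⟩ := h₂
    refine ⟨N₁ + N₂, fun y hy => ?_⟩
    obtain ⟨y₁, hy₁, y₂, hy₂, rfl⟩ := Submodule.mem_sup.mp hy
    obtain ⟨b₁, hb₁⟩ := h₁ y₁ hy₁
    obtain ⟨b₂, hb₂⟩ := h₂ y₂ hy₂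
    refine ⟨g ^ N₂ * b₁ + g ^ N₁ * b₂, ?_⟩
    simp only [map_add, map_mul, map_pow, ← hb₁, ← hb₂]
    ring

/-- If `O = integralClosure B K` had more than `[B : gB]` classes modulo `g`, representatives of them
would generate a finite `B`-subalgebra `M` of `O`, in which two would agree modulo `gM` because
`[M : gM] = [B : gB]`. -/
theorem finite_integralClosure_quotient (hinj : Function.Injective (algebraMap B K))
    {g : B} (hg : g ≠ 0)
    (hK : ∀ x : K, ∃ N b, algebraMap B K g ^ N * x = algebraMap B K b)
    [Finite (B ⧸ span {g})] :
    Finite (integralClosure B K ⧸ span {algebraMap B (integralClosure B K) g}) := by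
  by_contra hnf
  rw [not_finite_iff_infinite] at hnf
  obtain ⟨s, hs⟩ := Infinite.exists_subset_card_eq
    (integralClosure B K ⧸ span {algebraMap B (integralClosure B K) g})
    (Nat.card (B ⧸ span {g}) + 1)
  let r : integralClosure B K ⧸ span {algebraMap B (integralClosure B K) g} → K :=
    fun q => (Quotient.out q : integralClosure B K)
  let M := Algebra.adjoin B (r '' s)
  have hMint : M ≤ integralClosure B K := by
    refine Algebra.adjoin_le ?_
    rintro _ ⟨q, -, rfl⟩
    exact (Quotient.out q : integralClosure B K).2
  obtain ⟨N, hN⟩ := exists_pow_mul_mem_of_fg_s10 hK M.toSubmodule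
    (fg_adjoin_of_finite (s.finite_toSet.image r) (by
      rintro _ ⟨q, -, rfl⟩
      exact (Quotient.out q : integralClosure B K).2))
  have hidx := relIndex_map_mul hinj hg M.toSubmodule M.one_mem hN
  set M' := M.toSubmodule.toAddSubgroup with hM'
  set H := (M'.map (AddMonoidHom.mulLeft (algebraMap B K g))).addSubgroupOf M' with hH
  have hcard : Nat.card (M' ⧸ H) = Nat.card (B ⧸ span {g}) := hidx
  have : Finite (M' ⧸ H) := Nat.finite_of_card_ne_zero (by
    rw [hcard]; exact Nat.card_pos.ne')
  have := Fintype.ofFinite (M' ⧸ H)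
  have hmem : ∀ q : s, r q ∈ M' := fun q => Algebra.subset_adjoin ⟨q, q.2, rfl⟩
  obtain ⟨a, b, hab, h⟩ := Fintype.exists_ne_map_eq_of_card_lt
    (fun q : s => (QuotientAddGroup.mk ⟨r q, hmem q⟩ : M' ⧸ H)) (by
      rw [← Nat.card_eq_fintype_card, hcard, Fintype.card_coe, hs]
      exact Nat.lt_succ_self _)
  rw [QuotientAddGroup.eq] at h
  obtain ⟨y, hy, hyy⟩ := h
  apply hab
  apply Subtype.ext
  rw [← Quotient.out_eq a.1, ← Quotient.out_eq b.1]
  refine (Ideal.Quotient.eq.mpr ?_).symm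
  refine mem_span_singleton.mpr ⟨⟨y, hMint hy⟩, Subtype.ext ?_⟩
  have hyy' : algebraMap B K g * y = - r a + r b := hyy
  change r b - r a = algebraMap B K g * y
  rw [hyy']; ring

/-- If `x ≠ 0` were divisible in `O` by every power of `g`, then, as `x⁻¹ = b / gᴺ` with `b ∈ B`,
the element `g` would be a unit in `O`, and so in `B` by integrality. -/
theorem isHausdorff_integralClosure [IsDomain B] (hinj : Function.Injective (algebraMap B K))
    {g : B} (hg : g ≠ 0)
    (hK : ∀ x : K, ∃ N b, algebraMap B K g ^ N * x = algebraMap B K b)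
    (hu : ¬ IsUnit g) :
    IsHausdorff (span {algebraMap B (integralClosure B K) g}) (integralClosure B K) := by
  have hG : algebraMap B K g ≠ 0 := by simpa using hinj.ne hg
  refine ⟨fun x hx => ?_⟩
  by_contra hx0
  have hx0' : (x : K) ≠ 0 := fun h => hx0 (Subtype.ext h)
  obtain ⟨N, b, hb⟩ := hK (x : K)⁻¹
  have hx' := hx (N + 1)
  rw [SModEq.zero, span_singleton_pow, smul_eq_mul, Ideal.mul_top, mem_span_singleton] at hx'
  obtain ⟨y, rfl⟩ := hx'
  have hinj' : Function.Injective (algebraMap B (integralClosure B K)) := fun a b h =>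
    hinj (congrArg (algebraMap (integralClosure B K) K) h)
  have : FaithfulSMul B (integralClosure B K) :=
    (faithfulSMul_iff_algebraMap_injective _ _).mpr hinj'
  apply hu
  refine IsUnit.of_map (algebraMap B (integralClosure B K)) _ ?_
  refine IsUnit.of_mul_eq_one (b := algebraMap B (integralClosure B K) b * y) (Subtype.ext ?_)
  change algebraMap B K g * (algebraMap B K b * y) = 1
  rw [← hb]
  have : (((algebraMap B (integralClosure B K) g ^ (N + 1) * y : integralClosure B K)) : K) =
    algebraMap B K g ^ (N + 1) * y := rfl
  rw [this] at hx0' ⊢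
  have hy : (y : K) ≠ 0 := right_ne_zero_of_mul hx0'
  field_simp
  ring

/-- Representatives of the finite ring `O/gO` generate `O` as a `B`-module, because `B` is
`g`-adically complete and `O` is `g`-adically separated; hence `O` inherits completeness from a
finite free `B`-module. -/
theorem isAdicComplete_integralClosure [IsDomain B] (hinj : Function.Injective (algebraMap B K))
    {g : B} (hg : g ≠ 0)
    (hK : ∀ x : K, ∃ N b, algebraMap B K g ^ N * x = algebraMap B K b)
    (hu : ¬ IsUnit g) [Finite (B ⧸ span {g})] [IsAdicComplete (span {g}) B] :
    IsAdicComplete (span {algebraMap B (integralClosure B K) g}) (integralClosure B K) := by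
  have hfin := finite_integralClosure_quotient hinj hg hK
  have hH := isHausdorff_integralClosure hinj hg hK hu
  have hmap : span {algebraMap B (integralClosure B K) g} =
    (span {g}).map (algebraMap B (integralClosure B K)) := by
      rw [map_span, Set.image_singleton]
  have hH' : IsHausdorff (span {g}) (integralClosure B K) := by
    rw [hmap] at hH
    exact (IsHausdorff.map_algebraMap_iff (S := integralClosure B K)).mp hH
  let n := Nat.card (integralClosure B K ⧸ span {algebraMap B (integralClosure B K) g})
  let e := (Finite.equivFin
    (integralClosure B K ⧸ span {algebraMap B (integralClosure B K) g})).symm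
  let f : (Fin n → B) →ₗ[B] integralClosure B K :=
    Fintype.linearCombination B fun i => Quotient.out (e i)
  have hP := isPrecomplete_pi (span {g}) n
  have hf : Function.Surjective f := by
    refine surjective_of_mkQ_comp_surjective (I := span {g}) fun y => ?_
    obtain ⟨y, rfl⟩ := Submodule.mkQ_surjective _ y
    obtain ⟨i, hi⟩ := e.surjective (Ideal.Quotient.mk _ y)
    refine ⟨Pi.single i 1, ?_⟩
    have h1 : f (Pi.single i 1) = Quotient.out (e i) := by
      simp [f, Fintype.linearCombination_apply_single]
    rw [LinearMap.comp_apply, h1, Submodule.mkQ_apply, Submodule.mkQ_apply,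
      Submodule.Quotient.eq]
    have h2 : Ideal.Quotient.mk _ (Quotient.out (e i)) = Ideal.Quotient.mk _ y :=
      (Ideal.Quotient.mk_out (e i)).trans hi
    rw [Ideal.Quotient.eq, mem_span_singleton] at h2
    obtain ⟨z, hz⟩ := h2
    rw [hz, ← Algebra.smul_def]
    exact Submodule.smul_mem_smul (mem_span_singleton_self g) trivial
  have hP' := isPrecomplete_of_surjective (span {g}) f hf
  rw [hmap] at hH ⊢
  have := (IsPrecomplete.map_algebraMap_iff (S := integralClosure B K)).mpr hP'
  exact {}
/-! ### The discrete valuation ring -/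

theorem isDiscreteValuationRing_integralClosure [IsDomain B]
    (hinj : Function.Injective (algebraMap B K))
    {g : B} (hg : g ≠ 0)
    (hK : ∀ x : K, ∃ N b, algebraMap B K g ^ N * x = algebraMap B K b)
    (hu : ¬ IsUnit g) [Finite (B ⧸ span {g})] [IsAdicComplete (span {g}) B] :
    IsDiscreteValuationRing (integralClosure B K) := by
  have hG : algebraMap B K g ≠ 0 := by simpa using hinj.ne hg
  have hfin := finite_integralClosure_quotient hinj hg hK
  have hcomp := isAdicComplete_integralClosure hinj hg hK hu
  set g' := algebraMap B (integralClosure B K) g with hg'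
  have hdvd : ∀ x : integralClosure B K, x ≠ 0 → ∃ N, x ∣ g' ^ N := by
    intro x hx
    have hx' : (x : K) ≠ 0 := fun h => hx (Subtype.ext h)
    obtain ⟨N, b, hb⟩ := hK (x : K)⁻¹
    refine ⟨N, algebraMap B _ b, Subtype.ext ?_⟩
    change algebraMap B K g ^ N = x * algebraMap B K b
    rw [← hb]
    field_simp
  have hq : Ring.HasFiniteQuotients (integralClosure B K) := by
    refine ⟨fun {I} hI => ?_⟩
    obtain ⟨x, hxI, hx⟩ := Submodule.exists_mem_ne_zero_of_ne_bot hI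
    obtain ⟨N, hN⟩ := hdvd x hx
    have := finite_quotient_pow (I := span {g'}) (Submodule.fg_span_singleton g') N
    refine Finite.of_surjective _ (Ideal.Quotient.factor_surjective (S := span {g'} ^ N) (T := I) ?_)
    rw [span_singleton_pow, span_singleton_le_iff_mem]
    exact I.mem_of_dvd hN hxI
  have hloc := isLocalRing_of_finite_quotient (span {g'})
  have hfrac : IsFractionRing B K := by
    have : FaithfulSMul B K := (faithfulSMul_iff_algebraMap_injective _ _).mpr hinj
    refine IsFractionRing.of_field B K fun x => ?_
    obtain ⟨N, b, hb⟩ := hK x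
    refine ⟨b, g ^ N, ?_⟩
    rw [← hb, map_pow]
    field_simp
  have hic := integralClosure.isIntegrallyClosedOfFiniteExtension (R := B) (L := K) K
  have hnf : ¬ IsField (integralClosure B K) := by
    intro hF
    apply hu
    have hinj' : Function.Injective (algebraMap B (integralClosure B K)) := fun a b h =>
      hinj (congrArg (algebraMap (integralClosure B K) K) h)
    have : FaithfulSMul B (integralClosure B K) :=
      (faithfulSMul_iff_algebraMap_injective _ _).mpr hinj'
    have hg0 : g' ≠ 0 := fun h => hg (hinj' (by rw [← hg', h, map_zero]))
    obtain ⟨b, hb⟩ := hF.mul_inv_cancel hg0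
    exact IsUnit.of_map (algebraMap B (integralClosure B K)) _ (IsUnit.of_mul_eq_one b hb)
  have hded : IsDedekindDomain (integralClosure B K) := {}
  exact ((IsDiscreteValuationRing.TFAE _ hnf).out 2 0).mp hded

/-- The elementary description of the local field structure on `K`, with `O` the integral closure
of `B` in `K` and `π` any uniformizer of `O`. -/
theorem exists_subring_of_abstract [IsDomain B]
    (hinj : Function.Injective (algebraMap B K))
    {g : B} (hg : g ≠ 0)
    (hK : ∀ x : K, ∃ N b, algebraMap B K g ^ N * x = algebraMap B K b)
    (hu : ¬ IsUnit g) [Finite (B ⧸ span {g})] [IsAdicComplete (span {g}) B] :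
    ∃ (O : Subring K) (π : K),
      π ∈ O ∧ π ≠ 0 ∧ (¬ ∃ v ∈ O, π * v = 1) ∧
      (∀ x ∈ O, x ≠ 0 → ∃ (k : ℕ), ∃ u ∈ O, (∃ v ∈ O, u * v = 1) ∧ x = u * π ^ k) ∧
      (∀ x : K, ∃ a ∈ O, ∃ b ∈ O, b ≠ 0 ∧ b * x = a) ∧
      (∃ SF : Finset K, ∀ x ∈ O, ∃ y ∈ SF, ∃ z ∈ O, x - y = π * z) ∧
      (∀ u : ℕ → K, (∀ k, u k ∈ O) →
        (∀ k, ∃ z ∈ O, u (k + 1) - u k = π ^ k * z) →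
        ∃ x ∈ O, ∀ k, ∃ z ∈ O, x - u k = π ^ k * z) := by
  classical
  have hG : algebraMap B K g ≠ 0 := by simpa using hinj.ne hg
  have hfin := finite_integralClosure_quotient hinj hg hK
  have hcomp := isAdicComplete_integralClosure hinj hg hK hu
  have hdvr := isDiscreteValuationRing_integralClosure hinj hg hK hu
  have hg0 : algebraMap B (integralClosure B K) g ≠ 0 := fun h =>
    hG (congrArg (algebraMap (integralClosure B K) K) h)
  obtain ⟨π, hπ⟩ := IsDiscreteValuationRing.exists_irreducible (integralClosure B K)
  obtain ⟨e, w, hw⟩ := IsDiscreteValuationRing.eq_unit_mul_pow_irreducible hg0 hπ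
  have hspan : span {algebraMap B (integralClosure B K) g} = span {π} ^ e := by
    rw [hw, span_singleton_pow, span_singleton_eq_span_singleton]
    exact (associated_unit_mul_left _ _ w.isUnit)
  have he : e ≠ 0 := by
    rintro rfl
    have h1 := IsAdicComplete.le_jacobson_bot (span {algebraMap B (integralClosure B K) g})
    rw [hspan, pow_zero, one_eq_top, top_le_iff, Ideal.jacobson_eq_top_iff] at h1
    exact bot_ne_top h1
  have hprec : IsPrecomplete (span {π}) (integralClosure B K) :=
    isPrecomplete_of_pow_le (J := span {algebraMap B (integralClosure B K) g}) (k := e) (s := 1)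
      hspan.ge (by rw [pow_one, hspan]; exact pow_le_self he)
  have hfinπ : Finite (integralClosure B K ⧸ span {π}) :=
    Finite.of_surjective _ (Ideal.Quotient.factor_surjective
      (S := span {algebraMap B (integralClosure B K) g}) (T := span {π})
      (by rw [hspan]; exact pow_le_self he))
  refine ⟨(integralClosure B K).toSubring, π, π.2, fun h => hπ.ne_zero (Subtype.ext h), ?_, ?_, ?_,
    ?_, ?_⟩
  · rintro ⟨v, hv, h⟩
    exact hπ.not_isUnit (IsUnit.of_mul_eq_one (b := ⟨v, hv⟩) (Subtype.ext h))
  · intro x hx hx0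
    obtain ⟨k, u, hu⟩ := IsDiscreteValuationRing.eq_unit_mul_pow_irreducible
      (x := (⟨x, hx⟩ : integralClosure B K)) (fun h => hx0 (congrArg Subtype.val h)) hπ
    exact ⟨k, (u : integralClosure B K), Subtype.prop _,
      ⟨((u⁻¹ : (integralClosure B K)ˣ) : integralClosure B K), Subtype.prop _,
        congrArg Subtype.val u.mul_inv⟩, congrArg Subtype.val hu⟩
  · intro x
    obtain ⟨N, b, hb⟩ := hK x
    exact ⟨_, (integralClosure B K).algebraMap_mem b, _,
      pow_mem ((integralClosure B K).algebraMap_mem g) N, pow_ne_zero _ hG, hb⟩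
  · have := Fintype.ofFinite (integralClosure B K ⧸ span {π})
    refine ⟨Finset.univ.image fun q : integralClosure B K ⧸ span {π} =>
      ((Quotient.out q : integralClosure B K) : K), fun x hx => ?_⟩
    refine ⟨_, Finset.mem_image_of_mem _ (Finset.mem_univ (Ideal.Quotient.mk _ ⟨x, hx⟩)), ?_⟩
    have h := (Ideal.Quotient.mk_out (Ideal.Quotient.mk (span {π}) ⟨x, hx⟩)).symm
    rw [Ideal.Quotient.eq, mem_span_singleton] at h
    obtain ⟨z, hz⟩ := h
    exact ⟨z, z.2, congrArg Subtype.val hz⟩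
  · intro u hu hs
    let v : ℕ → integralClosure B K := fun k => ⟨u k, hu k⟩
    have hv : ∀ k, v (k + 1) - v k ∈ span {π} ^ k := by
      intro k
      obtain ⟨z, hz, h⟩ := hs k
      rw [span_singleton_pow, mem_span_singleton]
      exact ⟨⟨z, hz⟩, Subtype.ext h⟩
    have hv' : ∀ {m n}, m ≤ n → v m ≡ v n [SMOD (span {π} ^ m • ⊤ :
        Submodule (integralClosure B K) (integralClosure B K))] := by
      intro m n hmn
      rw [smul_eq_mul, Ideal.mul_top]
      induction n, hmn using Nat.le_induction with
      | base => rfl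
      | succ n hmn ih =>
        refine ih.trans ?_
        rw [SModEq.comm, SModEq.sub_mem]
        exact Ideal.pow_le_pow_right hmn (hv n)
    obtain ⟨L, hL⟩ := IsPrecomplete.prec hprec hv'
    refine ⟨L, L.2, fun k => ?_⟩
    have h := (hL k).symm
    rw [SModEq.sub_mem, smul_eq_mul, Ideal.mul_top, span_singleton_pow, mem_span_singleton] at h
    obtain ⟨z, hz⟩ := h
    exact ⟨z, z.2, congrArg Subtype.val hz⟩
end

/-! ### Noetherianity and dimension -/

/-- If `x₁, …, x_r` generate `I`, then `X_i ↦ x_i` extends to a map `P[[X₁, …, X_r]] → A`, which is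
surjective because it is so modulo `I`. -/
theorem isNoetherianRing_of_isAdicComplete {P A : Type*} [CommRing P] [CommRing A] [Algebra P A]
    [IsNoetherianRing P] (I : Ideal P) [IsAdicComplete (I.map (algebraMap P A)) A]
    (hsurj : Function.Surjective ((Ideal.Quotient.mk (I.map (algebraMap P A))).comp
      (algebraMap P A))) : IsNoetherianRing A := by
  obtain ⟨s, hs⟩ := IsNoetherian.noetherian I
  set IA := I.map (algebraMap P A) with hIA
  let ev : MvPolynomial s P →+* A :=
    MvPolynomial.eval₂Hom (algebraMap P A) fun i => algebraMap P A i
  have hevmap : (MvPolynomial.idealOfVars s P).map ev = IA := by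
    rw [hIA, ← hs, MvPolynomial.idealOfVars, map_span, Ideal.submodule_span_eq, map_span,
      ← Set.range_comp, Set.image_eq_range]
    congr 2
    ext i
    simp [ev]
  have hle : ∀ n, MvPolynomial.idealOfVars s P ^ n ≤ (IA ^ n).comap ev := by
    intro n
    rw [← map_le_iff_le_comap, Ideal.map_pow, hevmap]
  let f : (n : ℕ) → MvPowerSeries s P →+* A ⧸ IA ^ n := fun n =>
    (Ideal.quotientMap (IA ^ n) ev (hle n)).comp (MvPowerSeries.truncTotalAlgHom s P n).toRingHom
  have hfn : ∀ n x, f n x = Ideal.Quotient.mk (IA ^ n) (ev (x.truncTotal n)) := fun n x => rfl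
  have hf : ∀ {m n : ℕ} (hmn : m ≤ n), (Ideal.Quotient.factorPow IA hmn).comp (f n) = f m := by
    intro m n hmn
    ext x
    rw [RingHom.comp_apply, hfn, hfn]
    change Ideal.Quotient.mk (IA ^ m) _ = _
    rw [Ideal.Quotient.eq, ← map_sub]
    exact hle m (MvPowerSeries.truncTotal_sub_truncTotal_mem_pow_idealOfVars hmn le_rfl x)
  let φ := IsAdicComplete.liftRingHom IA f hf
  have hφ : ∀ q : MvPolynomial s P, φ (q : MvPowerSeries s P) = ev q := by
    intro q
    refine congrFun (IsHausdorff.funext' IA (f := fun q : MvPolynomial s P =>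
      φ (q : MvPowerSeries s P)) (g := ev) fun n q => ?_) q
    rw [IsAdicComplete.mk_liftRingHom]
    exact congrArg (Ideal.quotientMap (IA ^ n) ev (hle n))
      ((MvPowerSeries.truncTotalAlgHom s P n).commutes q)
  have hJ : (span (Set.range MvPowerSeries.X) : Ideal (MvPowerSeries s P)).map φ = IA := by
    rw [← hevmap, MvPolynomial.idealOfVars, map_span, map_span, ← Set.range_comp,
      ← Set.range_comp]
    congr 2
    ext i
    simp [← hφ]
  have hH : IsHausdorff ((span (Set.range MvPowerSeries.X) : Ideal (MvPowerSeries s P)).map φ) A :=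
    by rw [hJ]; infer_instance
  refine isNoetherianRing_of_surjective _ _ φ (surjective_of_mk_map_comp_surjective
    (I := span (Set.range MvPowerSeries.X)) φ ?_)
  rw [hJ]
  intro a
  obtain ⟨x, rfl⟩ := hsurj a
  refine ⟨((MvPolynomial.C x : MvPolynomial s P) : MvPowerSeries s P), ?_⟩
  rw [RingHom.comp_apply, hφ]
  simp [ev]

/-- If inverting `g` turns the Noetherian domain `B` into a field, then `B/g` has dimension zero.
Otherwise some prime `Q ∋ g` is not minimal over `g`. Prime avoidance yields `b ∈ Q` outside the
finitely many minimal primes over `g`; a prime `P ⊆ Q` minimal over `b` contains `g`, hence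
strictly contains a minimal prime over `g`, which is nonzero, contradicting `height P ≤ 1`. -/
theorem krullDimLE_zero_quotient {B : Type*} [CommRing B] [IsDomain B] [IsNoetherianRing B]
    {g : B} (hg : g ≠ 0) (h : ∀ b : B, b ≠ 0 → ∃ N, b ∣ g ^ N) :
    Ring.KrullDimLE 0 (B ⧸ span {g}) := by
  have hprime : ∀ P : Ideal B, P.IsPrime → P ≠ ⊥ → g ∈ P := by
    intro P hP hP0
    obtain ⟨b, hb, hb0⟩ := Submodule.exists_mem_ne_zero_of_ne_bot hP0
    obtain ⟨N, hN⟩ := h b hb0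
    exact hP.mem_of_pow_mem N (P.mem_of_dvd hN hb)
  have hmin0 : ∀ P ∈ (span {g}).minimalPrimes, P ≠ ⊥ := by
    rintro P hP rfl
    exact hg (by simpa using hP.1.2)
  -- every prime containing `g` is minimal among them
  have key : ∀ Q : Ideal B, Q.IsPrime → g ∈ Q → Q ∈ (span {g}).minimalPrimes := by
    intro Q hQ hgQ
    by_contra hQm
    obtain ⟨P₀, hP₀, hP₀Q⟩ := Ideal.exists_minimalPrimes_le
      ((span_singleton_le_iff_mem Q).mpr hgQ)
    have hnot : ¬ ((Q : Set B) ⊆ ⋃ P ∈ (span {g}).minimalPrimes, (P : Set B)) := by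
      intro hsub
      obtain ⟨P, hP, hQP⟩ := (subset_union_prime_finite
        (finite_minimalPrimes_of_isNoetherianRing B (span {g})) (f := fun P => P) ⊥ ⊥
        (fun P hP _ _ => hP.1.1)).mp hsub
      exact hQm (by rwa [le_antisymm hQP (hP.2 ⟨hQ, (span_singleton_le_iff_mem Q).mpr hgQ⟩ hQP)])
    obtain ⟨b, hbQ, hb⟩ := Set.not_subset.mp hnot
    simp only [Set.mem_iUnion, not_exists] at hb
    have hb0 : b ≠ 0 := by
      rintro rfl
      exact hb P₀ hP₀ P₀.zero_mem
    obtain ⟨P, hP, hPQ⟩ := Ideal.exists_minimalPrimes_le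
      ((span_singleton_le_iff_mem Q).mpr hbQ)
    have hPp : P.IsPrime := hP.1.1
    have hbP : b ∈ P := (span_singleton_le_iff_mem P).mp hP.1.2
    have hgP : g ∈ P := hprime P hPp (by rintro rfl; exact hb0 (by simpa using hbP))
    obtain ⟨P₁, hP₁, hP₁P⟩ := Ideal.exists_minimalPrimes_le
      ((span_singleton_le_iff_mem P).mpr hgP)
    have hP₁p : P₁.IsPrime := hP₁.1.1
    have hht : P.height ≤ (1 : ℕ) := by
      simpa using height_le_one_of_isPrincipal_of_mem_minimalPrimes (span {b}) P hP
    have hlt : P₁ < P := lt_of_le_of_ne hP₁P (by rintro rfl; exact hb _ hP₁ hbP)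
    have := height_le_iff.mp hht P₁ hP₁p hlt
    rw [Nat.cast_one, Order.lt_one_iff, height_eq_zero_iff_eq_bot] at this
    exact hmin0 P₁ hP₁ this
  rw [Ring.krullDimLE_zero_iff]
  intro q hq
  have hq' : (q.comap (Ideal.Quotient.mk (span {g}))).IsPrime := inferInstance
  have hgq : g ∈ q.comap (Ideal.Quotient.mk (span {g})) := by
    have : Ideal.Quotient.mk (span {g}) g = 0 :=
      Ideal.Quotient.eq_zero_iff_mem.mpr (mem_span_singleton_self g)
    rw [mem_comap, this]; exact q.zero_mem
  obtain ⟨M, hM, hqM⟩ := exists_le_maximal _ hq'.ne_top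
  have hM' := key M hM.isPrime (hqM hgq)
  have : q.comap (Ideal.Quotient.mk (span {g})) = M :=
    le_antisymm hqM (hM'.2 ⟨hq', (span_singleton_le_iff_mem _).mpr hgq⟩ hqM)
  rw [← this] at hM
  have h2 := map_eq_top_or_isMaximal_of_surjective (Ideal.Quotient.mk (span {g}))
    Ideal.Quotient.mk_surjective hM
  rw [map_comap_of_surjective _ Ideal.Quotient.mk_surjective] at h2
  exact h2.resolve_left hq.ne_top

theorem finite_of_finite_residueFields {C : Type*} [CommRing C] [IsArtinianRing C]
    (h : ∀ M : Ideal C, M.IsMaximal → Finite (C ⧸ M)) : Finite C := by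
  have (M : MaximalSpectrum C) : Finite (C ⧸ M.asIdeal) := h _ M.2
  have : Finite (C ⧸ nilradical C) :=
    Finite.of_equiv _ (IsArtinianRing.quotNilradicalEquivPi C).toEquiv.symm
  obtain ⟨n, hn⟩ := IsNoetherianRing.isNilpotent_nilradical C
  have h1 := finite_quotient_pow (I := nilradical C) (IsNoetherian.noetherian _) n
  rw [hn] at h1
  exact Finite.of_equiv _ (RingEquiv.quotientBot C).toEquiv

/-! ### Images of complete rings in fields -/

/-- The theorem for an arbitrary map `ψ : A → K` to a field with `K = ψ(A)[1/ψ(g)]`, where `A` is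
`I`-adically complete, generated modulo `I` by a Noetherian ring `P` whose residue fields at the
maximal ideals containing `I` are finite, and `g` is topologically nilpotent. -/
theorem exists_subring_of_isAdicComplete {P A K : Type*} [CommRing P] [IsNoetherianRing P]
    [CommRing A] [Algebra P A] (I : Ideal P) [IsAdicComplete (I.map (algebraMap P A)) A]
    (hsurj : Function.Surjective ((Ideal.Quotient.mk (I.map (algebraMap P A))).comp
      (algebraMap P A)))
    (hfin : ∀ M : Ideal P, M.IsMaximal → I ≤ M → Finite (P ⧸ M))
    [Field K] (ψ : A →+* K) (g : A) (hg : ψ g ≠ 0) {k : ℕ}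
    (hgI : g ^ k ∈ I.map (algebraMap P A))
    (hK : ∀ x : K, ∃ N a, ψ g ^ N * x = ψ a) :
    ∃ (O : Subring K) (π : K),
      π ∈ O ∧ π ≠ 0 ∧ (¬ ∃ v ∈ O, π * v = 1) ∧
      (∀ x ∈ O, x ≠ 0 → ∃ (k : ℕ), ∃ u ∈ O, (∃ v ∈ O, u * v = 1) ∧ x = u * π ^ k) ∧
      (∀ x : K, ∃ a ∈ O, ∃ b ∈ O, b ≠ 0 ∧ b * x = a) ∧
      (∃ SF : Finset K, ∀ x ∈ O, ∃ y ∈ SF, ∃ z ∈ O, x - y = π * z) ∧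
      (∀ u : ℕ → K, (∀ k, u k ∈ O) →
        (∀ k, ∃ z ∈ O, u (k + 1) - u k = π ^ k * z) →
        ∃ x ∈ O, ∀ k, ∃ z ∈ O, x - u k = π ^ k * z) := by
  have hAN := isNoetherianRing_of_isAdicComplete I hsurj
  set IA := I.map (algebraMap P A) with hIA
  have hAjac := IsAdicComplete.le_jacobson_bot IA
  have hprime : (RingHom.ker ψ).IsPrime := RingHom.ker_isPrime ψ
  let B := A ⧸ RingHom.ker ψ
  let q : A →+* B := Ideal.Quotient.mk (RingHom.ker ψ)
  have hq : Function.Surjective q := Ideal.Quotient.mk_surjective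
  let : Algebra B K := (RingHom.kerLift ψ).toAlgebra
  have hinj : Function.Injective (algebraMap B K) := RingHom.kerLift_injective ψ
  have hqψ : ∀ a, algebraMap B K (q a) = ψ a := fun a => RingHom.kerLift_mk ψ a
  have hg0 : q g ≠ 0 := fun h => hg (by rw [← hqψ, h, map_zero])
  have hKB : ∀ x : K, ∃ N b, algebraMap B K (q g) ^ N * x = algebraMap B K b := by
    intro x
    obtain ⟨N, a, h⟩ := hK x
    exact ⟨N, q a, by rw [hqψ, hqψ, h]⟩
  have hdvd : ∀ b : B, b ≠ 0 → ∃ N, b ∣ q g ^ N := by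
    intro b hb
    have hb' : algebraMap B K b ≠ 0 := by simpa using hinj.ne hb
    obtain ⟨N, c, h⟩ := hKB (algebraMap B K b)⁻¹
    refine ⟨N, c, hinj ?_⟩
    rw [map_pow, map_mul, ← h]
    field_simp
  -- `J` is the ideal of definition of `B`; it lies in every maximal ideal.
  set J : Ideal B := IA.map q with hJ
  have hJM : ∀ M : Ideal B, M.IsMaximal → J ≤ M := by
    intro M hM
    have := comap_isMaximal_of_surjective q hq (K := M)
    rw [hJ, map_le_iff_le_comap]
    exact hAjac.trans (sInf_le ⟨bot_le, this⟩)
  have hgJ : q g ^ k ∈ J := by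
    rw [← map_pow]; exact mem_map_of_mem q hgI
  have hgM : ∀ M : Ideal B, M.IsMaximal → q g ∈ M := fun M hM =>
    hM.isPrime.mem_of_pow_mem k (hJM M hM hgJ)
  have hu : ¬ IsUnit (q g) := by
    obtain ⟨M, hM⟩ := exists_maximal B
    exact fun h => hM.ne_top (M.eq_top_of_isUnit_mem (hgM M hM) h)
  have hres : ∀ M : Ideal B, M.IsMaximal → Finite (B ⧸ M) := by
    intro M hM
    let θ : P →+* B ⧸ M := (Ideal.Quotient.mk M).comp (q.comp (algebraMap P A))
    have hθ : Function.Surjective θ := by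
      intro y
      obtain ⟨b, rfl⟩ := Ideal.Quotient.mk_surjective y
      obtain ⟨a, rfl⟩ := hq b
      obtain ⟨x, hx⟩ := hsurj (Ideal.Quotient.mk _ a)
      refine ⟨x, Ideal.Quotient.eq.mpr ?_⟩
      rw [RingHom.comp_apply, Ideal.Quotient.eq] at hx
      rw [RingHom.comp_apply, ← map_sub]
      exact hJM M hM (mem_map_of_mem q hx)
    let : Field (B ⧸ M) := Ideal.Quotient.field M
    have hker : (RingHom.ker θ).IsMaximal := RingHom.ker_isMaximal_of_surjective θ hθ
    have := hfin _ hker (by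
      intro x hx
      rw [RingHom.mem_ker]
      exact Ideal.Quotient.eq_zero_iff_mem.mpr
        (hJM M hM (mem_map_of_mem q (mem_map_of_mem _ hx))))
    exact Finite.of_equiv _ (RingHom.quotientKerEquivOfSurjective hθ).toEquiv
  have hdim := krullDimLE_zero_quotient hg0 hdvd
  have hart : IsArtinianRing (B ⧸ span {q g}) :=
    isArtinianRing_iff_isNoetherianRing_krullDimLE_zero.mpr ⟨inferInstance, hdim⟩
  let r : B →+* B ⧸ span {q g} := Ideal.Quotient.mk (span {q g})
  have hr : Function.Surjective r := Ideal.Quotient.mk_surjective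
  have hBg : Finite (B ⧸ span {q g}) := by
    refine finite_of_finite_residueFields fun M hM => ?_
    have hM' : (M.comap r).IsMaximal := comap_isMaximal_of_surjective r hr
    have := hres _ hM'
    have hs : Function.Surjective (Ideal.quotientMap M r le_rfl) :=
      Ideal.quotientMap_surjective hr
    exact Finite.of_surjective _ hs
  -- `J` lies in every prime of the zero-dimensional ring `B/g`, hence is nilpotent there.
  have hJpow : ∃ s, J ^ s ≤ span {q g} := by
    obtain ⟨s, hs⟩ := IsNoetherianRing.isNilpotent_nilradical (B ⧸ span {q g})
    refine ⟨s, ?_⟩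
    have h1 : J.map r ≤ nilradical (B ⧸ span {q g}) := by
      rw [nilradical_eq_sInf]
      refine le_sInf fun M (hM : M.IsPrime) => ?_
      have hM : M.IsMaximal := Ring.krullDimLE_zero_iff.mp hdim M hM
      rw [map_le_iff_le_comap]
      exact hJM _ (comap_isMaximal_of_surjective r hr)
    have h2 := Ideal.pow_right_mono h1 s
    rw [hs, ← Ideal.map_pow, map_le_iff_le_comap] at h2
    intro x hx
    exact Ideal.Quotient.eq_zero_iff_mem.mp (h2 hx)
  obtain ⟨s, hs⟩ := hJpow
  -- The given completeness is for an ideal of `A`; it is first pushed to the `A`-module `B`.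
  have hBprec : IsPrecomplete J B := by
    have h := isPrecomplete_of_surjective IA (Algebra.linearMap A B) hq
    exact IsPrecomplete.map_algebraMap_iff.mpr h
  have hprec : IsPrecomplete (span {q g}) B :=
    isPrecomplete_of_pow_le (J := J) (k := k) (s := s)
      (by rw [span_singleton_pow, span_singleton_le_iff_mem]; exact hgJ) hs
  have hhaus : IsHausdorff (span {q g}) B :=
    IsHausdorff.of_isDomain _ (by rwa [Ne, span_singleton_eq_top])
  have : IsAdicComplete (span {q g}) B := {}
  exact exists_subring_of_abstract hinj hg0 hKB hu

/-! ### Finite residue fields -/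

/-- The series is split into pieces, the `i`-th collecting those monomials for which `i` is the
chosen variable dividing them. -/
theorem mem_span_range_X_of_constantCoeff_eq_zero {σ R : Type*} [Fintype σ] [CommRing R]
    (c : MvPowerSeries σ R) (hc : MvPowerSeries.constantCoeff c = 0) :
    c ∈ span (Set.range (MvPowerSeries.X : σ → MvPowerSeries σ R)) := by
  classical
  have hex : ∀ d : σ →₀ ℕ, d ≠ 0 → ∃ i, d i ≠ 0 := fun d hd => by
    by_contra! h
    exact hd (Finsupp.ext h)
  let part : σ → MvPowerSeries σ R := fun i d =>
    if h : d ≠ 0 then (if (hex d h).choose = i then MvPowerSeries.coeff d c else 0) else 0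
  have hsum : c = ∑ i, part i := by
    ext d
    rw [map_sum]
    change _ = ∑ i, part i d
    by_cases h : d = 0
    · subst h
      simpa [part] using hc
    · simp [part, h]
  rw [hsum]
  refine Ideal.sum_mem _ fun i _ => ?_
  refine Ideal.mem_of_dvd _ ?_ (subset_span (Set.mem_range_self i))
  rw [MvPowerSeries.X_dvd_iff]
  intro d hd
  change part i d = 0
  simp only [part]
  split_ifs with h1 h2
  · exact absurd (h2 ▸ hd) (hex d h1).choose_spec
  · rfl
  · rfl

/-- The residue field is generated over `𝔽_p` by the images of the `X_i`, since every element of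
`ℤ_p[[T]]` is congruent to a natural number modulo `(p, T₁, …, T_m)`; Zariski's lemma applies. -/
theorem finite_quotient_of_stdIdeal_le (p m n : ℕ) [Fact p.Prime]
    (M : Ideal (MvPolynomial (Fin n) (MvPowerSeries (Fin m) ℤ_[p]))) (hM : M.IsMaximal)
    (hIM : stdIdeal p m n ≤ M) :
    Finite (MvPolynomial (Fin n) (MvPowerSeries (Fin m) ℤ_[p]) ⧸ M) := by
  let F := MvPolynomial (Fin n) (MvPowerSeries (Fin m) ℤ_[p]) ⧸ M
  let : Field F := Ideal.Quotient.field M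
  let q : MvPolynomial (Fin n) (MvPowerSeries (Fin m) ℤ_[p]) →+* F := Ideal.Quotient.mk M
  have hp : ((p : ℕ) : F) = 0 := by
    rw [← map_natCast q]
    exact Ideal.Quotient.eq_zero_iff_mem.mpr (hIM (subset_span (Set.mem_insert _ _)))
  have hchar : CharP F p := (CharP.charP_iff_prime_eq_zero Fact.out).mpr hp
  let : Algebra (ZMod p) F := ZMod.algebra F p
  have hconst : ∀ a : ℤ_[p], ∃ k : ℕ, q (MvPolynomial.C (MvPowerSeries.C a)) = k := by
    intro a
    obtain ⟨k, -, hk⟩ := PadicInt.exists_mem_range a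
    rw [PadicInt.maximalIdeal_eq_span_p, mem_span_singleton] at hk
    obtain ⟨z, hz⟩ := hk
    refine ⟨k, ?_⟩
    rw [eq_add_of_sub_eq hz]
    simp
  have hX : ∀ c ∈ span (Set.range (MvPowerSeries.X : Fin m → MvPowerSeries (Fin m) ℤ_[p])),
      q (MvPolynomial.C c) = 0 := by
    intro c hc
    have : span (Set.range (MvPowerSeries.X : Fin m → MvPowerSeries (Fin m) ℤ_[p])) ≤
        RingHom.ker (q.comp MvPolynomial.C) := by
      rw [span_le]
      rintro _ ⟨i, rfl⟩
      exact Ideal.Quotient.eq_zero_iff_mem.mpr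
        (hIM (subset_span (Set.mem_insert_of_mem _ (Set.mem_range_self i))))
    exact this hc
  let f : MvPolynomial (Fin n) (ZMod p) →ₐ[ZMod p] F :=
    MvPolynomial.aeval fun i => q (MvPolynomial.X i)
  have hf : Function.Surjective f := by
    intro y
    obtain ⟨x, rfl⟩ : ∃ x, q x = y := Ideal.Quotient.mk_surjective y
    change q x ∈ f.toRingHom.range
    induction x using MvPolynomial.induction_on with
    | C c =>
      obtain ⟨k, hk⟩ := hconst (MvPowerSeries.constantCoeff c)
      have h0 := hX (c - MvPowerSeries.C (MvPowerSeries.constantCoeff c))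
        (mem_span_range_X_of_constantCoeff_eq_zero _ (by simp))
      rw [map_sub, map_sub, hk, sub_eq_zero] at h0
      exact ⟨(k : MvPolynomial (Fin n) (ZMod p)), by rw [map_natCast, h0]⟩
    | add a b ha hb => rw [map_add]; exact add_mem ha hb
    | mul_X a i ha =>
      rw [map_mul]
      exact mul_mem ha ⟨MvPolynomial.X i, by simp [f]⟩
  have : Algebra.FiniteType (ZMod p) F := Algebra.FiniteType.of_surjective f hf
  have : Module.Finite (ZMod p) F := finite_of_finite_type_of_isJacobsonRing (ZMod p) F
  exact Module.finite_of_finite (ZMod p)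

end

/-- **Statement 11**. Let `R = R₀[1/ϖ]` be a complete Tate ring with ring of definition
`R₀ = A_{m,n}/𝔞` formally of finite type over `ℤ_p`, where `ϖ ∈ R₀` is topologically
nilpotent (for every `j` some power of `ϖ` lies in `J^j`, `J` the image of
`(p, T₁, …, T_m)`).  Then for every maximal ideal `𝔪` of `R`, the residue field `R/𝔪` is a
local field: it contains a subring `O` which is a complete discrete valuation ring with
finite residue field and fraction field `R/𝔪`.  (Here `O` being a complete DVR with
uniformizer `π`, finite residue field, and fraction field `R/𝔪` is spelled out
elementarily: `π ∈ O` is a nonzero nonunit, every nonzero element of `O` is a unit of `O`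
times a power of `π`, every element of `R/𝔪` is a quotient of elements of `O`, `O` has
finitely many residues modulo `π`, and `O` is `π`-adically complete.) -/
theorem residue_field_is_local_field (p : ℕ) [Fact p.Prime] (m n : ℕ)
    (𝔞 : Ideal (Amn p m n)) (ϖ : Amn p m n ⧸ 𝔞)
    (hϖ : ∀ j : ℕ, ∃ k : ℕ, ϖ ^ k ∈ (defIdeal p m n 𝔞) ^ j)
    (𝔪 : Ideal (Localization.Away ϖ)) (h𝔪 : 𝔪.IsMaximal) :
    ∃ (O : Subring (Localization.Away ϖ ⧸ 𝔪)) (π : Localization.Away ϖ ⧸ 𝔪),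
      π ∈ O ∧ π ≠ 0 ∧ (¬ ∃ v ∈ O, π * v = 1) ∧
      (∀ x ∈ O, x ≠ 0 → ∃ (k : ℕ), ∃ u ∈ O, (∃ v ∈ O, u * v = 1) ∧ x = u * π ^ k) ∧
      (∀ x : Localization.Away ϖ ⧸ 𝔪, ∃ a ∈ O, ∃ b ∈ O, b ≠ 0 ∧ b * x = a) ∧
      (∃ SF : Finset (Localization.Away ϖ ⧸ 𝔪), ∀ x ∈ O, ∃ y ∈ SF, ∃ z ∈ O, x - y = π * z) ∧
      (∀ u : ℕ → Localization.Away ϖ ⧸ 𝔪, (∀ k, u k ∈ O) →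
        (∀ k, ∃ z ∈ O, u (k + 1) - u k = π ^ k * z) →
        ∃ x ∈ O, ∀ k, ∃ z ∈ O, x - u k = π ^ k * z) := by
  have hfg : (stdIdeal p m n).FG :=
    Submodule.fg_span (Set.toFinite _)
  have hcomp := AdicCompletion.isAdicComplete_self (stdIdeal p m n) hfg
  let : Field (Localization.Away ϖ ⧸ 𝔪) := Ideal.Quotient.field 𝔪
  let ρ : Amn p m n ⧸ 𝔞 →+* Localization.Away ϖ ⧸ 𝔪 :=
    (Ideal.Quotient.mk 𝔪).comp (algebraMap _ (Localization.Away ϖ))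
  have hunit : IsUnit (ρ ϖ) :=
    (IsLocalization.Away.algebraMap_isUnit (S := Localization.Away ϖ) ϖ).map (Ideal.Quotient.mk 𝔪)
  -- The exponent is raised by one so that it is positive: `hϖ` allows `k = 0`, and a positive
  -- power of `ϖ` is needed to clear denominators.
  obtain ⟨k, hk⟩ := hϖ 1
  rw [pow_one] at hk
  have hk' : ϖ ^ (k + 1) ∈ defIdeal p m n 𝔞 := by
    rw [pow_succ]; exact Ideal.mul_mem_right _ _ hk
  rw [defIdeal, ← Ideal.map_map,
    Ideal.mem_map_iff_of_surjective _ Ideal.Quotient.mk_surjective] at hk'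
  obtain ⟨g, hgI, hg⟩ := hk'
  let ψ : Amn p m n →+* Localization.Away ϖ ⧸ 𝔪 := ρ.comp (Ideal.Quotient.mk 𝔞)
  have hψg : ψ g = ρ ϖ ^ (k + 1) := by
    rw [← map_pow, ← hg]; rfl
  refine exists_subring_of_isAdicComplete (stdIdeal p m n) ?_
    (finite_quotient_of_stdIdeal_le p m n) ψ g (k := 1) ?_ ?_ ?_
  · intro a
    obtain ⟨a, rfl⟩ := Ideal.Quotient.mk_surjective a
    obtain ⟨x, hx⟩ := Ideal.Quotient.mk_surjective (AdicCompletion.evalOneₐ (stdIdeal p m n) a)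
    refine ⟨x, Ideal.Quotient.eq.mpr ?_⟩
    have hker : RingHom.ker (AdicCompletion.evalOneₐ (stdIdeal p m n)).toRingHom =
        (stdIdeal p m n).map (algebraMap _ (Amn p m n)) :=
      AdicCompletion.ker_evalOneₐ_eq_map _ hfg
    rw [← hker, RingHom.mem_ker, map_sub, sub_eq_zero]
    refine Eq.trans ?_ hx
    exact (AdicCompletion.evalOneₐ (stdIdeal p m n)).commutes x
  · rw [hψg]
    exact (hunit.pow _).ne_zero
  · rwa [pow_one]
  · intro x
    obtain ⟨y, rfl⟩ := Ideal.Quotient.mk_surjective x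
    obtain ⟨N, r, hr⟩ := IsLocalization.Away.surj ϖ y
    -- `y = r / ϖ ^ N` and `g` maps to `ϖ ^ (k + 1)`, so `g ^ N * y = ϖ ^ (k * N) * r`.
    obtain ⟨a, ha⟩ := Ideal.Quotient.mk_surjective (ϖ ^ (k * N) * r)
    refine ⟨N, a, ?_⟩
    have h1 : ψ a = ρ ϖ ^ (k * N) * ρ r := by
      rw [← map_pow, ← map_mul, ← ha]; rfl
    have h2 : Ideal.Quotient.mk 𝔪 y * ρ ϖ ^ N = ρ r := by
      rw [← map_pow]
      change Ideal.Quotient.mk 𝔪 y * Ideal.Quotient.mk 𝔪 (algebraMap _ _ (ϖ ^ N)) =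
        Ideal.Quotient.mk 𝔪 (algebraMap _ _ r)
      rw [← map_mul, map_pow, hr]
    rw [h1, hψg, ← h2, ← pow_mul]
    ring
end

section
/- Let (A, I) and (B, J) be Noetherian adic rings and let f : A → B be a ring homomorphism with J = f(I)·B, such that f is topologically of finite type. Assume that the quotient A/I is a Jacobson ring. If 𝔮 is a prime ideal of B that is a closed point of Spec B ∖ V(J), then 𝔭 = f⁻¹(𝔮) is a closed point of Spec A ∖ V(I). -/
/-!
Write `C = B ⧸ 𝔮`, a Noetherian domain, and `K = I C = J C`. Being a closed point means that `K` is
nonzero and contained in every nonzero prime of `C`.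

* By Krull's principal ideal theorem and prime avoidance, such a `C` has dimension at most one near
  `V(K)`: every prime containing `K` is minimal over `K`
  (`mem_minimalPrimes_of_le_nonzero_primes`). So `C ⧸ K` has dimension zero.
* Density of the polynomial algebra modulo `J` makes `C ⧸ K` of finite type over the Jacobson ring
  `A ⧸ I`, and a zero-dimensional Noetherian algebra of finite type over a Jacobson ring is finite
  (`finite_of_krullDim_zero_of_jacobson_quotient`).
* Since `A` is `I`-adically complete and `C` is `I`-adically separated by Krull's intersection
  theorem, `C` itself is finite over `A` (`finite_of_finite_quotient_of_isPrecomplete`).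

A prime `𝔭'` strictly containing `𝔭 = ker (A → C)` is therefore, by lying over, the contraction of
a prime of `C`. That prime is nonzero, hence contains `K`, and so `I ≤ 𝔭'`.
-/

/-- A field of finite type over `A` that is killed by an ideal `I` with `A ⧸ I` Jacobson is
finite over `A` (Zariski's lemma over the Jacobson ring `A ⧸ I`). -/
lemma finite_of_field_of_jacobson_quotient {A F : Type*} [CommRing A] [Field F] [Algebra A F]
    (I : Ideal A) [IsJacobsonRing (A ⧸ I)] [Algebra.FiniteType A F]
    (hI : ∀ a ∈ I, algebraMap A F a = 0) : Module.Finite A F := by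
  let : Algebra (A ⧸ I) F := (Ideal.Quotient.lift I (algebraMap A F) hI).toAlgebra
  have : IsScalarTower A (A ⧸ I) F := IsScalarTower.of_algebraMap_eq fun a => by
    rw [RingHom.algebraMap_toAlgebra, Ideal.Quotient.algebraMap_eq, Ideal.Quotient.lift_mk]
  have : Algebra.FiniteType (A ⧸ I) F := Algebra.FiniteType.of_restrictScalars_finiteType A _ _
  have := finite_of_finite_type_of_isJacobsonRing (A ⧸ I) F
  exact Module.Finite.trans (A ⧸ I) F

/-- The zero-dimensional case of Zariski's lemma: filter `D` by the residue fields `D ⧸ p`, each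
of which is finite over `A`. -/
lemma finite_of_krullDim_zero_of_jacobson_quotient {A D : Type*} [CommRing A] [CommRing D]
    [Algebra A D] [IsNoetherianRing D] (I : Ideal A) [IsJacobsonRing (A ⧸ I)]
    [Algebra.FiniteType A D] (hI : ∀ a ∈ I, algebraMap A D a = 0)
    (hmax : ∀ P : Ideal D, P.IsPrime → P.IsMaximal) : Module.Finite A D := by
  suffices h : ∀ (N : Type _) [AddCommGroup N] [Module D N] [Module.Finite D N] [Module A N]
      [IsScalarTower A D N], Module.Finite A N from h D
  intro N _ _ _
  refine IsNoetherianRing.induction_on_isQuotientEquivQuotientPrime D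
    (M := N) inferInstance
    (motive := fun N _ _ _ => ∀ [Module A N] [IsScalarTower A D N], Module.Finite A N) ?_ ?_ ?_
  · intro N _ _ _ _ _ _
    infer_instance
  · intro N _ _ _ p e _ _
    have := hmax p.1 p.2
    let : Field (D ⧸ p.1) := Ideal.Quotient.field p.1
    have : Algebra.FiniteType A (D ⧸ p.1) :=
      Algebra.FiniteType.of_surjective (Ideal.Quotient.mkₐ A p.1) Ideal.Quotient.mk_surjective
    have : Module.Finite A (D ⧸ p.1) := finite_of_field_of_jacobson_quotient I fun a ha => by
      rw [IsScalarTower.algebraMap_apply A D, hI a ha, map_zero]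
    exact Module.Finite.equiv (e.symm.restrictScalars A)
  · intro N₁ _ _ _ N₂ _ _ _ N₃ _ _ _ g h hg hh hgh h₁ h₃ _ _
    let : Module A N₁ := Module.compHom N₁ (algebraMap A D)
    let : Module A N₃ := Module.compHom N₃ (algebraMap A D)
    have : IsScalarTower A D N₁ := IsScalarTower.of_algebraMap_smul fun _ _ => rfl
    have : IsScalarTower A D N₃ := IsScalarTower.of_algebraMap_smul fun _ _ => rfl
    have := h₁
    have := h₃
    refine ⟨Submodule.fg_of_fg_map_of_fg_inf_ker (h.restrictScalars A) ?_ ?_⟩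
    · rw [Submodule.map_top,
        LinearMap.range_eq_top.2 (show Function.Surjective (h.restrictScalars A) from hh)]
      exact Module.Finite.fg_top
    · have : LinearMap.ker (h.restrictScalars A) = LinearMap.range (g.restrictScalars A) := by
        ext x
        exact hgh x
      rw [top_inf_eq, this, ← Submodule.map_top]
      exact Module.Finite.fg_top.map (g.restrictScalars A)

/-- If the nonzero ideal `K` of a Noetherian domain lies in every nonzero prime, then every prime
containing `K` is minimal over `K`. Otherwise prime avoidance gives an element of that prime
outside the finitely many minimal primes of `K`, and a minimal prime of this element would
have height at least two, against Krull's principal ideal theorem. -/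
lemma mem_minimalPrimes_of_le_nonzero_primes {C : Type*} [CommRing C] [IsDomain C]
    [IsNoetherianRing C] {K : Ideal C} (hK : K ≠ ⊥)
    (hle : ∀ P : Ideal C, P.IsPrime → P ≠ ⊥ → K ≤ P)
    (M : Ideal C) [hM : M.IsPrime] (hKM : K ≤ M) : M ∈ K.minimalPrimes := by
  by_contra hmin
  obtain ⟨P₀, hP₀, -⟩ := Ideal.exists_minimalPrimes_le hKM
  have havoid : ¬ ((M : Set C) ⊆ ⋃ P ∈ K.minimalPrimes, (P : Set C)) := by
    intro hsub
    obtain ⟨P, hP, hMP⟩ := (Ideal.subset_union_prime_finite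
      (Ideal.finite_minimalPrimes_of_isNoetherianRing C K)
      (f := id) ⊥ ⊥ fun P hP _ _ => hP.isPrime).1 hsub
    exact hmin ((le_antisymm hMP (hP.2 ⟨hM, hKM⟩ hMP) : M = P) ▸ hP)
  obtain ⟨x, hxM, hx⟩ := Set.not_subset.1 havoid
  simp only [Set.mem_iUnion, not_exists] at hx
  have hx0 : x ≠ 0 := fun h => hx P₀ hP₀ (h ▸ P₀.zero_mem)
  obtain ⟨Q, hQ, hQM⟩ := Ideal.exists_minimalPrimes_le (I := Ideal.span {x}) (J := M)
    ((Ideal.span_singleton_le_iff_mem _).2 hxM)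
  have hQp : Q.IsPrime := hQ.isPrime
  have hxQ : x ∈ Q := hQ.1.2 (Ideal.mem_span_singleton_self x)
  obtain ⟨P, hP, hPQ⟩ := Ideal.exists_minimalPrimes_le
    (hle Q hQp fun h => hx0 (by simpa [h] using hxQ))
  have hPp : P.IsPrime := hP.isPrime
  have hPQ' : P < Q := lt_of_le_of_ne hPQ fun h => hx P hP (h ▸ hxQ)
  have hPbot : ⊥ < P := (bot_lt_iff_ne_bot.2 hK).trans_le hP.1.2
  have h1 := Ideal.height_le_one_of_isPrincipal_of_mem_minimalPrimes _ Q hQ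
  have h2 : (⊥ : Ideal C).height + 1 ≤ P.height := Ideal.height_add_one_le_of_lt_of_isPrime hPbot
  have h3 : P.height + 1 ≤ Q.height := Ideal.height_add_one_le_of_lt_of_isPrime hPQ'
  have h4 : (1 : ℕ∞) + 1 ≤ 1 :=
    (add_le_add_left (le_add_self.trans h2) 1).trans (h3.trans h1)
  exact absurd h4 (by decide)

lemma isPrecomplete_pi_s11 {A ι : Type*} [CommRing A] [Fintype ι] (I : Ideal A)
    [IsPrecomplete I A] : IsPrecomplete I (ι → A) := by
  classical
  have key : ∀ (n : ℕ) (v : ι → A),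
      v ∈ (I ^ n • ⊤ : Submodule A (ι → A)) ↔ ∀ i, v i ∈ (I ^ n • ⊤ : Submodule A A) := by
    intro n v
    refine ⟨fun h i => ?_, fun h => ?_⟩
    · have := Submodule.mem_map_of_mem (f := LinearMap.proj (R := A) (φ := fun _ : ι => A) i) h
      rw [Submodule.map_smul''] at this
      exact (smul_mono_right (I ^ n) le_top : _ ≤ (I ^ n • ⊤ : Submodule A A)) this
    · rw [pi_eq_sum_univ' v]
      refine Submodule.sum_mem _ fun i _ => Submodule.smul_mem_smul ?_ trivial
      simpa using h i
  refine ⟨fun u hu => ?_⟩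
  have hi : ∀ i, ∃ L : A, ∀ n, u n i ≡ L [SMOD (I ^ n • ⊤ : Submodule A A)] := fun i =>
    IsPrecomplete.prec ‹_› fun {m n} hmn => by
      have := hu hmn
      rw [SModEq.sub_mem, key] at this
      exact SModEq.sub_mem.2 (this i)
  choose L hL using hi
  refine ⟨L, fun n => ?_⟩
  rw [SModEq.sub_mem, key]
  exact fun i => SModEq.sub_mem.1 (hL i n)

/-- Nakayama's lemma in its complete form: over an `I`-adically complete ring, an `I`-adically
separated module is finite as soon as its reduction modulo `I` is. -/
lemma finite_of_finite_quotient_of_isPrecomplete {A M : Type*} [CommRing A] [AddCommGroup M]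
    [Module A M] (I : Ideal A) [IsPrecomplete I A] [IsHausdorff I M]
    [Module.Finite A (M ⧸ (I • ⊤ : Submodule A M))] : Module.Finite A M := by
  obtain ⟨n, g, hg⟩ := Module.Finite.exists_fin' A (M ⧸ (I • ⊤ : Submodule A M))
  obtain ⟨g', hg'⟩ := Module.projective_lifting_property
    (Submodule.mkQ (I • ⊤ : Submodule A M)) g (Submodule.mkQ_surjective _)
  have : IsPrecomplete I (Fin n → A) := isPrecomplete_pi_s11 I
  exact Module.Finite.of_surjective g'
    (surjective_of_mkQ_comp_surjective (I := I) (by rw [hg']; exact hg))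


/-- **Statement 12**. Let `(A, I)` and `(B, J)` be Noetherian adic rings (Noetherian,
`I`- resp. `J`-adically complete and separated) and `f : A → B` a ring homomorphism with
`J = f(I)·B` which is topologically of finite type (there are finitely many elements
`b₁, …, b_k ∈ B` such that the image of the polynomial algebra `A[X₁,…,X_k]` under
`Xᵢ ↦ bᵢ` is `J`-adically dense in `B`). Assume `A/I` is Jacobson. If `𝔮` is a prime
ideal of `B` that is a closed point of `Spec B ∖ V(J)` (i.e. `J ⊄ 𝔮` and every prime
strictly containing `𝔮` contains `J`), then `𝔭 = f⁻¹(𝔮)` is a closed point of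
`Spec A ∖ V(I)`. -/
theorem comap_closedPoint_of_topologicallyFiniteType
    {A B : Type*} [CommRing A] [CommRing B] [IsNoetherianRing A] [IsNoetherianRing B]
    (I : Ideal A) (J : Ideal B) [IsAdicComplete I A] [IsAdicComplete J B]
    (f : A →+* B) (hJ : J = Ideal.map f I)
    (hfin : ∃ (k : ℕ) (b : Fin k → B), ∀ x : B, ∀ j : ℕ,
      ∃ q : MvPolynomial (Fin k) A, x - MvPolynomial.eval₂Hom f b q ∈ J ^ j)
    (hJacobson : ∀ P : Ideal (A ⧸ I), P.IsPrime → P.jacobson = P)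
    (𝔮 : Ideal B) (h𝔮prime : 𝔮.IsPrime)
    (h𝔮nJ : ¬ J ≤ 𝔮)
    (h𝔮closed : ∀ 𝔮' : Ideal B, 𝔮'.IsPrime → 𝔮 < 𝔮' → J ≤ 𝔮') :
    (Ideal.comap f 𝔮).IsPrime ∧ ¬ I ≤ Ideal.comap f 𝔮 ∧
      ∀ 𝔭' : Ideal A, 𝔭'.IsPrime → Ideal.comap f 𝔮 < 𝔭' → I ≤ 𝔭' := by
  have : IsJacobsonRing (A ⧸ I) := isJacobsonRing_iff_prime_eq.2 hJacobson
  let : Algebra A B := f.toAlgebra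
  have hJAC : I.map (algebraMap A (B ⧸ 𝔮)) = J.map (Ideal.Quotient.mk 𝔮) := by
    rw [hJ, Ideal.map_map]; rfl
  set K : Ideal (B ⧸ 𝔮) := I.map (algebraMap A (B ⧸ 𝔮)) with hKdef
  have hlt : ∀ P : Ideal (B ⧸ 𝔮), P ≠ ⊥ → 𝔮 < P.comap (Ideal.Quotient.mk 𝔮) := by
    intro P hP
    refine lt_of_le_of_ne ?_ fun h => hP ?_
    · conv_lhs => rw [← Ideal.mk_ker (I := 𝔮)]
      exact Ideal.ker_le_comap _
    · rw [← Ideal.map_comap_of_surjective _ Ideal.Quotient.mk_surjective P, ← h,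
        Ideal.map_quotient_self]
  have hKle : ∀ P : Ideal (B ⧸ 𝔮), P.IsPrime → P ≠ ⊥ → K ≤ P := fun P hP hP0 => by
    rw [hJAC, Ideal.map_le_iff_le_comap]
    exact h𝔮closed _ (hP.comap _) (hlt P hP0)
  have hKbot : K ≠ ⊥ := fun h => h𝔮nJ <| by
    rw [hJAC, Ideal.map_eq_bot_iff_le_ker, Ideal.mk_ker] at h
    exact h
  -- `J` lies in the Jacobson radical of `B`, so it stays proper in `B ⧸ 𝔮`.
  have hKtop : K ≠ ⊤ := fun h => by
    obtain ⟨m, hm, hqm⟩ := Ideal.exists_le_maximal 𝔮 h𝔮prime.ne_top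
    have hJm : J ≤ m := (IsAdicComplete.le_jacobson_bot J).trans
      (sInf_le ⟨bot_le, hm⟩)
    rw [hJAC, Ideal.eq_top_iff_one, ← map_one (Ideal.Quotient.mk 𝔮), ← Ideal.mem_comap,
      Ideal.comap_map_of_surjective _ Ideal.Quotient.mk_surjective, ← RingHom.ker_eq_comap_bot,
      Ideal.mk_ker] at h
    exact hm.ne_top ((Ideal.eq_top_iff_one m).2 (sup_le hJm hqm h))
  have hDmax : ∀ P : Ideal ((B ⧸ 𝔮) ⧸ K), P.IsPrime → P.IsMaximal := by
    intro P hP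
    have hKP : ∀ R : Ideal ((B ⧸ 𝔮) ⧸ K), K ≤ R.comap (Ideal.Quotient.mk K) := fun R => by
      conv_lhs => rw [← Ideal.mk_ker (I := K)]
      exact Ideal.ker_le_comap _
    obtain ⟨m, hm, hPm⟩ := Ideal.exists_le_maximal P hP.ne_top
    have := hm.isPrime
    have hmin := mem_minimalPrimes_of_le_nonzero_primes hKbot hKle
      (m.comap (Ideal.Quotient.mk K)) (hKP m)
    have hle := hmin.2 ⟨hP.comap _, hKP P⟩ (Ideal.comap_mono hPm)
    have : m = P := le_antisymm
      ((Ideal.comap_le_comap_iff_of_surjective _ Ideal.Quotient.mk_surjective _ _).1 hle) hPm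
    exact this ▸ hm
  have : Algebra.FiniteType A ((B ⧸ 𝔮) ⧸ K) := by
    obtain ⟨k, b, hb⟩ := hfin
    let φ : MvPolynomial (Fin k) A →ₐ[A] ((B ⧸ 𝔮) ⧸ K) :=
      ((Ideal.Quotient.mkₐ A K).comp (Ideal.Quotient.mkₐ A 𝔮)).comp (MvPolynomial.aeval b)
    refine Algebra.FiniteType.of_surjective φ fun y => ?_
    obtain ⟨y, rfl⟩ := Ideal.Quotient.mk_surjective y
    obtain ⟨x, rfl⟩ := Ideal.Quotient.mk_surjective y
    obtain ⟨q, hq⟩ := hb x 1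
    rw [pow_one] at hq
    refine ⟨q, Eq.symm (Ideal.Quotient.eq.2 ?_)⟩
    have := Ideal.mem_map_of_mem (Ideal.Quotient.mk 𝔮) hq
    rw [← hJAC, map_sub] at this
    exact this
  have : Module.Finite A ((B ⧸ 𝔮) ⧸ K) :=
    finite_of_krullDim_zero_of_jacobson_quotient I (fun a ha => by
      rw [IsScalarTower.algebraMap_apply A (B ⧸ 𝔮), Ideal.Quotient.algebraMap_eq]
      exact Ideal.Quotient.eq_zero_iff_mem.2 (Ideal.mem_map_of_mem _ ha)) hDmax
  have : IsHausdorff I (B ⧸ 𝔮) := by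
    refine (IsHausdorff.map_algebraMap_iff (S := B ⧸ 𝔮)).1 ⟨fun x hx => ?_⟩
    have := (Ideal.iInf_pow_eq_bot_of_isDomain K hKtop).le
    exact this (by simpa [SModEq.zero] using hx)
  have hsmul : (I • ⊤ : Submodule A (B ⧸ 𝔮)) = K.restrictScalars A := by
    rw [Ideal.smul_top_eq_map]
  have : Module.Finite A ((B ⧸ 𝔮) ⧸ (I • ⊤ : Submodule A (B ⧸ 𝔮))) := by
    rw [hsmul]
    exact ‹Module.Finite A ((B ⧸ 𝔮) ⧸ K)›
  have : Module.Finite A (B ⧸ 𝔮) := finite_of_finite_quotient_of_isPrecomplete I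
  have hker : RingHom.ker (algebraMap A (B ⧸ 𝔮)) = 𝔮.comap f := by
    ext a
    exact Ideal.Quotient.eq_zero_iff_mem
  refine ⟨h𝔮prime.comap f, fun h => h𝔮nJ (hJ ▸ Ideal.map_le_iff_le_comap.2 h), ?_⟩
  intro 𝔭' h𝔭' hlt𝔭
  obtain ⟨Q, -, hQ, hQ𝔭⟩ := Ideal.exists_ideal_over_prime_of_isIntegral 𝔭' (⊥ : Ideal (B ⧸ 𝔮))
    (by exact hker.le.trans hlt𝔭.le)
  have hQ0 : Q ≠ ⊥ := fun h => hlt𝔭.ne <| by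
    rw [← hQ𝔭, h, ← hker]; rfl
  rw [← hQ𝔭]
  exact Ideal.map_le_iff_le_comap.1 (hKle Q hQ hQ0)
end

section
/- Let R = R₀[1/ϖ_R] and S = S₀[1/ϖ_S] be complete Tate rings with rings of definition R₀ and S₀ formally of finite type over Z_p, and let g : R → S be a ring homomorphism that is continuous, i.e. g(R₀) ⊆ ϖ_S^{-N}·S₀ for some N ≥ 0, and g(ϖ_R) is topologically nilpotent in S in the sense that for every j ≥ 1 there is k with g(ϖ_R)ᵏ ∈ ϖ_S^{j}·S₀. Then for every maximal ideal 𝔮 of S, the preimage g⁻¹(𝔮) is a maximal ideal of R. -/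
/-! ### Adic completions of Noetherian rings -/

/-- In finitely many variables, a power series without constant term lies in the ideal generated by
the variables. This is read off from the identification of `R[[σ]]` with an adic completion of
`R[σ]`, where the kernel of the evaluation at level one is known. -/
theorem mvPowerSeries_mem_span_X {σ R : Type*} [Finite σ] [CommRing R] (f : MvPowerSeries σ R)
    (hf : MvPowerSeries.constantCoeff f = 0) :
    f ∈ Ideal.span (Set.range (MvPowerSeries.X : σ → MvPowerSeries σ R)) := by
  set e := MvPowerSeries.toAdicCompletionAlgEquiv σ R
  have h1 : e f ∈ (MvPolynomial.idealOfVars σ R).map (algebraMap _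
      (AdicCompletion (MvPolynomial.idealOfVars σ R) (MvPolynomial σ R))) := by
    rw [← AdicCompletion.ker_evalOneₐ_eq_map _ (MvPolynomial.idealOfVars_fg σ R)]
    have h0 : AdicCompletion.evalOneₐ _ (MvPowerSeries.toAdicCompletion σ R f) =
        Ideal.Quotient.mk _ (MvPowerSeries.truncTotal 1 f) := by
      rw [MvPowerSeries.toAdicCompletion, AdicCompletion.evalOneₐ_liftAlgHom]
      · rfl
      · exact fun h => AlgHom.ext fun _ => Ideal.Quotient.eq.2
          (MvPowerSeries.truncTotal_sub_truncTotal_mem_pow_idealOfVars h le_rfl _)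
    refine h0.trans ?_
    rw [Ideal.Quotient.eq_zero_iff_mem, ← pow_one (MvPolynomial.idealOfVars σ R),
      MvPolynomial.mem_pow_idealOfVars_iff']
    intro d hd
    rw [MvPowerSeries.coeff_truncTotal _ hd]
    obtain rfl : d = 0 := (Finsupp.degree_eq_zero_iff d).1 (by simpa using hd)
    simpa using hf
  have h2 := Ideal.mem_map_of_mem e.symm.toRingEquiv.toRingHom h1
  rw [Ideal.map_map] at h2
  have h3 : e.symm.toRingEquiv.toRingHom (e f) = f := e.symm_apply_apply f
  rw [h3] at h2
  refine Ideal.map_le_iff_le_comap.2 ?_ h2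
  refine Ideal.span_le.2 ?_
  rintro _ ⟨i, rfl⟩
  have h4 : e.symm (algebraMap (MvPolynomial σ R) (AdicCompletion (MvPolynomial.idealOfVars σ R)
      (MvPolynomial σ R)) (MvPolynomial.X i)) = MvPowerSeries.X i :=
    (e.symm.commutes (MvPolynomial.X i)).trans (MvPolynomial.coe_X i)
  exact Ideal.mem_comap.2 (h4.symm ▸ Ideal.subset_span ⟨i, rfl⟩)

/-- If `I = (b₁, …, b_s)`, the adic completion of `B` along `I` is a quotient of `B[[X₁, …, X_s]]`
via `X_i ↦ b_i`, hence is Noetherian. -/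
theorem adicCompletion_isNoetherianRing {B : Type*} [CommRing B] [IsNoetherianRing B]
    (I : Ideal B) : IsNoetherianRing (AdicCompletion I B) := by
  classical
  obtain ⟨s, hs⟩ := IsNoetherian.noetherian I
  let e : MvPolynomial s B →+* B := MvPolynomial.eval (fun i : s => (i : B))
  have he : (MvPolynomial.idealOfVars s B) ≤ I.comap e := by
    refine Ideal.span_le.2 ?_
    rintro _ ⟨i, rfl⟩
    have : (i : B) ∈ I := hs ▸ Submodule.subset_span i.2
    simpa [e] using this
  have hen (n : ℕ) : (MvPolynomial.idealOfVars s B) ^ n ≤ (I ^ n).comap e :=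
    (Ideal.pow_right_mono he n).trans (Ideal.le_comap_pow e n)
  let F (n : ℕ) : MvPowerSeries s B →+* B ⧸ I ^ n :=
    (Ideal.quotientMap (I ^ n) e (hen n)).comp (MvPowerSeries.truncTotalAlgHom s B n).toRingHom
  have hFval (n : ℕ) (x : MvPowerSeries s B) :
      F n x = Ideal.Quotient.mk (I ^ n) (e (MvPowerSeries.truncTotal n x)) := rfl
  have hF {m n : ℕ} (h : m ≤ n) : (Ideal.Quotient.factorPow I h).comp (F n) = F m := by
    ext x
    rw [RingHom.comp_apply, hFval, hFval]
    change Ideal.Quotient.mk (I ^ m) _ = _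
    rw [Ideal.Quotient.eq, ← map_sub]
    exact hen m (MvPowerSeries.truncTotal_sub_truncTotal_mem_pow_idealOfVars h le_rfl x)
  let Φ := AdicCompletion.liftRingHom I F hF
  -- on polynomials `Φ` is evaluation at the chosen generators of `I`
  have hΦ (q : MvPolynomial s B) : Φ q = algebraMap B _ (e q) := by
    refine AdicCompletion.ext_evalₐ fun n => ?_
    rw [AdicCompletion.evalₐ_liftRingHom, hFval, AlgHom.commutes]
    change _ = Ideal.Quotient.mk (I ^ n) (e q)
    rw [Ideal.Quotient.eq, ← map_sub]
    refine hen n ?_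
    rw [MvPolynomial.mem_pow_idealOfVars_iff']
    intro d hd
    rw [MvPolynomial.coeff_sub, MvPowerSeries.coeff_truncTotal _ hd]
    simp
  have hΦX (i : s) : Φ (MvPowerSeries.X i) = algebraMap B (AdicCompletion I B) i := by
    rw [← MvPolynomial.coe_X, hΦ]
    exact congrArg _ (MvPolynomial.eval_X i)
  have hmap : (Ideal.span (Set.range (MvPowerSeries.X : s → MvPowerSeries s B))).map Φ
      = I.map (algebraMap B (AdicCompletion I B)) := by
    refine le_antisymm (Ideal.map_le_iff_le_comap.2 (Ideal.span_le.2 ?_))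
      (Ideal.map_le_iff_le_comap.2 ?_)
    · rintro _ ⟨i, rfl⟩
      have hi : (i : B) ∈ I := hs ▸ Submodule.subset_span i.2
      refine Ideal.mem_comap.2 ?_
      rw [hΦX]
      exact Ideal.mem_map_of_mem _ hi
    · refine hs.symm.trans_le (Ideal.span_le.2 fun b hb => Ideal.mem_comap.2 ?_)
      rw [← hΦX ⟨b, hb⟩]
      exact Ideal.mem_map_of_mem _ (Ideal.subset_span ⟨_, rfl⟩)
  have hc : IsAdicComplete I (AdicCompletion I B) :=
    AdicCompletion.isAdicComplete (IsNoetherian.noetherian I)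
  have hh : IsHausdorff
      ((Ideal.span (Set.range (MvPowerSeries.X : s → MvPowerSeries s B))).map Φ)
      (AdicCompletion I B) := by
    rw [hmap, IsHausdorff.map_algebraMap_iff]
    exact hc.toIsHausdorff
  -- `Φ` is surjective modulo `I`, its source is complete and its target is separated
  have hsurj : Function.Surjective Φ := by
    refine surjective_of_mk_map_comp_surjective
      (I := Ideal.span (Set.range (MvPowerSeries.X : s → MvPowerSeries s B))) Φ ?_
    intro x
    obtain ⟨x, rfl⟩ := Ideal.Quotient.mk_surjective x
    obtain ⟨b, hb⟩ := Ideal.Quotient.mk_surjective (AdicCompletion.evalOneₐ I x)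
    refine ⟨(MvPolynomial.C b : MvPolynomial s B), ?_⟩
    rw [RingHom.comp_apply, hΦ, Ideal.Quotient.eq, hmap,
      ← AdicCompletion.ker_evalOneₐ_eq_map _ (IsNoetherian.noetherian I)]
    change AdicCompletion.evalOneₐ I _ = 0
    rw [map_sub, AlgHom.commutes, ← hb]
    simp [e]
  exact isNoetherianRing_of_surjective _ _ Φ hsurj

/-! ### One-dimensional Noetherian domains -/

/-- If every nonzero element of a Noetherian domain `D` divides a power of `w` (that is, `D[1/w]` is a
field), then the nonzero primes of `D` are maximal. All of them contain `w`; were one not minimal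
over `w`, prime avoidance would give a nonzero `f` in it outside the finitely many minimal primes of
`w`, and a minimal prime of `f` would have height at least two, contradicting Krull's theorem. -/
theorem maximal_of_prime_of_dvd_pow {D : Type*} [CommRing D] [IsDomain D] [IsNoetherianRing D]
    (w : D) (hw0 : w ≠ 0) (hw : ∀ x : D, x ≠ 0 → ∃ n, x ∣ w ^ n) (Q : Ideal D) [hQ : Q.IsPrime]
    (hQ0 : Q ≠ ⊥) : Q.IsMaximal := by
  have hmem (P : Ideal D) (hP : P.IsPrime) (hP0 : P ≠ ⊥) : w ∈ P := by
    obtain ⟨x, hx, hx0⟩ := Submodule.exists_mem_ne_zero_of_ne_bot hP0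
    obtain ⟨n, hn⟩ := hw x hx0
    exact hP.mem_of_pow_mem n (P.mem_of_dvd hn hx)
  have key (P : Ideal D) (hP : P.IsPrime) (hP0 : P ≠ ⊥) : P ∈ (Ideal.span {w}).minimalPrimes := by
    by_contra hmin
    have hwP : Ideal.span {w} ≤ P := (Ideal.span_singleton_le_iff_mem _).2 (hmem P hP hP0)
    have hne : ¬ ∃ P' ∈ (Ideal.span {w}).minimalPrimes, P ≤ P' := by
      rintro ⟨P', hP', hle⟩
      exact hmin (le_antisymm hle (hP'.2 ⟨hP, hwP⟩ hle) ▸ hP')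
    have hsub : ¬ ((P : Set D) ⊆ ⋃ i ∈ (Ideal.span {w}).minimalPrimes, (i : Set D)) := fun h =>
      hne ((Ideal.subset_union_prime_finite (f := fun i => i)
        (Ideal.finite_minimalPrimes_of_isNoetherianRing D (Ideal.span {w})) ⊥ ⊥
        (fun P' hP' _ _ => hP'.1.1)).1 h)
    obtain ⟨f, hfP, hf⟩ := Set.not_subset.1 hsub
    simp only [Set.mem_iUnion, not_exists, SetLike.mem_coe] at hf
    obtain ⟨P₁, hP₁, hP₁P⟩ := Ideal.exists_minimalPrimes_le
      ((Ideal.span_singleton_le_iff_mem P).2 hfP)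
    have hP₁p : P₁.IsPrime := hP₁.1.1
    have hfP₁ : f ∈ P₁ := (Ideal.span_singleton_le_iff_mem _).1 hP₁.1.2
    obtain ⟨P₀, hP₀, -⟩ := Ideal.exists_minimalPrimes_le hwP
    have hf0 : f ≠ 0 := fun h => hf P₀ hP₀ (h ▸ P₀.zero_mem)
    have hP₁0 : P₁ ≠ ⊥ := fun h => hf0 (by simpa [h] using hfP₁)
    have ht := Ideal.height_le_one_of_isPrincipal_of_mem_minimalPrimes (Ideal.span {f}) P₁ hP₁
    obtain ⟨P₂, hP₂, hP₂P₁⟩ := Ideal.exists_minimalPrimes_le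
      ((Ideal.span_singleton_le_iff_mem P₁).2 (hmem P₁ hP₁p hP₁0))
    have hP₂p : P₂.IsPrime := hP₂.1.1
    have hlt : P₂ < P₁ := lt_of_le_of_ne hP₂P₁ fun h => hf P₂ hP₂ (h ▸ hfP₁)
    have h0 : P₂.height < 1 := (Ideal.height_strict_mono_of_isPrime hlt).trans_le ht
    rw [Order.lt_one_iff, Ideal.height_eq_zero_iff_eq_bot] at h0
    have : w ∈ P₂ := (Ideal.span_singleton_le_iff_mem _).1 hP₂.1.2
    exact hw0 (by simpa [h0] using this)
  obtain ⟨M, hM, hle⟩ := Q.exists_le_maximal hQ.ne_top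
  have hM0 : M ≠ ⊥ := fun h => hQ0 (le_bot_iff.1 (h ▸ hle))
  have h1 := key M hM.isPrime hM0
  have h2 := key Q hQ hQ0
  rwa [le_antisymm hle (h1.2 h2.1 hle)]

/-- Let `D` be a Noetherian domain in which every nonzero element divides a power of `w`, and let
`J ∋ p` be an ideal in the Jacobson radical which contains a power of `w` and for which `D / J` is a
ring of finite type over `𝔽_p`. Then `D / w ^ m` is finite for every `m`: the ring `D / J` is
Artinian of finite type over `𝔽_p`, hence finite, and a power of `J` lies in `(w ^ m)`. The finite
type condition is expressed by a map `F` from an integral polynomial ring that is surjective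
modulo `J`. -/
theorem finite_quotient_span_pow {D : Type*} [CommRing D] [IsDomain D] [IsNoetherianRing D]
    (p : ℕ) [Fact p.Prime]
    (w : D) (hw0 : w ≠ 0) (hw : ∀ x : D, x ≠ 0 → ∃ n, x ∣ w ^ n)
    (J : Ideal D) (hJ : J ≤ (⊥ : Ideal D).jacobson) (hp : (p : D) ∈ J) (hwJ : ∃ k, w ^ k ∈ J)
    (n : ℕ) (F : MvPolynomial (Fin n) ℤ →+* D)
    (hF : ∀ d, ∃ q, d - F q ∈ J) (m : ℕ) : Finite (D ⧸ Ideal.span {w ^ m}) := by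
  obtain ⟨k, hk⟩ := hwJ
  have hJ0 : J ≠ ⊥ := fun h => pow_ne_zero k hw0 (by simpa [h] using hk)
  have hart : IsArtinianRing (D ⧸ J) := by
    have : Ring.KrullDimLE 0 (D ⧸ J) := by
      rw [Ring.krullDimLE_zero_iff]
      intro P hP
      have hle : J ≤ P.comap (Ideal.Quotient.mk J) := by
        intro x hx
        rw [Ideal.mem_comap, Ideal.Quotient.eq_zero_iff_mem.2 hx]
        exact P.zero_mem
      have hmax := maximal_of_prime_of_dvd_pow w hw0 hw (P.comap (Ideal.Quotient.mk J))
        (fun h => hJ0 (le_bot_iff.1 (h ▸ hle)))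
      rw [← Ideal.map_comap_of_surjective _ Ideal.Quotient.mk_surjective P]
      exact Ideal.IsMaximal.map_of_surjective_of_ker_le Ideal.Quotient.mk_surjective
        (by rwa [Ideal.mk_ker])
    exact IsNoetherianRing.isArtinianRing_of_krullDimLE_zero
  have hfin : Finite (D ⧸ J) := by
    rcases subsingleton_or_nontrivial (D ⧸ J) with h | h
    · infer_instance
    have hp0 : (p : D ⧸ J) = 0 := by
      have := Ideal.Quotient.eq_zero_iff_mem.2 hp
      simpa using this
    have : CharP (D ⧸ J) p := by
      rw [← CharP.ringChar_of_prime_eq_zero Fact.out hp0]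
      exact ringChar.charP _
    let : Algebra (ZMod p) (D ⧸ J) := ZMod.algebra _ p
    let G : MvPolynomial (Fin n) (ZMod p) →ₐ[ZMod p] D ⧸ J :=
      MvPolynomial.aeval fun i => Ideal.Quotient.mk J (F (MvPolynomial.X i))
    have hG (q : MvPolynomial (Fin n) ℤ) :
        G (MvPolynomial.map (Int.castRingHom _) q) = Ideal.Quotient.mk J (F q) := by
      have : (G.toRingHom.comp (MvPolynomial.map (Int.castRingHom _))) =
          (Ideal.Quotient.mk J).comp F := by
        refine MvPolynomial.ringHom_ext (fun z => by simp) fun i => by simp [G]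
      exact congr($this q)
    have : Algebra.FiniteType (ZMod p) (D ⧸ J) := by
      refine Algebra.FiniteType.of_surjective G fun x => ?_
      obtain ⟨d, rfl⟩ := Ideal.Quotient.mk_surjective x
      obtain ⟨q, hq⟩ := hF d
      exact ⟨_, (hG q).trans (Ideal.Quotient.eq.2 hq).symm⟩
    have := Module.finite_of_isArtinianRing (ZMod p) (D ⧸ J)
    exact Module.finite_of_finite (ZMod p)
  have hrad : J ≤ (Ideal.span {w ^ m}).radical := by
    rw [Ideal.radical_eq_sInf]
    refine le_sInf ?_
    rintro P ⟨hle, hP⟩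
    have hwP : w ^ m ∈ P := (Ideal.span_singleton_le_iff_mem _).1 hle
    have hP0 : P ≠ ⊥ := fun h => pow_ne_zero m hw0 (by simpa [h] using hwP)
    have := maximal_of_prime_of_dvd_pow w hw0 hw P hP0
    exact hJ.trans (sInf_le ⟨bot_le, this⟩)
  obtain ⟨r, hr⟩ := Ideal.exists_pow_le_of_le_radical_of_fg hrad (IsNoetherian.noetherian J)
  have := Ideal.finite_quotient_pow (IsNoetherian.noetherian J) r
  exact Finite.of_surjective _ (Ideal.Quotient.factor_surjective hr)

/-! ### Finite generation over a complete ring -/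

/-- The elements `L m = ∑ l, y ^ l * c (m + l)`, characterised by the recursion they satisfy. -/
theorem exists_geometric_sums {A : Type*} [CommRing A] (I : Ideal A) [IsAdicComplete I A]
    {y : A} (hy : y ∈ I) (c : ℕ → A) : ∃ L : ℕ → A, ∀ m, L m = c m + y * L (m + 1) := by
  let s (m n : ℕ) : A := ∑ l ∈ Finset.range n, y ^ l * c (m + l)
  have hs (m n : ℕ) : s m (n + 1) = c m + y * s (m + 1) n := by
    simp only [s, Finset.sum_range_succ', Finset.mul_sum]
    rw [add_comm]
    congr 1
    · simp
    · refine Finset.sum_congr rfl fun l _ => ?_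
      rw [show m + 1 + l = m + (l + 1) by ring]
      ring
  have hcau (m : ℕ) {a b : ℕ} (hab : a ≤ b) : s m a ≡ s m b [SMOD (I ^ a • ⊤ : Submodule A A)] := by
    rw [SModEq.comm, SModEq.sub_mem, smul_eq_mul, Ideal.mul_top]
    simp only [s]
    rw [← Finset.sum_range_add_sum_Ico _ hab, add_sub_cancel_left]
    refine Ideal.sum_mem _ fun l hl => Ideal.mul_mem_right _ _ ?_
    exact Ideal.pow_le_pow_right (Finset.mem_Ico.1 hl).1 (Ideal.pow_mem_pow hy l)
  choose L hL using fun m => IsPrecomplete.prec' (I := I) (s m) (hcau m)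
  refine ⟨L, fun m => ?_⟩
  rw [IsHausdorff.eq_iff_smodEq (I := I)]
  intro n
  have h1 : L m ≡ s m (n + 1) [SMOD (I ^ n • ⊤ : Submodule A A)] :=
    ((hL m (n + 1)).mono (Submodule.smul_mono_left (Ideal.pow_le_pow_right n.le_succ))).symm
  refine h1.trans ?_
  rw [hs]
  exact SModEq.rfl.add ((hL (m + 1) n).smul y)

/-- A form of the topological Nakayama lemma: if `A` is complete, `M` is separated for `y` and a
finite set `E` meets every class of `M / y M`, then `E` generates `M`. The separatedness hypothesis
`hsep` only concerns compatible sequences of successive quotients by `y`. -/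
theorem span_eq_top_of_separated {A M : Type*} [CommRing A] [AddCommGroup M] [Module A M]
    (I : Ideal A) [IsAdicComplete I A] {y : A} (hy : y ∈ I)
    (hsep : ∀ z : ℕ → M, (∀ n, z n = y • z (n + 1)) → z 0 = 0)
    (E : Finset M) (hE : ∀ x : M, ∃ e ∈ E, ∃ x', x = e + y • x') :
    Submodule.span A (E : Set M) = ⊤ := by
  classical
  choose e he f hf using hE
  refine eq_top_iff.2 fun x _ => ?_
  let X (n : ℕ) : M := f^[n] x
  have hX (n : ℕ) : X n = e (X n) + y • X (n + 1) := by
    simp only [X, Function.iterate_succ_apply']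
    exact hf _
  choose L hL using fun j : M =>
    exists_geometric_sums I hy (fun n => if e (X n) = j then 1 else 0)
  have h0 := hsep (fun n => X n - ∑ j ∈ E, L j n • j) fun n => by
    have : ∑ j ∈ E, L j n • j = e (X n) + y • ∑ j ∈ E, L j (n + 1) • j := by
      rw [Finset.smul_sum]
      conv_lhs => enter [2, j]; rw [hL j n, add_smul, mul_smul, ite_smul, one_smul, zero_smul]
      rw [Finset.sum_add_distrib, Finset.sum_ite_eq, if_pos (he _)]
    rw [this, smul_sub]
    nth_rewrite 1 [hX n]
    abel
  have h1 : x = ∑ j ∈ E, L j 0 • j := sub_eq_zero.1 h0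
  rw [h1]
  exact Submodule.sum_mem _ fun j hj => Submodule.smul_mem _ _ (Submodule.subset_span hj)

/-- Let `A` be complete, `A → k` a ring map to a field, and `D` a subring of `k` containing `w`,
with `k = D[1/w]`, with finite quotients `D / w ^ m`, and `w`-adically separated. If the image of `A` is
bounded (contained in `w ^ (-N) D`) and the image `τ` of `y` is nonzero and topologically nilpotent,
then `D` is integral over `A`: the `A`-module `M` spanned by `D` is again bounded, so `M / τ M` is
finite, `M` is a finite `A`-module, and it is a faithful `D`-module. -/
theorem isIntegral_of_bounded {A k : Type*} [CommRing A] [Field k] [Algebra A k]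
    (I : Ideal A) [IsAdicComplete I A] {y : A} (hy : y ∈ I) (hτ : algebraMap A k y ≠ 0)
    (D : Subring k) (w : D) (hw : (w : k) ≠ 0)
    (hfin : ∀ m, Finite (D ⧸ Ideal.span {w ^ m}))
    (hsep : ∀ x : k, (∀ m, ∃ d : D, x = w ^ m * d) → x = 0)
    (hbdd : ∃ N, ∀ a, (w : k) ^ N * algebraMap A k a ∈ D)
    (hgen : ∀ x : k, ∃ n, (w : k) ^ n * x ∈ D)
    (hnil : ∀ j, ∃ n, ∃ d : D, algebraMap A k y ^ n = w ^ j * d)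
    (d : D) : IsIntegral A (d : k) := by
  classical
  obtain ⟨N, hN⟩ := hbdd
  set τ := algebraMap A k y
  let M : Submodule A k := Submodule.span A (D : Set k)
  have hDM (d : D) : (d : k) ∈ M := Submodule.subset_span d.2
  have hMN (x : k) (hx : x ∈ M) : (w : k) ^ N * x ∈ D := by
    suffices ∀ a, (w : k) ^ N * (algebraMap A k a * x) ∈ D by simpa using this 1
    induction hx using Submodule.span_induction with
    | mem x hx => exact fun a => by simpa [mul_assoc] using D.mul_mem (hN a) hx
    | zero => exact fun a => by simp
    | add x x' _ _ h h' => exact fun a => by simpa [mul_add] using D.add_mem (h a) (h' a)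
    | smul b x _ h =>
      intro a
      rw [Algebra.smul_def, ← mul_assoc (algebraMap A k a), ← map_mul]
      exact h _
  -- the inverse of `τ` lies in `w ^ (-j) D`
  obtain ⟨j, δ, hδ⟩ : ∃ j, ∃ δ : D, (w : k) ^ j = τ * δ := by
    obtain ⟨j, hj⟩ := hgen τ⁻¹
    exact ⟨j, ⟨_, hj⟩, by field_simp⟩
  have hMsep (z : ℕ → M) (hz : ∀ n, z n = y • z (n + 1)) : z 0 = 0 := by
    have hz' (n : ℕ) : (z 0 : k) = τ ^ n * z n := by
      induction n with
      | zero => simp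
      | succ n ih =>
        rw [ih, hz n, pow_succ]
        simp [Algebra.smul_def, τ, mul_assoc]
    have : (w : k) ^ N * (z 0 : k) = 0 := by
      refine hsep _ fun m => ?_
      obtain ⟨n, d, hd⟩ := hnil m
      refine ⟨d * ⟨_, hMN _ (z n).2⟩, ?_⟩
      rw [hz' n, hd]
      push_cast
      ring
    exact Subtype.ext ((mul_eq_zero.1 this).resolve_left (pow_ne_zero _ hw))
  have := hfin (N + j)
  have := Fintype.ofFinite (D ⧸ Ideal.span {w ^ (N + j)})
  let q (x : M) : D ⧸ Ideal.span {w ^ (N + j)} := Ideal.Quotient.mk _ ⟨_, hMN x x.2⟩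
  -- representatives of the classes that are met by `M`
  have hrep : ∃ r : (D ⧸ Ideal.span {w ^ (N + j)}) → M, ∀ x, q (r (q x)) = q x := by
    refine ⟨fun c => if h : ∃ x, q x = c then h.choose else 0, fun x => ?_⟩
    have h : ∃ x', q x' = q x := ⟨x, rfl⟩
    simp only [dif_pos h]
    exact h.choose_spec
  obtain ⟨r, hr⟩ := hrep
  have hspan := span_eq_top_of_separated I hy hMsep (Finset.univ.image r) fun x => by
    refine ⟨r (q x), Finset.mem_image_of_mem _ (Finset.mem_univ _), ?_⟩
    have h1 := Ideal.Quotient.eq.1 (hr x).symm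
    obtain ⟨d, hd⟩ := Ideal.mem_span_singleton.1 h1
    have h2 : (w : k) ^ N * x - w ^ N * r (q x) = w ^ (N + j) * d := by
      simpa using congr((($hd : D) : k))
    refine ⟨⟨δ * d, hDM (δ * d)⟩, Subtype.ext ?_⟩
    have h3 : (w : k) ^ N * (x - (r (q x) + τ * (δ * d))) = 0 := by
      rw [← mul_assoc τ, ← hδ]
      linear_combination h2
    have h4 := (mul_eq_zero.1 h3).resolve_left (pow_ne_zero _ hw)
    simpa [Algebra.smul_def, τ] using sub_eq_zero.1 h4
  have hfg : M.FG := (Submodule.fg_top _).1 ⟨_, hspan⟩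
  refine isIntegral_of_smul_mem_submodule M ?_ hfg (d : k) ?_
  · intro h
    have := hDM 1
    rw [h] at this
    simp at this
  · intro x hx
    induction hx using Submodule.span_induction with
    | mem x hx => exact hDM (d * ⟨x, hx⟩)
    | zero => simp
    | add x x' _ _ h h' => rw [smul_add]; exact M.add_mem h h'
    | smul b x _ h => rw [smul_comm]; exact M.smul_mem _ h

/-! ### Integrality of the residue field extension -/

/-- The abstract form of the result. Here `ψ : A' → k` induces a surjection from `A'[1/w]` onto the
field `k`, and `f : R → k` is a ring map which is bounded on the image of `A` and sends the unit
`α y` to a topologically nilpotent element. Then `f` is integral. -/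
theorem isIntegral_of_continuous (p : ℕ) [Fact p.Prime] {A A' R k : Type*} [CommRing A]
    [CommRing A'] [CommRing R] [Field k] (I : Ideal A) [IsAdicComplete I A]
    (I' : Ideal A') [IsAdicComplete I' A'] [IsNoetherianRing A'] (hp : (p : A') ∈ I')
    (n : ℕ) (F : MvPolynomial (Fin n) ℤ →+* A') (hF : ∀ a, ∃ q, a - F q ∈ I')
    (α : A →+* R) (f : R →+* k) {y : A} (hy : y ∈ I) (hyu : IsUnit (α y))
    (ψ : A' →+* k) (w : A') (hw : ψ w ≠ 0) (hwI : ∃ K, ∃ v ∈ I', ψ v = ψ w ^ K)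
    (hgen : ∀ x, ∃ n a, ψ w ^ n * x = ψ a)
    (hbdd : ∃ N, ∀ a, ∃ b, ψ w ^ N * f (α a) = ψ b)
    (hnil : ∀ j, ∃ n b, f (α y) ^ n = ψ w ^ j * ψ b) : f.IsIntegral := by
  let D : Subring k := ψ.range
  let ψ' : A' →+* D := ψ.rangeRestrict
  have hψ' : Function.Surjective ψ' := ψ.rangeRestrict_surjective
  have hD (a : A') : ψ a ∈ D := ⟨a, rfl⟩
  have hNoeth : IsNoetherianRing D := isNoetherianRing_of_surjective _ _ ψ' hψ'
  let J : Ideal D := I'.map ψ'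
  have hJ : J ≤ (⊥ : Ideal D).jacobson := by
    refine Ideal.map_le_iff_le_comap.2 fun x hx => Ideal.mem_jacobson_bot.2 fun d => ?_
    obtain ⟨a, rfl⟩ := hψ' d
    have h := Ideal.mem_jacobson_bot.1 (IsAdicComplete.le_jacobson_bot I' hx) a
    simpa using h.map ψ'
  have hw0 : ψ' w ≠ 0 := fun h => hw congr((($h : D) : k))
  obtain ⟨K, v, hv, hvw⟩ := hwI
  have hwJ : ψ' w ^ K ∈ J := by
    have : ψ' v = ψ' w ^ K := Subtype.ext hvw
    exact this ▸ Ideal.mem_map_of_mem ψ' hv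
  have hdvd (x : D) (hx : x ≠ 0) : ∃ n, x ∣ ψ' w ^ n := by
    obtain ⟨n, a, ha⟩ := hgen (x : k)⁻¹
    refine ⟨n, ψ' a, Subtype.ext ?_⟩
    have hx' : (x : k) ≠ 0 := fun h => hx (Subtype.ext h)
    change ψ w ^ n = x * ψ a
    rw [← ha]
    field_simp
  have hfin := finite_quotient_span_pow p (ψ' w) hw0 hdvd J hJ
    (by simpa using Ideal.mem_map_of_mem ψ' hp) ⟨K, hwJ⟩ n (ψ'.comp F) fun d => by
      obtain ⟨a, rfl⟩ := hψ' d
      obtain ⟨q, hq⟩ := hF a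
      exact ⟨q, by simpa using Ideal.mem_map_of_mem ψ' hq⟩
  -- `w` is not a unit of `D`, as it lies in the Jacobson radical
  have hne : Ideal.span {ψ' w} ≠ ⊤ := by
    intro h
    have hu : IsUnit (ψ' w) := Ideal.span_singleton_eq_top.1 h
    have := Ideal.mem_jacobson_bot.1 (hJ hwJ)
    obtain ⟨c, hc⟩ := (hu.pow K).exists_right_inv
    have h0 := this (-c)
    rw [mul_neg, hc, neg_add_cancel] at h0
    exact not_isUnit_zero h0
  have hsep (x : k) (hx : ∀ m, ∃ d : D, x = (ψ' w : k) ^ m * d) : x = 0 := by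
    obtain ⟨d, hd⟩ := hx 0
    have : d ∈ ⨅ i : ℕ, Ideal.span {ψ' w} ^ i := by
      refine (Ideal.mem_iInf).2 fun m => ?_
      rw [Ideal.span_singleton_pow, Ideal.mem_span_singleton]
      obtain ⟨d', hd'⟩ := hx m
      exact ⟨d', Subtype.ext (by simpa [hd] using hd')⟩
    rw [Ideal.iInf_pow_eq_bot_of_isDomain _ hne, Ideal.mem_bot] at this
    simp [hd, this]
  let _ : Algebra A k := (f.comp α).toAlgebra
  have hτ : f (α y) ≠ 0 := (hyu.map f).ne_zero
  obtain ⟨N, hN⟩ := hbdd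
  have hint := isIntegral_of_bounded I hy hτ D (ψ' w) hw hfin hsep
    ⟨N, fun a => by
      obtain ⟨b, hb⟩ := hN a
      exact ⟨b, hb.symm⟩⟩
    (fun x => by
      obtain ⟨n, a, ha⟩ := hgen x
      exact ⟨n, a, ha.symm⟩)
    (fun j => by
      obtain ⟨n, b, hb⟩ := hnil j
      exact ⟨n, ψ' b, hb⟩)
  have hint' (d : k) (hd : d ∈ D) : f.IsIntegralElem d := by
    obtain ⟨P, hP, h⟩ := hint ⟨d, hd⟩
    refine ⟨P.map α, hP.map α, ?_⟩
    rw [Polynomial.eval₂_map]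
    exact h
  -- a power of the unit `α y` carries `x` into `D`
  intro x
  obtain ⟨j, a, ha⟩ := hgen x
  obtain ⟨n, b, hb⟩ := hnil j
  obtain ⟨c, hc⟩ := hyu.exists_right_inv
  have hx : x = f (c ^ n) * ψ (a * b) := by
    have h1 : f (α y) * f c = 1 := by rw [← map_mul, hc, map_one]
    calc x = (f (α y) * f c) ^ n * x := by rw [h1]; simp
      _ = f c ^ n * (f (α y) ^ n * x) := by ring
      _ = f (c ^ n) * ψ (a * b) := by rw [hb, map_mul, ← ha, map_pow]; ring
  rw [hx]
  exact RingHom.IsIntegralElem.mul f (RingHom.isIntegralElem_map f) (hint' _ (hD _))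

theorem sub_intCast_mem_span (p : ℕ) [Fact p.Prime] (z : ℤ_[p]) :
    ∃ c : ℤ, z - c ∈ Ideal.span {(p : ℤ_[p])} := by
  obtain ⟨c, -, hc⟩ := PadicInt.exists_mem_range z
  rw [PadicInt.maximalIdeal_eq_span_p] at hc
  exact ⟨c, by simpa using hc⟩

theorem exists_sub_map_mem_stdIdeal (p m n : ℕ) [Fact p.Prime]
    (b : MvPolynomial (Fin n) (MvPowerSeries (Fin m) ℤ_[p])) :
    ∃ q : MvPolynomial (Fin n) ℤ,
      b - MvPolynomial.map (Int.castRingHom _) q ∈ stdIdeal p m n := by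
  induction b using MvPolynomial.induction_on with
  | C c =>
    obtain ⟨z, hz⟩ := sub_intCast_mem_span p (MvPowerSeries.constantCoeff c)
    refine ⟨MvPolynomial.C z, ?_⟩
    have h1 := mvPowerSeries_mem_span_X
      (c - MvPowerSeries.C (MvPowerSeries.constantCoeff c)) (by simp)
    have h2 : MvPolynomial.C (c - MvPowerSeries.C (MvPowerSeries.constantCoeff c))
        ∈ stdIdeal p m n := by
      refine Ideal.mem_comap.1 ((Ideal.span_le (I := (stdIdeal p m n).comap MvPolynomial.C)).2 ?_ h1)
      rintro _ ⟨i, rfl⟩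
      exact Ideal.subset_span (Or.inr ⟨i, rfl⟩)
    obtain ⟨e, he⟩ := Ideal.mem_span_singleton.1 hz
    have h3 : (p : MvPolynomial (Fin n) (MvPowerSeries (Fin m) ℤ_[p])) ∈ stdIdeal p m n :=
      Ideal.subset_span (Or.inl rfl)
    have h4 := congrArg (fun t => MvPolynomial.C (σ := Fin n)
      (MvPowerSeries.C (σ := Fin m) t)) he
    have h5 := Ideal.add_mem _ h2 (Ideal.mul_mem_right
      (MvPolynomial.C (MvPowerSeries.C (σ := Fin m) e)) _ h3)
    simp only [map_sub, map_mul, map_intCast, map_natCast] at h4 h5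
    rw [← h4] at h5
    simpa using h5
  | add b c hb hc =>
    obtain ⟨q, hq⟩ := hb
    obtain ⟨r, hr⟩ := hc
    refine ⟨q + r, ?_⟩
    rw [map_add, add_sub_add_comm]
    exact Ideal.add_mem _ hq hr
  | mul_X b i hb =>
    obtain ⟨q, hq⟩ := hb
    refine ⟨q * MvPolynomial.X i, ?_⟩
    rw [map_mul, MvPolynomial.map_X, ← sub_mul]
    exact Ideal.mul_mem_right _ _ hq

/-- Modulo `I`, the ring `A_{m,n}` is generated by `X₁, …, X_n`. -/
theorem exists_sub_mem_map_stdIdeal (p m n : ℕ) [Fact p.Prime] (a : Amn p m n) :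
    ∃ q : MvPolynomial (Fin n) ℤ,
      a - (algebraMap (MvPolynomial (Fin n) (MvPowerSeries (Fin m) ℤ_[p])) (Amn p m n)).comp
        (MvPolynomial.map (Int.castRingHom _)) q ∈
          (stdIdeal p m n).map (algebraMap _ (Amn p m n)) := by
  obtain ⟨b, hb⟩ := Ideal.Quotient.mk_surjective (AdicCompletion.evalOneₐ (stdIdeal p m n) a)
  obtain ⟨q, hq⟩ := exists_sub_map_mem_stdIdeal p m n b
  refine ⟨q, ?_⟩
  rw [← AdicCompletion.ker_evalOneₐ_eq_map _ (IsNoetherian.noetherian _)]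
  change AdicCompletion.evalOneₐ (stdIdeal p m n) _ = 0
  rw [map_sub, RingHom.comp_apply, AlgHom.commutes, ← hb]
  exact (map_sub (Ideal.Quotient.mk _) _ _).symm.trans (Ideal.Quotient.eq_zero_iff_mem.2 hq)

theorem exists_lift_of_mem_defIdeal (p m n : ℕ) [Fact p.Prime] (𝔞 : Ideal (Amn p m n))
    (x : Amn p m n ⧸ 𝔞) (hx : x ∈ defIdeal p m n 𝔞) :
    ∃ y ∈ (stdIdeal p m n).map (algebraMap _ (Amn p m n)), Ideal.Quotient.mk 𝔞 y = x := by
  rw [defIdeal, ← Ideal.map_map] at hx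
  exact (Ideal.mem_map_iff_of_surjective _ Ideal.Quotient.mk_surjective).1 hx

theorem isAdicComplete_Amn (p m n : ℕ) [Fact p.Prime] :
    IsAdicComplete ((stdIdeal p m n).map (algebraMap _ (Amn p m n))) (Amn p m n) :=
  AdicCompletion.isAdicComplete_self _ (IsNoetherian.noetherian _)

/-- **Statement 13**. Let `R = R₀[1/ϖ_R]` and `S = S₀[1/ϖ_S]` be complete Tate rings with
rings of definition `R₀ = A_{m,n}/𝔞_R` and `S₀ = A_{m',n'}/𝔞_S` formally of finite type
over `ℤ_p` (with `ϖ_R, ϖ_S` topologically nilpotent), and let `g : R → S` be a ring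
homomorphism that is continuous, i.e. `g(R₀) ⊆ ϖ_S^{-N}·S₀` for some `N ≥ 0` and
`g(ϖ_R)` is topologically nilpotent in `S` (for every `j` there is `k` with
`g(ϖ_R)^k ∈ ϖ_S^j·S₀`).  Then for every maximal ideal `𝔮` of `S`, the preimage
`g⁻¹(𝔮)` is a maximal ideal of `R`. -/
theorem comap_maximal_of_continuous (p : ℕ) [Fact p.Prime]
    (mR nR : ℕ) (𝔞R : Ideal (Amn p mR nR)) (ϖR : Amn p mR nR ⧸ 𝔞R)
    (hϖR : ∀ j : ℕ, ∃ k : ℕ, ϖR ^ k ∈ (defIdeal p mR nR 𝔞R) ^ j)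
    (mS nS : ℕ) (𝔞S : Ideal (Amn p mS nS)) (ϖS : Amn p mS nS ⧸ 𝔞S)
    (hϖS : ∀ j : ℕ, ∃ k : ℕ, ϖS ^ k ∈ (defIdeal p mS nS 𝔞S) ^ j)
    (g : Localization.Away ϖR →+* Localization.Away ϖS)
    (hcont₁ : ∃ N : ℕ, ∀ a : Amn p mR nR ⧸ 𝔞R,
      algebraMap (Amn p mS nS ⧸ 𝔞S) (Localization.Away ϖS) ϖS ^ N *
        g (algebraMap (Amn p mR nR ⧸ 𝔞R) (Localization.Away ϖR) a)
        ∈ (algebraMap (Amn p mS nS ⧸ 𝔞S) (Localization.Away ϖS)).range)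
    (hcont₂ : ∀ j : ℕ, ∃ k : ℕ,
      ∃ b ∈ (algebraMap (Amn p mS nS ⧸ 𝔞S) (Localization.Away ϖS)).range,
        g (algebraMap (Amn p mR nR ⧸ 𝔞R) (Localization.Away ϖR) ϖR) ^ k =
          algebraMap (Amn p mS nS ⧸ 𝔞S) (Localization.Away ϖS) ϖS ^ j * b) :
    ∀ 𝔮 : Ideal (Localization.Away ϖS), 𝔮.IsMaximal → (Ideal.comap g 𝔮).IsMaximal := by
  intro 𝔮 h𝔮
  let _ : Field (Localization.Away ϖS ⧸ 𝔮) := Ideal.Quotient.field 𝔮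
  have _ := isAdicComplete_Amn p mR nR
  have _ := isAdicComplete_Amn p mS nS
  have _ : IsNoetherianRing (Amn p mS nS) := adicCompletion_isNoetherianRing _
  let f : Localization.Away ϖR →+* Localization.Away ϖS ⧸ 𝔮 := (Ideal.Quotient.mk 𝔮).comp g
  suffices hf : f.IsIntegral by
    have h := Ideal.isMaximal_comap_of_isIntegral_of_isMaximal' f hf ⊥
    rwa [← Ideal.comap_comap, ← RingHom.ker_eq_comap_bot, Ideal.mk_ker] at h
  obtain ⟨k, hk⟩ := hϖR 1
  obtain ⟨K, hK⟩ := hϖS 1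
  rw [pow_one] at hk hK
  -- the exponent `k + 1` is used because `k` may be `0`
  obtain ⟨y, hy, hyϖ⟩ := exists_lift_of_mem_defIdeal p mR nR 𝔞R (ϖR ^ (k + 1)) (by
    rw [pow_succ]
    exact Ideal.mul_mem_right _ _ hk)
  obtain ⟨v, hv, hvϖ⟩ := exists_lift_of_mem_defIdeal p mS nS 𝔞S _ hK
  obtain ⟨w, hw⟩ := Ideal.Quotient.mk_surjective ϖS
  have hwu : IsUnit (algebraMap (Amn p mS nS ⧸ 𝔞S) (Localization.Away ϖS) ϖS) :=
    IsLocalization.Away.algebraMap_isUnit ϖS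
  have hyu : algebraMap (Amn p mR nR ⧸ 𝔞R) (Localization.Away ϖR) (Ideal.Quotient.mk 𝔞R y) =
      algebraMap _ _ ϖR ^ (k + 1) := by rw [hyϖ, map_pow]
  let ψ : Amn p mS nS →+* Localization.Away ϖS ⧸ 𝔮 :=
    (Ideal.Quotient.mk 𝔮).comp ((algebraMap (Amn p mS nS ⧸ 𝔞S) _).comp (Ideal.Quotient.mk 𝔞S))
  have hψ (a : Amn p mS nS) : ψ a =
      Ideal.Quotient.mk 𝔮 (algebraMap _ _ (Ideal.Quotient.mk 𝔞S a)) := rfl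
  have hψw : ψ w = Ideal.Quotient.mk 𝔮 (algebraMap _ _ ϖS) := by rw [hψ, hw]
  have hψ0 : ψ w ≠ 0 := hψw ▸ (hwu.map (Ideal.Quotient.mk 𝔮)).ne_zero
  refine isIntegral_of_continuous p
    ((stdIdeal p mR nR).map (algebraMap _ (Amn p mR nR)))
    ((stdIdeal p mS nS).map (algebraMap _ (Amn p mS nS))) ?_ nS _
    (exists_sub_mem_map_stdIdeal p mS nS)
    ((algebraMap (Amn p mR nR ⧸ 𝔞R) (Localization.Away ϖR)).comp (Ideal.Quotient.mk 𝔞R))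
    f hy ?_ ψ w hψ0 ⟨K, v, hv, ?_⟩ ?_ ?_ ?_
  · have h := Ideal.mem_map_of_mem (algebraMap _ (Amn p mS nS))
      (Ideal.subset_span (Set.mem_insert _ _) : _ ∈ stdIdeal p mS nS)
    rwa [map_natCast] at h
  · rw [RingHom.comp_apply, hyu]
    exact (IsLocalization.Away.algebraMap_isUnit ϖR).pow _
  · rw [hψw, hψ, hvϖ, map_pow, map_pow]
  · intro x
    obtain ⟨x, rfl⟩ := Ideal.Quotient.mk_surjective x
    obtain ⟨n, a, ha⟩ := IsLocalization.Away.surj ϖS x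
    obtain ⟨a, rfl⟩ := Ideal.Quotient.mk_surjective a
    refine ⟨n, a, ?_⟩
    rw [hψw, hψ, ← ha, map_mul, map_pow, mul_comm]
  · obtain ⟨N, hN⟩ := hcont₁
    refine ⟨N, fun a => ?_⟩
    obtain ⟨b, hb⟩ := hN (Ideal.Quotient.mk 𝔞R a)
    obtain ⟨b, rfl⟩ := Ideal.Quotient.mk_surjective b
    refine ⟨b, ?_⟩
    rw [hψw, hψ, hb, map_mul, map_pow]
    rfl
  · intro j
    obtain ⟨n, _, ⟨b, rfl⟩, hb⟩ := hcont₂ j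
    obtain ⟨b, rfl⟩ := Ideal.Quotient.mk_surjective b
    refine ⟨n, b * (w ^ j * b) ^ k, ?_⟩
    have hfy : f (algebraMap _ _ (Ideal.Quotient.mk 𝔞R y)) = f (algebraMap _ _ ϖR) ^ (k + 1) := by
      rw [hyu, map_pow]
    have hfn : f (algebraMap _ _ ϖR) ^ n = ψ w ^ j * ψ b := by
      have h := congrArg (Ideal.Quotient.mk 𝔮) hb
      rw [map_mul, map_pow, map_pow] at h
      rw [hψw, hψ, ← h]
      rfl
    rw [RingHom.comp_apply (algebraMap _ _), hfy, ← pow_mul, mul_comm (k + 1), pow_mul, hfn, map_mul, map_pow,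
      map_mul, map_pow]
    ring
end
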